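/- Let k ≥ 3 and 1 ≤ j ≤ k−1 be integers and suppose ε = ε(n) satisfies n^{−1/3} ≪ ε ≪ 1 (i.e. ε·n^{1/3} → ∞ and ε → 0). Let p* = (1+ε)/((C(k,j)−1)·C(n,k−j)). Then with high probability H^k(n,p*) has a j-component containing a subset S of j-sets such that every (j−1)-element vertex set is contained in (1 ± o(1))·ε³·n of the j-sets of S. -/

import Mathlib

open Filter Asymptotics

open scoped Classical

noncomputable section

/-- The collection of all `k`-element subsets of the vertex set `Fin n`,
    i.e. all potential edges of a `k`-uniform hypergraph on `n` vertices. -/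
def kSets (n k : ℕ) : Finset (Finset (Fin n)) :=
  Finset.powersetCard k (Finset.univ : Finset (Fin n))

/-- The probability that the binomial random `k`-uniform hypergraph `H^k(n,p)`
    (each `k`-set an edge independently with probability `p`) has property `Q`. -/
def binomProb (n k : ℕ) (p : ℝ) (Q : Finset (Finset (Fin n)) → Prop) : ℝ :=
  ∑ H ∈ (kSets n k).powerset,
    (if Q H then p ^ H.card * (1 - p) ^ ((kSets n k).card - H.card) else 0)

/-- The expectation of a real-valued random variable `X` of `H^k(n,p)`. -/
def binomExp (n k : ℕ) (p : ℝ) (X : Finset (Finset (Fin n)) → ℝ) : ℝ :=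
  ∑ H ∈ (kSets n k).powerset,
    p ^ H.card * (1 - p) ^ ((kSets n k).card - H.card) * X H

/-- The degree of a vertex set `J` in the hypergraph with edge set `H`:
    the number of edges containing `J`. -/
def setDegree {n : ℕ} (H : Finset (Finset (Fin n))) (J : Finset (Fin n)) : ℕ :=
  (H.filter (fun e => J ⊆ e)).card

/-- `J` is isolated in `H`: it is contained in no edge. -/
def IsIsolatedSet {n : ℕ} (H : Finset (Finset (Fin n))) (J : Finset (Fin n)) : Prop :=
  ∀ e ∈ H, ¬ J ⊆ e

/-- Two sets `J1`, `J2` are `j`-connected in the hypergraph with edge set `H`: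
    there is a walk of edges from one to the other in which consecutive edges
    intersect in at least `j` vertices. -/
def JConn {n : ℕ} (j : ℕ) (H : Finset (Finset (Fin n))) (J1 J2 : Finset (Fin n)) : Prop :=
  ∃ e1 ∈ H, ∃ e2 ∈ H, J1 ⊆ e1 ∧ J2 ⊆ e2 ∧
    Relation.ReflTransGen (fun e f => e ∈ H ∧ f ∈ H ∧ j ≤ (e ∩ f).card) e1 e2

/-- The hypergraph with edge set `H` is `j`-connected:
    all `j`-sets lie in a single `j`-component, i.e. are pairwise `j`-connected. -/
def JConnectedHG (n j : ℕ) (H : Finset (Finset (Fin n))) : Prop :=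
  ∀ J1 J2 : Finset (Fin n), J1.card = j → J2.card = j → JConn j H J1 J2

/-- `C` is a `j`-component of `H`: a maximal nonempty set of pairwise `j`-connected `j`-sets. -/
def IsJComponent (n j : ℕ) (H : Finset (Finset (Fin n))) (C : Finset (Finset (Fin n))) : Prop :=
  C.Nonempty ∧ (∀ J ∈ C, J.card = j) ∧ (∀ J1 ∈ C, ∀ J2 ∈ C, JConn j H J1 J2) ∧
    ∀ J : Finset (Fin n), J.card = j → (∃ J' ∈ C, JConn j H J J') → J ∈ C

/-- `D_s`: the number of `j`-sets of degree exactly `s`. -/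
def numDegSets (n j s : ℕ) (H : Finset (Finset (Fin n))) : ℕ :=
  ((Finset.powersetCard j (Finset.univ : Finset (Fin n))).filter
    (fun J => setDegree H J = s)).card

/-- The Poisson probability mass function with mean `lam`. -/
def poissonPMF (lam : ℝ) (i : ℕ) : ℝ := Real.exp (-lam) * lam ^ i / (Nat.factorial i)

/-- Total variation distance between the distribution of `D_s` in `H^k(n,p)`
    and the Poisson distribution with mean `lam`. -/
def dTVpoisson (n k j s : ℕ) (p lam : ℝ) : ℝ :=
  (1 / 2) * ∑' i : ℕ, |binomProb n k p (fun H => numDegSets n j s H = i) - poissonPMF lam i|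

/-- The probability that the uniform random hypergraph `H^k(n,M)` (chosen uniformly among
    all `k`-uniform hypergraphs on `Fin n` with exactly `M` edges) has property `Q`. -/
def uniformProb (n k M : ℕ) (Q : Finset (Finset (Fin n)) → Prop) : ℝ :=
  (((Finset.powersetCard M (kSets n k)).filter Q).card : ℝ) /
    ((Finset.powersetCard M (kSets n k)).card : ℝ)

/-!
Reserve a set `R` of about `ε n / (8 k)` vertices. In a first phase the `j`-components of the
hypergraph outside `R` are explored by querying one `k`-set at a time, starting anew whenever a
component is exhausted. This is a slightly supercritical branching process, so one of the components
reaches size of order `ε n ^ j`. The number of edges found and the degrees of the `i`-sets,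
`1 ≤ i < j`, are controlled at once by a sum of exponential potentials that is a supermartingale.
Bounded degrees ensure that few `j`-sets met by a new edge are already in the component.

In a second phase the `k`-sets meeting `R` are exposed in `j + 1` independent rounds. Each round
extends the component found: it first yields large degrees for the `i`-sets in `R`, for growing `i`,
and then for the `(j - 1)`-sets. In the last round every `j`-set is consequently reached with
probability at least `c ε ^ 2`, which is of larger order than `ε ^ 3`. A suitable subset of the
reached `j`-sets thus has all `(j - 1)`-degrees concentrated around one value, and Beck–Fiala
rounding of a constant weight selects a subset in which these degrees are within `j` of `ε ^ 3 n`.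
-/

/-! ### Independent random subsets -/

section RandomSubsets

open Finset

variable {α β ι : Type*} [DecidableEq α] [DecidableEq β]

/-- The expectation of `f H` for a random subset `H` of `U` that contains each `e ∈ U`
independently with probability `π e`. Values of `π` outside `[0, 1]` are allowed, so that the
algebraic identities need no side condition. -/
def randExp (U : Finset α) (π : α → ℝ) (f : Finset α → ℝ) : ℝ :=
  ∑ H ∈ U.powerset, (∏ e ∈ H, π e) * (∏ e ∈ U \ H, (1 - π e)) * f H

/-- The probability of the event `Q H` for the random subset `H` of `randExp`. -/
def randProb (U : Finset α) (π : α → ℝ) (Q : Finset α → Prop) : ℝ :=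
  randExp U π fun H => if Q H then 1 else 0

lemma randExp_empty (π : α → ℝ) (f : Finset α → ℝ) : randExp ∅ π f = f ∅ := by
  simp [randExp]

lemma randExp_insert {a : α} {U : Finset α} (ha : a ∉ U) (π : α → ℝ) (f : Finset α → ℝ) :
    randExp (insert a U) π f =
      π a * randExp U π (fun H => f (insert a H)) + (1 - π a) * randExp U π f := by
  unfold randExp
  rw [sum_powerset_insert ha, add_comm, mul_sum, mul_sum]
  congr 1 <;> refine sum_congr rfl fun H hH => ?_
  all_goals have haH : a ∉ H := fun h => ha (mem_powerset.1 hH h)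
  · rw [prod_insert haH, insert_sdiff_insert, sdiff_insert_of_notMem ha]
    ring
  · rw [insert_sdiff_of_notMem _ haH, prod_insert (by simp [ha])]
    ring

lemma randExp_congr {U : Finset α} {π : α → ℝ} {f g : Finset α → ℝ} (h : ∀ H ⊆ U, f H = g H) :
    randExp U π f = randExp U π g :=
  sum_congr rfl fun H hH => by rw [h H (mem_powerset.1 hH)]

lemma randExp_congr_weights {U : Finset α} {π π' : α → ℝ} (h : ∀ e ∈ U, π e = π' e)
    (f : Finset α → ℝ) : randExp U π f = randExp U π' f := by
  refine sum_congr rfl fun H hH => ?_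
  congr 2
  · exact prod_congr rfl fun e he => h e (mem_powerset.1 hH he)
  · exact prod_congr rfl fun e he => by rw [h e (mem_sdiff.1 he).1]

lemma randExp_mono {U : Finset α} {π : α → ℝ} {f g : Finset α → ℝ}
    (hπ : ∀ e ∈ U, π e ∈ unitInterval) (h : ∀ H ⊆ U, f H ≤ g H) :
    randExp U π f ≤ randExp U π g := by
  refine sum_le_sum fun H hH => mul_le_mul_of_nonneg_left (h H (mem_powerset.1 hH)) ?_
  exact mul_nonneg (prod_nonneg fun e he => (hπ e (mem_powerset.1 hH he)).1)
    (prod_nonneg fun e he => sub_nonneg.2 (hπ e (mem_sdiff.1 he).1).2)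

lemma randExp_const (U : Finset α) (π : α → ℝ) (c : ℝ) : randExp U π (fun _ => c) = c := by
  induction U using Finset.induction_on with
  | empty => rw [randExp_empty]
  | insert a U ha ih => rw [randExp_insert ha, ih]; ring

lemma randExp_add (U : Finset α) (π : α → ℝ) (f g : Finset α → ℝ) :
    randExp U π (fun H => f H + g H) = randExp U π f + randExp U π g := by
  simp only [randExp, mul_add, sum_add_distrib]

lemma randExp_const_mul (U : Finset α) (π : α → ℝ) (c : ℝ) (f : Finset α → ℝ) :
    randExp U π (fun H => c * f H) = c * randExp U π f := by
  simp only [randExp, mul_sum, mul_left_comm]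

lemma randExp_sum (s : Finset ι) (U : Finset α) (π : α → ℝ) (f : ι → Finset α → ℝ) :
    randExp U π (fun H => ∑ i ∈ s, f i H) = ∑ i ∈ s, randExp U π (f i) := by
  simp only [randExp, mul_sum]
  exact sum_comm

lemma randExp_union {U W : Finset α} (hd : Disjoint U W) (π : α → ℝ) (f : Finset α → ℝ) :
    randExp (U ∪ W) π f = randExp U π fun H => randExp W π fun H' => f (H ∪ H') := by
  induction U using Finset.induction_on generalizing f with
  | empty => simp [randExp_empty]
  | insert a U ha ih =>
    rw [disjoint_insert_left] at hd
    rw [insert_union, randExp_insert (by simp [ha, hd.1]), randExp_insert ha, ih hd.2, ih hd.2]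
    simp only [insert_union]

lemma randExp_inter {U W : Finset α} (hW : W ⊆ U) (π : α → ℝ) (f : Finset α → ℝ) :
    randExp U π (fun H => f (H ∩ W)) = randExp W π f := by
  rw [← union_sdiff_of_subset hW, randExp_union disjoint_sdiff]
  refine randExp_congr fun H hH => ?_
  rw [← randExp_const (U \ W) π (f H)]
  refine randExp_congr fun H' hH' => ?_
  rw [union_inter_distrib_right, inter_eq_left.2 hH,
    disjoint_iff_inter_eq_empty.1 (sdiff_disjoint.mono_left hH'), union_empty]

lemma randExp_zero_weights (U : Finset α) (f : Finset α → ℝ) :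
    randExp U (fun _ => 0) f = f ∅ := by
  induction U using Finset.induction_on with
  | empty => rw [randExp_empty]
  | insert a U ha ih => rw [randExp_insert ha, ih]; ring

lemma randExp_update {U : Finset α} {e : α} (he : e ∈ U) (π : α → ℝ) (q : ℝ)
    (f : Finset α → ℝ) :
    randExp U (Function.update π e (1 - (1 - q) * (1 - π e))) f =
      q * randExp U π (fun H => f (insert e H)) + (1 - q) * randExp U π f := by
  obtain ⟨W, hW, rfl⟩ : ∃ W, e ∉ W ∧ U = insert e W := ⟨U.erase e, by simp, (insert_erase he).symm⟩
  have update_irrel : ∀ g : Finset α → ℝ,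
      randExp W (Function.update π e (1 - (1 - q) * (1 - π e))) g = randExp W π g :=
    randExp_congr_weights fun x hx => Function.update_of_ne (ne_of_mem_of_not_mem hx hW) _ _
  simp only [randExp_insert hW, update_irrel, Function.update_self, insert_idem]
  ring

lemma randExp_image (g : β → α) {T : Finset β} {U : Finset α} (hU : ∀ b ∈ T, g b ∈ U)
    (q : β → ℝ) (f : Finset α → ℝ) :
    randExp T q (fun H => f (H.image g)) =
      randExp U (fun e => 1 - ∏ b ∈ T with g b = e, (1 - q b)) f := by
  induction T using Finset.induction_on generalizing f with
  | empty => simp [randExp_empty, randExp_zero_weights]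
  | insert b T hb ih =>
    have hT : ∀ b ∈ T, g b ∈ U := fun x hx => hU x (mem_insert_of_mem hx)
    simp only [randExp_insert hb, image_insert]
    rw [ih hT (fun H => f (insert (g b) H)), ih hT f, ← randExp_update (hU b (mem_insert_self _ _))]
    refine randExp_congr_weights (fun e _ => ?_) f
    obtain rfl | h := eq_or_ne e (g b)
    · rw [Function.update_self, filter_insert, if_pos rfl, prod_insert (by simp [hb])]
      ring
    · rw [Function.update_of_ne h, filter_insert, if_neg h.symm]

lemma randExp_sprinkle (U : Finset α) (π₁ π₂ : α → ℝ) (f : Finset α → ℝ) :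
    randExp U π₁ (fun H => randExp U π₂ fun H' => f (H ∪ H')) =
      randExp U (fun e => 1 - (1 - π₁ e) * (1 - π₂ e)) f := by
  induction U using Finset.induction_on generalizing f with
  | empty => simp [randExp_empty]
  | insert a U ha ih =>
    simp only [randExp_insert ha, insert_union, union_insert, insert_idem, randExp_add,
      randExp_const_mul]
    rw [ih f, ih fun H => f (insert a H)]
    ring

lemma randExp_mono_weights {U : Finset α} {π π' : α → ℝ} {f : Finset α → ℝ}
    (hπ : ∀ e ∈ U, π e ∈ unitInterval) (hπ' : ∀ e ∈ U, π' e ∈ unitInterval)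
    (hle : ∀ e ∈ U, π e ≤ π' e) (hf : Monotone f) : randExp U π f ≤ randExp U π' f := by
  induction U using Finset.induction_on generalizing f with
  | empty => simp [randExp_empty]
  | insert a U ha ih =>
    rw [forall_mem_insert] at hπ hπ' hle
    have ih {f} (hf : Monotone f) := ih hπ.2 hπ'.2 hle.2 (f := f) hf
    have with_a := ih (f := fun H => f (insert a H)) fun _ _ h => hf (insert_subset_insert _ h)
    have gain_of_a : randExp U π' f ≤ randExp U π' fun H => f (insert a H) :=
      randExp_mono hπ'.2 fun H _ => hf (subset_insert _ _)
    rw [randExp_insert ha, randExp_insert ha]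
    linarith [mul_le_mul_of_nonneg_left with_a hπ.1.1,
      mul_le_mul_of_nonneg_left (ih hf) (sub_nonneg.2 hπ.1.2),
      mul_nonneg (sub_nonneg.2 hle.1) (sub_nonneg.2 gain_of_a)]

lemma randExp_prod (U : Finset α) (π g : α → ℝ) :
    randExp U π (fun H => ∏ e ∈ H, g e) = ∏ e ∈ U, (1 - π e + π e * g e) := by
  induction U using Finset.induction_on with
  | empty => simp [randExp_empty]
  | insert a U ha ih =>
    have factor_out : randExp U π (fun H => ∏ e ∈ insert a H, g e) =
        g a * randExp U π fun H => ∏ e ∈ H, g e := by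
      rw [← randExp_const_mul]
      exact randExp_congr fun H hH => prod_insert fun h => ha (hH h)
    rw [randExp_insert ha, prod_insert ha, factor_out, ih]
    ring

lemma randExp_exp_mul_card_inter_le {U T : Finset α} (hT : T ⊆ U) {π : α → ℝ}
    (hπ : ∀ e ∈ U, π e ∈ unitInterval) (t : ℝ) :
    randExp U π (fun H => Real.exp (t * (H ∩ T).card)) ≤
      Real.exp ((Real.exp t - 1) * ∑ e ∈ T, π e) := by
  rw [randExp_inter hT π fun H => Real.exp (t * H.card)]
  have exp_eq_prod (H : Finset α) : Real.exp (t * H.card) = ∏ _e ∈ H, Real.exp t := by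
    rw [prod_const, ← Real.exp_nat_mul, mul_comm]
  simp only [exp_eq_prod]
  rw [randExp_prod, mul_sum, Real.exp_sum]
  refine prod_le_prod (fun e he => ?_) fun e _ => ?_
  · obtain ⟨h0, h1⟩ := hπ e (hT he)
    have := mul_nonneg h0 (Real.exp_pos t).le
    linarith
  · linarith [Real.add_one_le_exp ((Real.exp t - 1) * π e)]

lemma randProb_insert {a : α} {U : Finset α} (ha : a ∉ U) (π : α → ℝ) (Q : Finset α → Prop) :
    randProb (insert a U) π Q =
      π a * randProb U π (fun H => Q (insert a H)) + (1 - π a) * randProb U π Q :=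
  randExp_insert ha π _

lemma randProb_union {U W : Finset α} (hd : Disjoint U W) (π : α → ℝ) (Q : Finset α → Prop) :
    randProb (U ∪ W) π Q = randExp U π fun H => randProb W π fun H' => Q (H ∪ H') :=
  randExp_union hd π _

lemma randProb_not (U : Finset α) (π : α → ℝ) (Q : Finset α → Prop) :
    randProb U π (fun H => ¬ Q H) = 1 - randProb U π Q := by
  have complementary : randProb U π Q + randProb U π (fun H => ¬ Q H) = 1 := by
    rw [randProb, randProb, ← randExp_add]
    refine (randExp_congr fun H _ => ?_).trans (randExp_const U π 1)
    by_cases h : Q H <;> simp [h]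
  linarith

section UnitWeights

variable {U : Finset α} {π : α → ℝ}

lemma randProb_le_randExp (hπ : ∀ e ∈ U, π e ∈ unitInterval) {Q : Finset α → Prop}
    {f : Finset α → ℝ} (hf : ∀ H, 0 ≤ f H) (h : ∀ H ⊆ U, Q H → 1 ≤ f H) :
    randProb U π Q ≤ randExp U π f :=
  randExp_mono hπ fun H hH => by
    split_ifs with hQ
    exacts [h H hH hQ, hf H]

lemma randProb_mono (hπ : ∀ e ∈ U, π e ∈ unitInterval) {P Q : Finset α → Prop}
    (h : ∀ H ⊆ U, P H → Q H) : randProb U π P ≤ randProb U π Q :=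
  randProb_le_randExp hπ (fun H => by positivity) fun H hH hP => by simp [h H hH hP]

lemma randProb_nonneg (hπ : ∀ e ∈ U, π e ∈ unitInterval) (Q : Finset α → Prop) :
    0 ≤ randProb U π Q := by
  rw [← randExp_const U π 0]
  exact randExp_mono hπ fun H _ => by positivity

lemma randProb_le_one (hπ : ∀ e ∈ U, π e ∈ unitInterval) (Q : Finset α → Prop) :
    randProb U π Q ≤ 1 := by
  linarith [randProb_not U π Q, randProb_nonneg hπ fun H => ¬ Q H]

lemma randProb_or_le (hπ : ∀ e ∈ U, π e ∈ unitInterval) (P Q : Finset α → Prop) :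
    randProb U π (fun H => P H ∨ Q H) ≤ randProb U π P + randProb U π Q := by
  refine (randProb_le_randExp hπ (fun H => ?_) fun H _ h => ?_).trans_eq (randExp_add U π _ _)
  · positivity
  · obtain h | h := h <;> simp only [h, if_true] <;> split_ifs <;> norm_num

lemma randProb_not_forall_le (hπ : ∀ e ∈ U, π e ∈ unitInterval) (s : Finset ι)
    (P : ι → Finset α → Prop) :
    randProb U π (fun H => ¬ ∀ i ∈ s, P i H) ≤ ∑ i ∈ s, randProb U π fun H => ¬ P i H := by
  refine (randProb_le_randExp hπ (fun H => ?_) fun H _ h => ?_).trans_eq (randExp_sum s U π _)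
  · positivity
  · push Not at h
    obtain ⟨i, hi, hP⟩ := h
    refine le_trans ?_ (single_le_sum (fun _ _ => by positivity) hi)
    simp [hP]

lemma randExp_le_randProb_not_add (hπ : ∀ e ∈ U, π e ∈ unitInterval) {A : Finset α → Prop}
    {g : Finset α → ℝ} {b : ℝ} (hb : 0 ≤ b) (hg : ∀ H, g H ≤ 1) (hA : ∀ H ⊆ U, A H → g H ≤ b) :
    randExp U π g ≤ randProb U π (fun H => ¬ A H) + b := by
  rw [← randExp_const U π b, randProb, ← randExp_add]
  refine randExp_mono hπ fun H hH => ?_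
  by_cases h : A H
  · simpa [h] using hA H hH h
  · simpa [h] using (hg H).trans (le_add_of_nonneg_right hb)

lemma randProb_not_anti_weights {π' : α → ℝ} (hπ : ∀ e ∈ U, π e ∈ unitInterval)
    (hπ' : ∀ e ∈ U, π' e ∈ unitInterval) (hle : ∀ e ∈ U, π e ≤ π' e) {Q : Finset α → Prop}
    (hQ : Monotone Q) :
    randProb U π' (fun H => ¬ Q H) ≤ randProb U π fun H => ¬ Q H := by
  have h : randProb U π Q ≤ randProb U π' Q := randExp_mono_weights hπ hπ' hle fun H H' hH => by
    by_cases h : Q H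
    · simp only [h, hQ hH h, if_true, le_refl]
    · simp only [h, if_false]
      positivity
  rw [randProb_not, randProb_not]
  linarith

/-! ### Chernoff bounds -/

lemma randProb_le_mul_card_inter_le (hπ : ∀ e ∈ U, π e ∈ unitInterval) {T : Finset α}
    (hT : T ⊆ U) (t a : ℝ) :
    randProb U π (fun H => a ≤ t * (H ∩ T).card) ≤
      Real.exp ((Real.exp t - 1) * ∑ e ∈ T, π e - a) := by
  calc randProb U π (fun H => a ≤ t * (H ∩ T).card)
      ≤ randExp U π fun H => Real.exp (-a) * Real.exp (t * (H ∩ T).card) :=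
        randProb_le_randExp hπ (fun H => by positivity) fun H _ h => by
          rw [← Real.exp_add]
          exact Real.one_le_exp (by linarith)
    _ ≤ Real.exp (-a) * Real.exp ((Real.exp t - 1) * ∑ e ∈ T, π e) := by
        rw [randExp_const_mul]
        exact mul_le_mul_of_nonneg_left (randExp_exp_mul_card_inter_le hT hπ t) (Real.exp_pos _).le
    _ = _ := by rw [← Real.exp_add]; ring_nf

lemma randProb_card_inter_lower_tail (hπ : ∀ e ∈ U, π e ∈ unitInterval) {T : Finset α}
    (hT : T ⊆ U) {x : ℝ} (hx : 2 * x ≤ ∑ e ∈ T, π e) :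
    randProb U π (fun H => ¬ x ≤ (H ∩ T).card) ≤ Real.exp (-(x / 5)) := by
  have exp_neg_one_le : Real.exp (-1) ≤ 0.4 := by
    rw [Real.exp_neg, inv_le_comm₀ (Real.exp_pos _) (by norm_num)]
    linarith [Real.exp_one_gt_d9]
  have mean_nonneg : 0 ≤ ∑ e ∈ T, π e := sum_nonneg fun e he => (hπ e (hT he)).1
  calc randProb U π (fun H => ¬ x ≤ (H ∩ T).card)
      ≤ randProb U π fun H => -x ≤ -1 * ((H ∩ T).card : ℝ) :=
        randProb_mono hπ fun H _ h => by linarith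
    _ ≤ Real.exp ((Real.exp (-1) - 1) * ∑ e ∈ T, π e - -x) :=
        randProb_le_mul_card_inter_le hπ hT (-1) (-x)
    _ ≤ _ := Real.exp_le_exp.2 (by nlinarith)

lemma exp_sub_one_le_add_sq {t : ℝ} (ht : |t| ≤ 1) : Real.exp t - 1 ≤ t + t ^ 2 := by
  linarith [(abs_le.1 (Real.abs_exp_sub_one_sub_id_le ht)).2]

lemma randProb_card_inter_concentration {q δ : ℝ} (hq : q ∈ unitInterval)
    (hδ : δ ∈ unitInterval) {T : Finset α} (hT : T ⊆ U) :
    randProb U (fun _ => q)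
        (fun H => ¬ |((H ∩ T).card : ℝ) - q * T.card| ≤ δ * (q * T.card)) ≤
      2 * Real.exp (-(δ ^ 2 * (q * T.card) / 4)) := by
  obtain ⟨hδ0, hδ1⟩ := hδ
  have hπ : ∀ e ∈ U, (fun _ => q) e ∈ unitInterval := fun _ _ => hq
  have hμ0 : 0 ≤ q * (T.card : ℝ) := mul_nonneg hq.1 (Nat.cast_nonneg _)
  have mean_eq : ∑ _e ∈ T, q = q * T.card := by rw [sum_const, nsmul_eq_mul, mul_comm]
  set μ := q * (T.card : ℝ)
  have tail : ∀ t : ℝ, |t| = δ / 2 →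
      randProb U (fun _ => q) (fun H => t * μ + δ / 2 * (δ * μ) ≤ t * (H ∩ T).card) ≤
        Real.exp (-(δ ^ 2 * μ / 4)) := fun t ht => by
    refine (randProb_le_mul_card_inter_le hπ hT t _).trans (Real.exp_le_exp.2 ?_)
    have hsq : t ^ 2 = δ ^ 2 / 4 := by rw [← sq_abs, ht]; ring
    rw [mean_eq]
    nlinarith [mul_le_mul_of_nonneg_right (exp_sub_one_le_add_sq (t := t) (by linarith)) hμ0]
  have upper := tail (δ / 2) (abs_of_nonneg (by linarith))
  have lower := tail (-(δ / 2)) (by rw [abs_neg, abs_of_nonneg (by linarith)])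
  calc _ ≤ randProb U (fun _ => q) fun H =>
        δ / 2 * μ + δ / 2 * (δ * μ) ≤ δ / 2 * (H ∩ T).card ∨
          -(δ / 2) * μ + δ / 2 * (δ * μ) ≤ -(δ / 2) * (H ∩ T).card :=
        randProb_mono hπ fun H _ h => by
          rw [abs_le, not_and_or] at h
          obtain h | h := h
          · right; nlinarith
          · left; nlinarith
    _ ≤ _ := (randProb_or_le hπ _ _).trans (by linarith)

end UnitWeights

lemma binomProb_eq_randProb (n k : ℕ) (p : ℝ) (Q : Finset (Finset (Fin n)) → Prop) :
    binomProb n k p Q = randProb (kSets n k) (fun _ => p) Q := by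
  refine sum_congr rfl fun H hH => ?_
  rw [prod_const, prod_const, card_sdiff_of_subset (mem_powerset.1 hH), mul_ite, mul_one, mul_zero]

lemma binomProb_le_one {n k : ℕ} {p : ℝ} (hp : p ∈ unitInterval)
    (Q : Finset (Finset (Fin n)) → Prop) : binomProb n k p Q ≤ 1 := by
  rw [binomProb_eq_randProb]
  exact randProb_le_one (fun _ _ => hp) Q

end RandomSubsets

/-! ### Beck–Fiala rounding -/

section BeckFiala

open Finset

variable {X ι : Type*}

lemma exists_add_mul_mem_unitInterval [Finite X] {x z : X → ℝ} (hx : ∀ a, x a ∈ unitInterval)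
    (hz : ∃ a, z a ≠ 0) :
    ∃ t : ℝ, (∀ a, x a + t * z a ∈ unitInterval) ∧
      ∃ b, z b ≠ 0 ∧ x b + t * z b ∈ ({0, 1} : Set ℝ) := by
  cases nonempty_fintype X
  let target : X → ℝ := fun a => if 0 < z a then 1 else 0
  let time : X → ℝ := fun a => (target a - x a) / z a
  obtain ⟨a₀, ha₀⟩ := hz
  obtain ⟨b, hb, first_hit⟩ := exists_min_image {a | z a ≠ 0} time ⟨a₀, by simpa using ha₀⟩
  simp only [mem_filter, mem_univ, true_and] at hb first_hit
  have target_eq : x b + time b * z b = target b := by simp only [time]; field_simp; ring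
  have time_nonneg : 0 ≤ time b := by
    obtain h | h := hb.lt_or_gt
    · simpa [time, target, h.not_gt] using div_nonneg_of_nonpos (neg_nonpos.2 (hx b).1) h.le
    · simpa [time, target, h] using div_nonneg (sub_nonneg.2 (hx b).2) h.le
  refine ⟨time b, fun a => ?_, b, hb, ?_⟩
  · obtain ⟨h0, h1⟩ := hx a
    obtain h | h | h := lt_trichotomy (z a) 0
    · have hit := first_hit a h.ne
      simp only [time, target, h.not_gt, if_false, le_div_iff_of_neg h] at hit
      have := mul_nonpos_of_nonneg_of_nonpos time_nonneg h.le
      constructor <;> simp only [time, target] at * <;> linarith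
    · simpa [h] using hx a
    · have hit := first_hit a h.ne'
      simp only [time, target, h, if_true, le_div_iff₀ h] at hit
      have := mul_nonneg time_nonneg h.le
      constructor <;> simp only [time, target] at * <;> linarith
  · rw [target_eq]
    by_cases h : 0 < z b <;> simp [target, h]

variable [DecidableEq X] [Fintype ι] {s : ι → Finset X} {j : ℕ}

lemma card_filter_lt_card_inter_lt (hs : ∀ a, #{i | a ∈ s i} ≤ j) {F : Finset X}
    (hF : F.Nonempty) : #{i | j < #(F ∩ s i)} < #F := by
  have double_count : #{i | j < #(F ∩ s i)} * (j + 1) ≤ #F * j := by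
    refine card_mul_le_card_mul (fun i a => a ∈ s i) (fun i hi => ?_) fun a _ => ?_
    · rw [bipartiteAbove, filter_mem_eq_inter]
      exact (mem_filter.1 hi).2
    · exact (card_le_card (filter_subset_filter _ (subset_univ _))).trans (hs a)
  have := hF.card_pos
  by_contra! h
  nlinarith

variable [Finite X]

lemma exists_ne_zero_sum_eq_zero (hs : ∀ a, #{i | a ∈ s i} ≤ j) {F : Finset X}
    (hF : F.Nonempty) :
    ∃ z : X → ℝ, (∃ a, z a ≠ 0) ∧ (∀ a ∉ F, z a = 0) ∧
      ∀ i, j < #(F ∩ s i) → ∑ a ∈ s i, z a = 0 := by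
  cases nonempty_fintype X
  let constraints : (X → ℝ) →ₗ[ℝ]
      ({a // a ∉ F} → ℝ) × ({i // i ∈ ({i | j < #(F ∩ s i)} : Finset ι)} → ℝ) :=
    (LinearMap.pi fun a => LinearMap.proj a.1).prod
      (LinearMap.pi fun i => ∑ a ∈ s i, LinearMap.proj a)
  have underdetermined : LinearMap.ker constraints ≠ ⊥ := by
    refine LinearMap.ker_ne_bot_of_finrank_lt ?_
    have := card_filter_lt_card_inter_lt hs hF
    have := card_le_univ F
    simp only [Module.finrank_prod, Module.finrank_fintype_fun_eq_card, Fintype.card_coe,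
      Fintype.card_subtype_compl]
    omega
  obtain ⟨z, hz, hz0⟩ := (Submodule.ne_bot_iff _).1 underdetermined
  obtain ⟨hout, hsum⟩ := Prod.mk.inj (LinearMap.mem_ker.1 hz)
  refine ⟨z, Function.ne_iff.1 hz0, fun a ha => congrFun hout ⟨a, ha⟩, fun i hi => ?_⟩
  calc ∑ a ∈ s i, z a = (constraints z).2 ⟨i, by simpa using hi⟩ := by simp [constraints]
    _ = 0 := congrFun hsum _

omit [Finite X] [Fintype ι] in
lemma abs_sum_sub_le_card_inter {x y : X → ℝ} (hx : ∀ a, x a ∈ unitInterval)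
    (hy : ∀ a, y a ∈ unitInterval) {F : Finset X} (h : ∀ a ∉ F, y a = x a) (T : Finset X) :
    |∑ a ∈ T, (y a - x a)| ≤ #(F ∩ T) := by
  have supported_on_F : ∑ a ∈ T, (y a - x a) = ∑ a ∈ F ∩ T, (y a - x a) := by
    refine (sum_subset inter_subset_right fun a hT ha => ?_).symm
    rw [h a fun hF => ha (mem_inter.2 ⟨hF, hT⟩), sub_self]
  calc |∑ a ∈ T, (y a - x a)| ≤ ∑ a ∈ F ∩ T, |y a - x a| := by
        rw [supported_on_F]
        exact abs_sum_le_sum_abs _ _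
    _ ≤ ∑ _a ∈ F ∩ T, (1 : ℝ) := sum_le_sum fun a _ => by
        rw [abs_le]
        constructor <;> linarith [(hx a).1, (hx a).2, (hy a).1, (hy a).2]
    _ = #(F ∩ T) := by simp

theorem beck_fiala (hs : ∀ a, #{i | a ∈ s i} ≤ j) {x : X → ℝ} (hx : ∀ a, x a ∈ unitInterval) :
    ∃ y : X → ℝ, (∀ a, y a ∈ ({0, 1} : Set ℝ)) ∧ (∀ a, x a ∈ ({0, 1} : Set ℝ) → y a = x a) ∧
      ∀ i, |∑ a ∈ s i, (y a - x a)| ≤ j := by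
  cases nonempty_fintype X
  generalize hF : ({a | x a ∉ ({0, 1} : Set ℝ)} : Finset X) = F
  induction F using Finset.strongInduction generalizing x with
  | H F ih =>
    have mem_F (a) : a ∈ F ↔ x a ∉ ({0, 1} : Set ℝ) := by simp [← hF]
    obtain rfl | hne := F.eq_empty_or_nonempty
    · exact ⟨x, fun a => not_not.1 (mt (mem_F a).2 (notMem_empty a)), fun _ _ => rfl,
        fun i => by simp⟩
    obtain ⟨z, hz, hout, hsum⟩ := exists_ne_zero_sum_eq_zero hs hne
    obtain ⟨t, ht, b, hzb, hb⟩ := exists_add_mul_mem_unitInterval hx hz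
    have fixed (a) (ha : x a ∈ ({0, 1} : Set ℝ)) : x a + t * z a = x a := by
      rw [hout a fun h => (mem_F a).1 h ha, mul_zero, add_zero]
    have fewer_fractional : ({a | x a + t * z a ∉ ({0, 1} : Set ℝ)} : Finset X) ⊂ F := by
      refine Finset.ssubset_iff_subset_ne.2 ⟨fun a ha => (mem_F a).2 fun h => ?_, fun h => ?_⟩
      · exact (mem_filter.1 ha).2 (by rwa [fixed a h])
      · have hbF : b ∈ F := by
          by_contra h
          exact hzb (hout b h)
        rw [← h] at hbF
        exact (mem_filter.1 hbF).2 hb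
    obtain ⟨y, hy, hyx, hbound⟩ := ih _ fewer_fractional ht rfl
    have agree (a) (ha : x a ∈ ({0, 1} : Set ℝ)) : y a = x a := by
      rw [hyx a (by rwa [fixed a ha]), fixed a ha]
    refine ⟨y, hy, agree, fun i => ?_⟩
    obtain hi | hi := lt_or_ge j #(F ∩ s i)
    · convert hbound i using 2
      simp only [← sub_sub, sum_sub_distrib, ← mul_sum, hsum i hi, mul_zero, sub_zero]
    · refine (abs_sum_sub_le_card_inter hx (fun a => ?_) (F := F) (fun a ha => ?_) _).trans
        (mod_cast hi)
      · obtain h | h : y a = 0 ∨ y a = 1 := hy a <;> simp [h]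
      · exact agree a (not_not.1 (mt (mem_F a).2 ha))

end BeckFiala

/-! ### `j`-connectivity and smooth families -/

section Connectivity

open Finset

lemma mem_kSets {n k : ℕ} {K : Finset (Fin n)} : K ∈ kSets n k ↔ K.card = k := by
  simp [kSets]

variable {n j : ℕ} {H H' D : Finset (Finset (Fin n))} {J J' J'' : Finset (Fin n)}

lemma JConn.mono (hH : H ⊆ H') : JConn j H J J' → JConn j H' J J' := by
  rintro ⟨e, he, f, hf, hJ, hJ', walk⟩
  exact ⟨e, hH he, f, hH hf, hJ, hJ',
    Relation.ReflTransGen.mono (fun a b hab => ⟨hH hab.1, hH hab.2.1, hab.2.2⟩) _ _ walk⟩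

lemma JConn.symm : JConn j H J J' → JConn j H J' J := by
  rintro ⟨e, he, f, hf, hJ, hJ', walk⟩
  refine ⟨f, hf, e, he, hJ', hJ, Relation.ReflTransGen.mono (fun a b hab => ?_) _ _ walk.swap⟩
  exact ⟨hab.2.1, hab.1, inter_comm a b ▸ hab.2.2⟩

lemma JConn.trans (hcard : J'.card = j) : JConn j H J J' → JConn j H J' J'' → JConn j H J J'' := by
  rintro ⟨e, he, f, hf, hJ, hJ', walk⟩ ⟨e', he', f', hf', hJ'₂, hJ'', walk'⟩
  refine ⟨e, he, f', hf', hJ, hJ'', walk.trans (.head ⟨hf, he', ?_⟩ walk')⟩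
  rw [← hcard]
  exact card_le_card (subset_inter hJ' hJ'₂)

lemma JConn.of_edge {K : Finset (Fin n)} (hK : K ∈ H) (h : J ⊆ K) (h' : J' ⊆ K) : JConn j H J J' :=
  ⟨K, hK, K, hK, h, h', .refl⟩

/-- `D` is a family of `j`-sets that are pairwise `j`-connected in `H`, hence part of a single
`j`-component. -/
def PairwiseJConn (j : ℕ) (H D : Finset (Finset (Fin n))) : Prop :=
  (∀ J ∈ D, J.card = j) ∧ ∀ J ∈ D, ∀ J' ∈ D, JConn j H J J'

lemma PairwiseJConn.mono (h : PairwiseJConn j H D) (hH : H ⊆ H') : PairwiseJConn j H' D :=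
  ⟨h.1, fun J hJ J' hJ' => (h.2 J hJ J' hJ').mono hH⟩

lemma PairwiseJConn.exists_component (h : PairwiseJConn j H D) (hD : D.Nonempty) :
    ∃ C, IsJComponent n j H C ∧ D ⊆ C := by
  obtain ⟨J₀, hJ₀⟩ := hD
  have hcard := h.1 J₀ hJ₀
  refine ⟨{J ∈ kSets n j | JConn j H J J₀}, ⟨⟨J₀, ?_⟩, ?_, ?_, ?_⟩, fun J hJ => ?_⟩ <;>
    simp only [mem_filter, mem_kSets]
  · exact ⟨hcard, h.2 J₀ hJ₀ J₀ hJ₀⟩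
  · exact fun J hJ => hJ.1
  · exact fun J hJ J' hJ' => hJ.2.trans hcard hJ'.2.symm
  · rintro J hJ ⟨J', hJ', hconn⟩
    exact ⟨hJ, hconn.trans hJ'.1 hJ'.2⟩
  · exact ⟨h.1 J hJ, h.2 J hJ J₀ hJ₀⟩

/-- `D` together with the `j`-sets that some edge of `H` joins to a member of `D`. -/
def reach (j : ℕ) (H D : Finset (Finset (Fin n))) : Finset (Finset (Fin n)) :=
  D ∪ {J' ∈ kSets n j | ∃ K ∈ H, J' ⊆ K ∧ ∃ J ∈ D, J ⊆ K}

lemma PairwiseJConn.reach (h : PairwiseJConn j H D) :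
    PairwiseJConn j (H ∪ H') (reach j H' D) := by
  have joined_to_D : ∀ J ∈ _root_.reach j H' D, J.card = j ∧ ∃ J' ∈ D, JConn j (H ∪ H') J J' := by
    intro J hJ
    obtain hJ | hJ := mem_union.1 hJ
    · exact ⟨h.1 J hJ, J, hJ, (h.2 J hJ J hJ).mono subset_union_left⟩
    · obtain ⟨hcard, K, hK, hJK, J', hJ', hJ'K⟩ := mem_filter.1 hJ
      exact ⟨mem_kSets.1 hcard, J', hJ', .of_edge (mem_union_right _ hK) hJK hJ'K⟩
  refine ⟨fun J hJ => (joined_to_D J hJ).1, fun J hJ J' hJ' => ?_⟩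
  obtain ⟨_, A, hA, hJA⟩ := joined_to_D J hJ
  obtain ⟨_, A', hA', hJA'⟩ := joined_to_D J' hJ'
  have hAA' := (h.2 A hA A' hA').mono (subset_union_left (s₂ := H'))
  exact (hJA.trans (h.1 A hA) hAA').trans (h.1 A' hA') hJA'.symm

/-- Some subfamily of `N` is smooth: every `(j - 1)`-set has degree `(1 ± δ) * m` in it. -/
def HasSmoothSubset (j : ℕ) (m δ : ℝ) (N : Finset (Finset (Fin n))) : Prop :=
  ∃ S ⊆ N, ∀ L : Finset (Fin n), L.card = j - 1 → |(setDegree S L : ℝ) - m| ≤ δ * m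

variable {m δ : ℝ}

lemma HasSmoothSubset.mono {N N' : Finset (Finset (Fin n))} (h : HasSmoothSubset j m δ N)
    (hN : N ⊆ N') : HasSmoothSubset j m δ N' :=
  let ⟨S, hS, hsmooth⟩ := h
  ⟨S, hS.trans hN, hsmooth⟩

/-- Adding the edges of `H` to any hypergraph in which the `j`-sets of `D` are pairwise connected
connects `D` to a family of `j`-sets with a smooth subset. This is the event that the second phase
aims for; it does not mention the edges found in the first phase. -/
def ExtendsSmoothly (j : ℕ) (m δ : ℝ) (D H : Finset (Finset (Fin n))) : Prop :=
  ∃ N, HasSmoothSubset j m δ N ∧ D ⊆ N ∧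
    ∀ H₁, PairwiseJConn j H₁ D → PairwiseJConn j (H₁ ∪ H) N

lemma HasSmoothSubset.extendsSmoothly (h : HasSmoothSubset j m δ D)
    (H : Finset (Finset (Fin n))) : ExtendsSmoothly j m δ D H :=
  ⟨D, h, Subset.rfl, fun _ hconn => hconn.mono subset_union_left⟩

lemma hasSmoothSubset_one {N : Finset (Finset (Fin n))} (hm : 0 ≤ m)
    (hδ : 1 ≤ δ * m) (hN : m ≤ N.card) : HasSmoothSubset 1 m δ N := by
  obtain ⟨S, hS, hcard⟩ := exists_subset_card_eq (Nat.floor_le_of_le hN)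
  refine ⟨S, hS, fun L hL => ?_⟩
  have degree_eq : setDegree S L = ⌊m⌋₊ := by simp [setDegree, card_eq_zero.1 hL, hcard]
  rw [degree_eq, abs_le]
  constructor <;> linarith [Nat.floor_le hm, Nat.lt_floor_add_one m]

lemma ExtendsSmoothly.of_reach (h : ExtendsSmoothly j m δ (reach j H D) H') :
    ExtendsSmoothly j m δ D (H ∪ H') := by
  obtain ⟨N, hN, hreach, hconn⟩ := h
  refine ⟨N, hN, subset_union_left.trans hreach, fun H₁ h₁ => ?_⟩
  rw [← union_assoc]
  exact hconn _ h₁.reach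

lemma card_filter_subset_le {N : Finset (Finset (Fin n))} (hj : 1 ≤ j) (hN : ∀ J ∈ N, J.card = j)
    (J : Finset (Fin n)) :
    #{L : {L : Finset (Fin n) // L.card = j - 1} | J ∈ ({J ∈ N | L.1 ⊆ J} : Finset _)} ≤ j := by
  by_cases hJ : J ∈ N
  · calc _ ≤ #(powersetCard (j - 1) J) :=
          card_le_card_of_injOn Subtype.val (fun L hL => mem_powersetCard.2
            ⟨(mem_filter.1 (mem_filter.1 hL).2).2, L.2⟩) Subtype.val_injective.injOn
      _ = j := by
          rw [card_powersetCard, hN J hJ, Nat.choose_symm_of_eq_add (b := 1) (by omega),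
            Nat.choose_one_right]
  · simp [hJ]

lemma hasSmoothSubset_of_regular (hj : 1 ≤ j) {μ : ℝ} {N : Finset (Finset (Fin n))}
    (hN : ∀ J ∈ N, J.card = j) (hm : 0 < m) (hμ : m ≤ μ)
    (hreg : ∀ L : Finset (Fin n), L.card = j - 1 → |(setDegree N L : ℝ) - μ| ≤ δ * μ) :
    HasSmoothSubset j m (δ + j / m) N := by
  have hμ0 : 0 < μ := hm.trans_le hμ
  have weight_mem : m / μ ∈ unitInterval := ⟨by positivity, (div_le_one hμ0).2 hμ⟩
  obtain ⟨y, hy01, -, hy⟩ := beck_fiala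
    (s := fun L : {L : Finset (Fin n) // L.card = j - 1} => {J ∈ N | L.1 ⊆ J}) (j := j)
    (x := fun _ => m / μ) (card_filter_subset_le hj hN) fun _ => weight_mem
  refine ⟨{J ∈ N | y J = 1}, filter_subset _ _, fun L hL => ?_⟩
  set S : Finset (Finset (Fin n)) := {J ∈ N | y J = 1}
  have sum_y : ∑ J ∈ N with L ⊆ J, y J = setDegree S L := by
    rw [setDegree, filter_comm, card_filter]
    push_cast
    refine sum_congr rfl fun J _ => ?_
    obtain h | h : y J = 0 ∨ y J = 1 := hy01 J <;> simp [h]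
  have rounding : |(setDegree S L : ℝ) - setDegree N L * (m / μ)| ≤ j := by
    simpa [sum_sub_distrib, sum_y, setDegree] using hy ⟨L, hL⟩
  have scaling : |(setDegree N L : ℝ) * (m / μ) - m| ≤ δ * m := by
    have factor : (setDegree N L : ℝ) * (m / μ) - m = (setDegree N L - μ) * (m / μ) := by
      field_simp
    rw [factor, abs_mul, abs_of_nonneg weight_mem.1]
    calc |(setDegree N L : ℝ) - μ| * (m / μ)
      _ ≤ δ * μ * (m / μ) := mul_le_mul_of_nonneg_right (hreg L hL) weight_mem.1
      _ = δ * m := by field_simp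
  calc |(setDegree S L : ℝ) - m| ≤ j + δ * m :=
        (abs_sub_le _ _ _).trans (add_le_add rounding scaling)
    _ = (δ + j / m) * m := by field_simp; ring

end Connectivity

/-! ### Sprinkling -/

section SprinklingRound

open Finset

variable {n k j : ℕ}

lemma setDegree_kSets {X : Finset (Fin n)} (hX : #X ≤ k) :
    setDegree (kSets n k) X = (n - #X).choose (k - #X) := by
  rw [setDegree, kSets, card_filter_powersetCard_subset _ _ _ (subset_univ _) hX, card_fin]

lemma card_le_pow_div_pow (hn : 0 < n) {X : Finset (Fin n)} {T : Finset (Finset (Fin n))}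
    (hT : ∀ K ∈ T, #K = k ∧ X ⊆ K) : (#T : ℝ) ≤ (n : ℝ) ^ k / (n : ℝ) ^ #X := by
  obtain rfl | ⟨K, hK⟩ := T.eq_empty_or_nonempty
  · simp only [card_empty, Nat.cast_zero]
    positivity
  have hX : #X ≤ k := (hT K hK).1 ▸ card_le_card (hT K hK).2
  have card_le : #T ≤ n ^ (k - #X) := by
    calc #T ≤ setDegree (kSets n k) X := card_le_card fun K hK =>
          mem_filter.2 ⟨mem_kSets.2 (hT K hK).1, (hT K hK).2⟩
      _ ≤ (n - #X) ^ (k - #X) := setDegree_kSets hX ▸ Nat.choose_le_pow _ _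
      _ ≤ n ^ (k - #X) := Nat.pow_le_pow_left (Nat.sub_le _ _) _
  have : (0 : ℝ) < n := mod_cast hn
  rw [le_div_iff₀ (by positivity), ← Nat.sub_add_cancel hX, pow_add]
  exact mul_le_mul_of_nonneg_right (mod_cast card_le) (by positivity)

lemma choose_le_choose_add (a b t : ℕ) : a.choose b ≤ (a + t).choose (b + t) := by
  induction t with
  | zero => rfl
  | succ t ih => exact ih.trans (Nat.choose_succ_succ (a + t) (b + t) ▸ Nat.le_add_right _ _)

/-- The edges of `U` that contain `X` together with some member of `D`. -/
def linkingEdges (U D : Finset (Finset (Fin n))) (X : Finset (Fin n)) : Finset (Finset (Fin n)) :=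
  {K ∈ U | X ⊆ K ∧ ∃ J ∈ D, J ⊆ K}

/-- A lower bound for the probability that a random set of edges from `U` joins `J` to `D`: the
probability that one of the linking edges is present, each with probability `p`. -/
def reachProb (U D : Finset (Finset (Fin n))) (p : ℝ) (J : Finset (Fin n)) : ℝ :=
  1 - (1 - p) ^ #(linkingEdges U D J)

lemma reachProb_mem_unitInterval (U D : Finset (Finset (Fin n))) {p : ℝ} (hp : p ∈ unitInterval)
    (J : Finset (Fin n)) : reachProb U D p J ∈ unitInterval := by
  have := hp.1
  have := hp.2
  exact ⟨sub_nonneg.2 (pow_le_one₀ (by linarith) (by linarith)),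
    sub_le_self _ (pow_nonneg (by linarith) _)⟩

lemma card_mul_choose_le_card_linkingEdges_mul (hjk : j < k) (hkn : k ≤ n)
    {E : Finset (Finset (Fin n))} {I : Finset (Fin n)}
    (hE : ∀ J ∈ E, #J = j ∧ #(J ∪ I) ≤ j + 1) :
    #E * (n - j - 1).choose (k - j - 1) ≤ #(linkingEdges (kSets n k) E I) * k.choose j := by
  refine card_mul_le_card_mul (fun J K => J ⊆ K) (fun J hJ => ?_) fun K hK => ?_
  · obtain ⟨hJj, hJI⟩ := hE J hJ
    have hj : j ≤ #(J ∪ I) := hJj ▸ card_le_card subset_union_left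
    calc (n - j - 1).choose (k - j - 1) ≤ (n - #(J ∪ I)).choose (k - #(J ∪ I)) := by
          convert choose_le_choose_add (n - j - 1) (k - j - 1) (j + 1 - #(J ∪ I)) using 2 <;> omega
      _ = setDegree (kSets n k) (J ∪ I) := (setDegree_kSets (by omega)).symm
      _ ≤ _ := card_le_card fun K hK => by
          obtain ⟨hK, hJIK⟩ := mem_filter.1 hK
          obtain ⟨hJK, hIK⟩ := union_subset_iff.1 hJIK
          exact mem_filter.2 ⟨mem_filter.2 ⟨hK, hIK, J, hJ, hJK⟩, hJK⟩
  · rw [← mem_kSets.1 (mem_filter.1 hK).1, ← card_powersetCard]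
    refine card_le_card fun J hJ => ?_
    obtain ⟨hJ, hJK⟩ := mem_filter.1 hJ
    exact mem_powersetCard.2 ⟨hJK, (hE J hJ).1⟩

/-- The pairs of an edge in `U` and one of its `j`-subsets. -/
def incidences (j : ℕ) (U : Finset (Finset (Fin n))) :
    Finset (Finset (Fin n) × Finset (Fin n)) :=
  {b ∈ U ×ˢ kSets n j | b.2 ⊆ b.1}

variable {U D E : Finset (Finset (Fin n))}

lemma card_incidences_fst {K : Finset (Fin n)} (hK : K ∈ U) :
    #{b ∈ incidences j U | b.1 = K} = (#K).choose j := by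
  rw [← card_powersetCard,
    ← card_image_of_injective (powersetCard j K) (Prod.mk_right_injective K)]
  refine congrArg card ?_
  ext ⟨K', J⟩
  simp only [incidences, mem_filter, mem_product, mem_kSets, mem_image, mem_powersetCard,
    Prod.mk.injEq]
  constructor
  · rintro ⟨⟨⟨-, hJ⟩, hJK⟩, rfl⟩
    exact ⟨J, ⟨hJK, hJ⟩, rfl, rfl⟩
  · rintro ⟨J, ⟨hJK, hJ⟩, rfl, rfl⟩
    exact ⟨⟨⟨hK, hJ⟩, hJK⟩, rfl⟩

lemma card_incidences_snd {J : Finset (Fin n)} (hJ : J ∈ kSets n j) :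
    #{b ∈ {b ∈ incidences j U | ∃ J' ∈ D, J' ⊆ b.1} | b.2 = J} = #(linkingEdges U D J) := by
  rw [← card_image_of_injective (linkingEdges U D J) (Prod.mk_left_injective J)]
  refine congrArg card ?_
  ext ⟨K, J'⟩
  simp only [incidences, linkingEdges, mem_filter, mem_product, mem_image, Prod.mk.injEq]
  constructor
  · rintro ⟨⟨⟨⟨hK, -⟩, hJK⟩, hD⟩, rfl⟩
    exact ⟨K, ⟨hK, hJK, hD⟩, rfl, rfl⟩
  · rintro ⟨K, ⟨hK, hJK, hD⟩, rfl, rfl⟩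
    exact ⟨⟨⟨⟨hK, hJ⟩, hJK⟩, hD⟩, rfl⟩

-- Each edge splits into `C(k, j)` independent copies, one for each of its `j`-subsets. Counting a
-- `j`-set as reached only through its own copies makes these events independent.
lemma randProb_not_reach_le (hU : U ⊆ kSets n k) {p : ℝ} (hp : p ∈ unitInterval)
    {G : Finset (Finset (Fin n)) → Prop} (hG : Monotone G) :
    randProb U (fun _ => 1 - (1 - p) ^ k.choose j) (fun H => ¬ G (reach j H D)) ≤
      randProb (kSets n j) (reachProb U D p) fun N => ¬ G (D ∪ N) := by
  set T := incidences j U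
  set linked : Finset (Finset (Fin n) × Finset (Fin n)) := {b ∈ T | ∃ J ∈ D, J ⊆ b.1}
  have edges_from_copies : randProb U (fun _ => 1 - (1 - p) ^ k.choose j)
      (fun H => ¬ G (reach j H D)) =
      randProb T (fun _ => p) fun H => ¬ G (reach j (H.image Prod.fst) D) := by
    have fst_mem : ∀ b ∈ T, b.1 ∈ U := fun b hb => (mem_product.1 (mem_filter.1 hb).1).1
    refine Eq.trans (randExp_congr_weights (fun K hK => ?_) _)
      (randExp_image Prod.fst fst_mem _ _).symm
    rw [prod_const, card_incidences_fst hK, mem_kSets.1 (hU hK)]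
  have jSets_from_copies : randProb (kSets n j) (reachProb U D p) (fun N => ¬ G (D ∪ N)) =
      randProb linked (fun _ => p) fun H => ¬ G (D ∪ H.image Prod.snd) := by
    have snd_mem : ∀ b ∈ linked, b.2 ∈ kSets n j :=
      fun b hb => (mem_product.1 (mem_filter.1 (mem_filter.1 hb).1).1).2
    refine Eq.trans (randExp_congr_weights (fun J hJ => ?_) _)
      (randExp_image Prod.snd snd_mem _ _).symm
    rw [prod_const, card_incidences_snd hJ, reachProb]
  have restrict : randProb linked (fun _ => p) (fun H => ¬ G (D ∪ H.image Prod.snd)) =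
      randProb T (fun _ => p) fun H => ¬ G (D ∪ (H ∩ linked).image Prod.snd) :=
    (randExp_inter (filter_subset _ _) _ _).symm
  rw [edges_from_copies, jSets_from_copies, restrict]
  refine randProb_mono (fun _ _ => hp) fun H _ => mt (hG (union_subset_union_right fun J hJ => ?_))
  obtain ⟨⟨K, J⟩, hb, rfl⟩ := mem_image.1 hJ
  obtain ⟨hbH, hlinked⟩ := mem_inter.1 hb
  obtain ⟨hT, hD⟩ := mem_filter.1 hlinked
  obtain ⟨hKJ, hJK⟩ := mem_filter.1 hT
  exact mem_filter.2 ⟨(mem_product.1 hKJ).2, K, mem_image.2 ⟨_, hbH, rfl⟩, hJK, hD⟩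

lemma mul_div_le_one_sub_one_sub_pow {p Λ : ℝ} (hp : p ∈ unitInterval) {m : ℕ} (hm : p * m ≤ Λ) :
    p * m / (1 + Λ) ≤ 1 - (1 - p) ^ m := by
  have hpm : 0 ≤ p * m := mul_nonneg hp.1 m.cast_nonneg
  have pow_le : (1 - p) ^ m ≤ (1 + p * m)⁻¹ := by
    calc (1 - p) ^ m ≤ Real.exp (-p) ^ m :=
          pow_le_pow_left₀ (sub_nonneg.2 hp.2) (Real.one_sub_le_exp_neg p) m
      _ = (Real.exp (p * m))⁻¹ := by rw [← Real.exp_nat_mul, ← Real.exp_neg]; ring_nf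
      _ ≤ _ := inv_anti₀ (by linarith) (by linarith [Real.add_one_le_exp (p * m)])
  calc p * m / (1 + Λ) ≤ p * m / (1 + p * m) :=
        div_le_div_of_nonneg_left hpm (by linarith) (by linarith)
    _ = 1 - (1 + p * m)⁻¹ := by field_simp; ring
    _ ≤ _ := by linarith

variable {p : ℝ}

lemma mul_card_linkingEdges_le_reachProb (hjk : j ≤ k) (hn : 0 < n) (hU : U ⊆ kSets n k)
    (hp : p ∈ unitInterval) {J : Finset (Fin n)} (hJ : #J = j) :
    p / (1 + p * (n : ℝ) ^ (k - j)) * #(linkingEdges U D J) ≤ reachProb U D p J := by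
  have hn' : (n : ℝ) ≠ 0 := mod_cast hn.ne'
  have card_le : (#(linkingEdges U D J) : ℝ) ≤ (n : ℝ) ^ (k - j) := by
    rw [pow_sub₀ _ hn' hjk, ← div_eq_mul_inv, ← hJ]
    exact card_le_pow_div_pow hn fun K hK =>
      ⟨mem_kSets.1 (hU (mem_filter.1 hK).1), (mem_filter.1 hK).2.1⟩
  rw [div_mul_eq_mul_div]
  exact mul_div_le_one_sub_one_sub_pow hp (mul_le_mul_of_nonneg_left card_le hp.1)

/-- The `j`-sets that contain `I`. -/
def jSetsAbove (j : ℕ) (I : Finset (Fin n)) : Finset (Finset (Fin n)) :=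
  {J ∈ kSets n j | I ⊆ J}

lemma mem_jSetsAbove {I J : Finset (Fin n)} : J ∈ jSetsAbove j I ↔ #J = j ∧ I ⊆ J := by
  simp only [jSetsAbove, mem_filter, mem_kSets]

lemma jSetsAbove_eq_singleton {J : Finset (Fin n)} (hJ : #J = j) : jSetsAbove j J = {J} := by
  ext J'
  rw [mem_jSetsAbove, mem_singleton]
  exact ⟨fun ⟨_, hsub⟩ => (eq_of_subset_of_card_le hsub (by omega)).symm,
    by rintro rfl; exact ⟨hJ, Subset.rfl⟩⟩

lemma card_jSetsAbove (hj : 1 ≤ j) {L : Finset (Fin n)} (hL : #L = j - 1) :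
    #(jSetsAbove j L) = n - (j - 1) := by
  have h : setDegree (kSets n j) L = (n - #L).choose (j - #L) := setDegree_kSets (by omega)
  rwa [hL, Nat.sub_sub_self hj, Nat.choose_one_right] at h

lemma card_linkingEdges_le_sum (hjk : j ≤ k) (hED : E ⊆ D) {I : Finset (Fin n)} (hI : #I ≤ j)
    (hEU : linkingEdges (kSets n k) E I ⊆ U) :
    #(linkingEdges (kSets n k) E I) ≤ ∑ J ∈ jSetsAbove j I, #(linkingEdges U D J) := by
  refine (card_le_card fun K hK => ?_).trans card_biUnion_le
  obtain ⟨hKk, hIK, J, hJ, hJK⟩ := mem_filter.1 hK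
  obtain ⟨J', hIJ', hJ'K, hJ'⟩ := exists_subsuperset_card_eq hIK hI (mem_kSets.1 hKk ▸ hjk)
  exact mem_biUnion.2 ⟨J', mem_jSetsAbove.2 ⟨hJ', hIJ'⟩,
    mem_filter.2 ⟨hEU hK, hJ'K, J, hED hJ, hJK⟩⟩

lemma mul_card_le_sum_reachProb (hjk : j < k) (hkn : k ≤ n) (hU : U ⊆ kSets n k)
    (hp : p ∈ unitInterval) (hED : E ⊆ D) {I : Finset (Fin n)} (hI : #I ≤ j)
    (hE : ∀ J ∈ E, #J = j ∧ #(J ∪ I) ≤ j + 1) (hEU : linkingEdges (kSets n k) E I ⊆ U) :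
    p * (n - j - 1).choose (k - j - 1) / (k.choose j * (1 + p * (n : ℝ) ^ (k - j))) * #E ≤
      ∑ J ∈ jSetsAbove j I, reachProb U D p J := by
  have hn : 0 < n := by omega
  have hp0 := hp.1
  have hchoose : (0 : ℝ) < k.choose j := mod_cast Nat.choose_pos hjk.le
  have card_E_le : (#E * (n - j - 1).choose (k - j - 1) : ℝ) / k.choose j ≤
      #(linkingEdges (kSets n k) E I) := by
    rw [div_le_iff₀ hchoose]
    exact_mod_cast card_mul_choose_le_card_linkingEdges_mul hjk hkn hE
  set c := p / (1 + p * (n : ℝ) ^ (k - j)) with hc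
  calc p * (n - j - 1).choose (k - j - 1) / (k.choose j * (1 + p * (n : ℝ) ^ (k - j))) * #E
      = c * (#E * (n - j - 1).choose (k - j - 1) / k.choose j) := by rw [hc]; field_simp
    _ ≤ c * #(linkingEdges (kSets n k) E I) := by gcongr
    _ ≤ c * ∑ J ∈ jSetsAbove j I, (#(linkingEdges U D J) : ℝ) := by
        gcongr
        exact_mod_cast card_linkingEdges_le_sum hjk.le hED hI hEU
    _ ≤ _ := by
        rw [mul_sum]
        exact sum_le_sum fun J hJ => mul_card_linkingEdges_le_reachProb hjk.le hn hU hp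
          (mem_jSetsAbove.1 hJ).1

end SprinklingRound

section SecondPhase

open Finset

variable {n k j : ℕ} {p b x : ℝ} {U D E : Finset (Finset (Fin n))}

lemma randProb_reach_not_forall_le (hU : U ⊆ kSets n k) (hp : p ∈ unitInterval)
    {S : Finset (Finset (Fin n))} {T : Finset (Fin n) → Finset (Finset (Fin n))}
    (hT : ∀ I ∈ S, T I ⊆ kSets n j) (hx : ∀ I ∈ S, 2 * x ≤ ∑ J ∈ T I, reachProb U D p J) :
    randProb U (fun _ => 1 - (1 - p) ^ k.choose j)
      (fun H => ¬ ∀ I ∈ S, x ≤ #(reach j H D ∩ T I)) ≤ #S * Real.exp (-(x / 5)) := by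
  have weights_mem : ∀ J ∈ kSets n j, reachProb U D p J ∈ unitInterval :=
    fun J _ => reachProb_mem_unitInterval U D hp J
  have monotone_event : Monotone fun N : Finset (Finset (Fin n)) => ∀ I ∈ S, x ≤ #(N ∩ T I) :=
    fun N N' hN h I hI => (h I hI).trans (mod_cast card_le_card (inter_subset_inter_right hN))
  calc _ ≤ randProb (kSets n j) (reachProb U D p) fun N => ¬ ∀ I ∈ S, x ≤ #((D ∪ N) ∩ T I) :=
        randProb_not_reach_le hU hp monotone_event
    _ ≤ randProb (kSets n j) (reachProb U D p) fun N => ¬ ∀ I ∈ S, x ≤ #(N ∩ T I) :=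
        randProb_mono weights_mem fun N _ => mt (monotone_event subset_union_right)
    _ ≤ ∑ I ∈ S, randProb (kSets n j) (reachProb U D p) fun N => ¬ x ≤ #(N ∩ T I) :=
        randProb_not_forall_le weights_mem _ _
    _ ≤ ∑ I ∈ S, Real.exp (-(x / 5)) :=
        sum_le_sum fun I hI => randProb_card_inter_lower_tail weights_mem (hT I hI) (hx I hI)
    _ = _ := by rw [sum_const, nsmul_eq_mul]

/-- The edges that contain a vertex of `R`. -/
def edgesMeeting (n k : ℕ) (R : Finset (Fin n)) : Finset (Finset (Fin n)) :=
  {K ∈ kSets n k | (K ∩ R).Nonempty}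

/-- The hypotheses on one round of sprinkling in the second phase. Each edge meeting the reserved
vertices appears with probability `1 - (1 - p) ^ C(k, j)`, and the factor `b` is such that `x`
`j`-sets around a set `I` lead to at least `2 * x * b` expected newly reached `j`-sets above `I`. -/
structure SprinklingRound (n k j : ℕ) (p b : ℝ) : Prop where
  one_le : 1 ≤ j
  lt : j < k
  le : k ≤ n
  mem_unitInterval : p ∈ unitInterval
  nonneg : 0 ≤ b
  two_mul_le : 2 * b ≤
    p * (n - j - 1).choose (k - j - 1) / (k.choose j * (1 + p * (n : ℝ) ^ (k - j)))

variable {R : Finset (Fin n)}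

lemma SprinklingRound.two_mul_le_sum_reachProb (hs : SprinklingRound n k j p b) (hED : E ⊆ D)
    {I : Finset (Fin n)} (hI : #I ≤ j) {v : Fin n} (hv : v ∈ I)
    (hE : ∀ J ∈ E, #J = j ∧ I.erase v ⊆ J) (hR : ∀ J ∈ E, ∃ r ∈ R, r ∈ I ∪ J) (hx : x ≤ #E) :
    2 * (x * b) ≤ ∑ J ∈ jSetsAbove j I, reachProb (edgesMeeting n k R) D p J := by
  have hb := hs.nonneg
  have card_union_le : ∀ J ∈ E, #J = j ∧ #(J ∪ I) ≤ j + 1 := fun J hJ => by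
    refine ⟨(hE J hJ).1, ?_⟩
    have union_subset : J ∪ I ⊆ insert v J := union_subset (subset_insert _ _) <| by
      rw [← insert_erase hv]
      exact insert_subset_insert _ (hE J hJ).2
    exact (card_le_card union_subset).trans ((card_insert_le _ _).trans_eq (by rw [(hE J hJ).1]))
  have linking_subset : linkingEdges (kSets n k) E I ⊆ edgesMeeting n k R := fun K hK => by
    obtain ⟨hK, hIK, J, hJ, hJK⟩ := mem_filter.1 hK
    obtain ⟨r, hr, hrIJ⟩ := hR J hJ
    exact mem_filter.2 ⟨hK, r, mem_inter.2 ⟨union_subset hIK hJK hrIJ, hr⟩⟩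
  calc 2 * (x * b) ≤ 2 * (#E * b) := by gcongr
    _ = 2 * b * #E := by ring
    _ ≤ _ := mul_le_mul_of_nonneg_right hs.two_mul_le (Nat.cast_nonneg _)
    _ ≤ _ := mul_card_le_sum_reachProb hs.lt hs.le (filter_subset _ _) hs.mem_unitInterval hED hI
        card_union_le linking_subset

lemma SprinklingRound.two_mul_le_reachProb (hs : SprinklingRound n k j p b) (hED : E ⊆ D)
    {J : Finset (Fin n)} (hJ : #J = j) {v : Fin n} (hv : v ∈ J)
    (hE : ∀ J' ∈ E, #J' = j ∧ J.erase v ⊆ J') (hR : ∀ J' ∈ E, ∃ r ∈ R, r ∈ J ∪ J')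
    (hx : x ≤ #E) : 2 * (x * b) ≤ reachProb (edgesMeeting n k R) D p J := by
  simpa only [jSetsAbove_eq_singleton hJ, sum_singleton] using
    hs.two_mul_le_sum_reachProb hED hJ.le hv hE hR hx

/-- Every `i`-set meeting `R` lies in at least `x` of the `j`-sets in `D`. For `i = 0` this bounds
the size of `D`. -/
def HasDegreesThrough (j : ℕ) (R : Finset (Fin n)) (i : ℕ) (x : ℝ)
    (D : Finset (Finset (Fin n))) : Prop :=
  ∀ I ∈ kSets n i, (i = 0 ∨ (I ∩ R).Nonempty) → x ≤ #(D ∩ jSetsAbove j I)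

/-- The sets obtained from `L` by adding a vertex of `R`. -/
def extensionsInto (R L : Finset (Fin n)) : Finset (Finset (Fin n)) :=
  (R \ L).image fun r => insert r L

/-- Every `(j - 1)`-set is extended by at least `x` vertices of `R` to a member of `D`. -/
def HasExtensionsInto (j : ℕ) (R : Finset (Fin n)) (x : ℝ) (D : Finset (Finset (Fin n))) : Prop :=
  ∀ L ∈ kSets n (j - 1), x ≤ #(D ∩ extensionsInto R L)

lemma card_extensionsInto (R L : Finset (Fin n)) : #(extensionsInto R L) = #(R \ L) :=
  card_image_of_injOn fun r hr s _ hrs => by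
    have hr_mem : r ∈ insert s L := hrs ▸ mem_insert_self r L
    exact (mem_insert.1 hr_mem).resolve_right (mem_sdiff.1 hr).2

lemma exists_of_mem_extensionsInto {L J : Finset (Fin n)} (hJ : J ∈ extensionsInto R L) :
    ∃ r ∈ R, r ∉ L ∧ J = insert r L := by
  obtain ⟨r, hr, rfl⟩ := mem_image.1 hJ
  exact ⟨r, (mem_sdiff.1 hr).1, (mem_sdiff.1 hr).2, rfl⟩

lemma card_kSets_le_pow {i : ℕ} (hn : 0 < n) (hi : i ≤ j) : (#(kSets n i) : ℝ) ≤ (n : ℝ) ^ j := by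
  rw [kSets, card_powersetCard, card_fin]
  exact_mod_cast (Nat.choose_le_pow n i).trans (Nat.pow_le_pow_right hn hi)

lemma SprinklingRound.randProb_not_hasDegreesThrough_le (hs : SprinklingRound n k j p b) {i : ℕ}
    (hi : i + 1 ≤ j) (hD : HasDegreesThrough j R i x D) :
    randProb (edgesMeeting n k R) (fun _ => 1 - (1 - p) ^ k.choose j)
      (fun H => ¬ HasDegreesThrough j R (i + 1) (x * b) (reach j H D)) ≤
      (n : ℝ) ^ j * Real.exp (-(x * b / 5)) := by
  have expected : ∀ I ∈ {I ∈ kSets n (i + 1) | (I ∩ R).Nonempty},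
      2 * (x * b) ≤ ∑ J ∈ jSetsAbove j I, reachProb (edgesMeeting n k R) D p J := by
    intro I hI
    obtain ⟨hIcard, r, hr⟩ := mem_filter.1 hI
    obtain ⟨hrI, hrR⟩ := mem_inter.1 hr
    rw [mem_kSets] at hIcard
    obtain ⟨v, hv, hvr⟩ : ∃ v ∈ I, i = 0 ∨ r ∈ I.erase v := by
      obtain rfl | hi0 := Nat.eq_zero_or_pos i
      · exact ⟨r, hrI, .inl rfl⟩
      · obtain ⟨v, hv, hvr⟩ := exists_mem_ne (by omega : 1 < #I) r
        exact ⟨v, hv, .inr (mem_erase.2 ⟨hvr.symm, hrI⟩)⟩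
    exact hs.two_mul_le_sum_reachProb inter_subset_left (by omega) hv
      (fun J hJ => mem_jSetsAbove.1 (mem_inter.1 hJ).2)
      (fun J _ => ⟨r, hrR, mem_union_left _ hrI⟩)
      (hD (I.erase v) (mem_kSets.2 (by rw [card_erase_of_mem hv]; omega))
        (hvr.imp_right fun h => ⟨r, mem_inter.2 ⟨h, hrR⟩⟩))
  have hle := hs.le
  have hlt := hs.lt
  calc _ = randProb (edgesMeeting n k R) (fun _ => 1 - (1 - p) ^ k.choose j)
        (fun H => ¬ ∀ I ∈ {I ∈ kSets n (i + 1) | (I ∩ R).Nonempty},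
          x * b ≤ #(reach j H D ∩ jSetsAbove j I)) := by
        simp only [HasDegreesThrough, mem_filter, and_imp, Nat.succ_ne_zero, false_or]
    _ ≤ _ := randProb_reach_not_forall_le (filter_subset _ _) hs.mem_unitInterval
        (fun I _ => filter_subset _ _) expected
    _ ≤ _ := mul_le_mul_of_nonneg_right ((Nat.cast_le.2 (card_le_card (filter_subset _ _))).trans
        (card_kSets_le_pow (by omega) hi)) (Real.exp_pos _).le

lemma SprinklingRound.randProb_not_hasExtensionsInto_le (hs : SprinklingRound n k j p b)
    (hj : 2 ≤ j) (hx : 0 ≤ x) (hD : HasDegreesThrough j R (j - 1) x D) {ρ : ℝ}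
    (hρ : ∀ L ∈ kSets n (j - 1), ρ ≤ #(R \ L)) :
    randProb (edgesMeeting n k R) (fun _ => 1 - (1 - p) ^ k.choose j)
      (fun H => ¬ HasExtensionsInto j R (x * b * ρ) (reach j H D)) ≤
      (n : ℝ) ^ j * Real.exp (-(x * b * ρ / 5)) := by
  have hb := hs.nonneg
  have hle := hs.le
  have hlt := hs.lt
  have card_of_mem : ∀ L ∈ kSets n (j - 1), ∀ J ∈ extensionsInto R L, #J = j := by
    intro L hL J hJ
    obtain ⟨r, -, hrL, rfl⟩ := exists_of_mem_extensionsInto hJ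
    rw [card_insert_of_notMem hrL, mem_kSets.1 hL, Nat.sub_add_cancel hs.one_le]
  have reached : ∀ L ∈ kSets n (j - 1), ∀ J ∈ extensionsInto R L,
      2 * (x * b) ≤ reachProb (edgesMeeting n k R) D p J := by
    intro L hL J hJ
    have hJcard := card_of_mem L hL J hJ
    obtain ⟨r, hrR, -, rfl⟩ := exists_of_mem_extensionsInto hJ
    obtain ⟨v, hv, hvr⟩ := exists_mem_ne (by omega : 1 < #(insert r L)) r
    have hr_mem := mem_insert_self r L
    exact hs.two_mul_le_reachProb inter_subset_left hJcard hv
      (fun J hJ => mem_jSetsAbove.1 (mem_inter.1 hJ).2)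
      (fun J _ => ⟨r, hrR, mem_union_left _ hr_mem⟩)
      (hD _ (mem_kSets.2 (by rw [card_erase_of_mem hv, hJcard]))
        (.inr ⟨r, mem_inter.2 ⟨mem_erase.2 ⟨hvr.symm, hr_mem⟩, hrR⟩⟩))
  refine (randProb_reach_not_forall_le (filter_subset _ _) hs.mem_unitInterval
    (fun L hL J hJ => mem_kSets.2 (card_of_mem L hL J hJ)) fun L hL => ?_).trans
    (mul_le_mul_of_nonneg_right (card_kSets_le_pow (by omega) (by omega)) (Real.exp_pos _).le)
  calc 2 * (x * b * ρ) = ρ * (2 * (x * b)) := by ring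
    _ ≤ #(extensionsInto R L) * (2 * (x * b)) := by
        rw [card_extensionsInto]
        exact mul_le_mul_of_nonneg_right (hρ L hL) (by positivity)
    _ ≤ _ := by
        rw [← nsmul_eq_mul]
        exact card_nsmul_le_sum _ _ _ (reached L hL)

lemma SprinklingRound.two_mul_le_reachProb_of_hasExtensionsInto (hs : SprinklingRound n k j p b)
    (hD : HasExtensionsInto j R x D) {J : Finset (Fin n)} (hJ : J ∈ kSets n j) :
    2 * (x * b) ≤ reachProb (edgesMeeting n k R) D p J := by
  rw [mem_kSets] at hJ
  have hj := hs.one_le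
  obtain ⟨v, hv⟩ := card_pos.1 (by omega : 0 < #J)
  have hcard : #(J.erase v) = j - 1 := by rw [card_erase_of_mem hv, hJ]
  refine hs.two_mul_le_reachProb inter_subset_left hJ hv (fun J' hJ' => ?_) (fun J' hJ' => ?_)
    (hD _ (mem_kSets.2 hcard)) <;>
    obtain ⟨r, hrR, hrJ, rfl⟩ := exists_of_mem_extensionsInto (mem_inter.1 hJ').2
  · exact ⟨by rw [card_insert_of_notMem hrJ, hcard, Nat.sub_add_cancel hj], subset_insert _ _⟩
  · exact ⟨r, hrR, mem_union_right _ (mem_insert_self _ _)⟩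

lemma randProb_not_hasSmoothSubset_le {q m δ : ℝ} (hj : 1 ≤ j) (hjn : j ≤ n) (hq : q ∈ unitInterval)
    (hm : 0 < m) (hmq : m ≤ q * (n - (j - 1) : ℕ)) (hδ : δ ∈ unitInterval) :
    randProb (kSets n j) (fun _ => q) (fun N => ¬ HasSmoothSubset j m (δ + j / m) N) ≤
      (n : ℝ) ^ j * (2 * Real.exp (-(δ ^ 2 * (q * (n - (j - 1) : ℕ)) / 4))) := by
  calc _ ≤ randProb (kSets n j) (fun _ => q) fun N => ¬ ∀ L ∈ kSets n (j - 1),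
          |(#(N ∩ jSetsAbove j L) : ℝ) - q * #(jSetsAbove j L)| ≤ δ * (q * #(jSetsAbove j L)) := by
        refine randProb_mono (fun _ _ => hq) fun N hN => mt fun hreg => ?_
        refine hasSmoothSubset_of_regular hj (fun J hJ => mem_kSets.1 (hN hJ)) hm hmq fun L hL => ?_
        have card_inter_eq : #(N ∩ jSetsAbove j L) = setDegree N L := by
          rw [jSetsAbove, inter_filter, inter_eq_left.2 hN, setDegree]
        simpa only [card_inter_eq, card_jSetsAbove hj hL] using hreg L (mem_kSets.2 hL)
    _ ≤ ∑ L ∈ kSets n (j - 1), randProb (kSets n j) (fun _ => q) fun N =>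
          ¬ |(#(N ∩ jSetsAbove j L) : ℝ) - q * #(jSetsAbove j L)| ≤ δ * (q * #(jSetsAbove j L)) :=
        randProb_not_forall_le (fun _ _ => hq) _ _
    _ ≤ ∑ L ∈ kSets n (j - 1), 2 * Real.exp (-(δ ^ 2 * (q * (n - (j - 1) : ℕ)) / 4)) :=
        sum_le_sum fun L hL => card_jSetsAbove hj (mem_kSets.1 hL) ▸
          randProb_card_inter_concentration hq hδ (filter_subset _ _)
    _ ≤ _ := by
        rw [sum_const, nsmul_eq_mul]
        exact mul_le_mul_of_nonneg_right (card_kSets_le_pow (by omega) (by omega)) (by positivity)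

lemma SprinklingRound.randProb_not_hasSmoothSubset_reach_le (hs : SprinklingRound n k j p b)
    (hx : 0 ≤ x) (hD : HasExtensionsInto j R x D) {m δ : ℝ} (hm : 0 < m)
    (hmx : m ≤ 2 * (x * b) * (n - (j - 1) : ℕ)) (hδ : δ ∈ unitInterval) :
    randProb (edgesMeeting n k R) (fun _ => 1 - (1 - p) ^ k.choose j)
      (fun H => ¬ HasSmoothSubset j m (δ + j / m) (reach j H D)) ≤
      (n : ℝ) ^ j * (2 * Real.exp (-(δ ^ 2 * (2 * (x * b) * (n - (j - 1) : ℕ)) / 4))) := by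
  have hb := hs.nonneg
  have hle := hs.le
  have hlt := hs.lt
  have weights_mem : ∀ J ∈ kSets n j, reachProb (edgesMeeting n k R) D p J ∈ unitInterval :=
    fun J _ => reachProb_mem_unitInterval _ D hs.mem_unitInterval J
  have le_weights : ∀ J ∈ kSets n j, 2 * (x * b) ≤ reachProb (edgesMeeting n k R) D p J :=
    fun J hJ => hs.two_mul_le_reachProb_of_hasExtensionsInto hD hJ
  have hq : 2 * (x * b) ∈ unitInterval := by
    obtain ⟨J, hJ⟩ : (kSets n j).Nonempty := powersetCard_nonempty.2 (by rw [card_fin]; omega)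
    exact ⟨by positivity, (le_weights J hJ).trans (weights_mem J hJ).2⟩
  have monotone_smooth : Monotone (HasSmoothSubset (n := n) j m (δ + j / m)) :=
    fun N N' hN h => h.mono hN
  calc _ ≤ randProb (kSets n j) (reachProb (edgesMeeting n k R) D p)
          fun N => ¬ HasSmoothSubset j m (δ + j / m) (D ∪ N) :=
        randProb_not_reach_le (filter_subset _ _) hs.mem_unitInterval monotone_smooth
    _ ≤ randProb (kSets n j) (reachProb (edgesMeeting n k R) D p)
          fun N => ¬ HasSmoothSubset j m (δ + j / m) N :=
        randProb_mono weights_mem fun N _ => mt fun h => h.mono subset_union_right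
    _ ≤ randProb (kSets n j) (fun _ => 2 * (x * b))
          fun N => ¬ HasSmoothSubset j m (δ + j / m) N :=
        randProb_not_anti_weights (fun _ _ => hq) weights_mem le_weights monotone_smooth
    _ ≤ _ := randProb_not_hasSmoothSubset_le hs.one_le (by omega) hq hm hmx hδ

lemma one_sub_one_sub_pow_mem_unitInterval {c : ℝ} (hc : c ∈ unitInterval) (t : ℕ) :
    1 - (1 - c) ^ t ∈ unitInterval := by
  have := hc.1
  have := hc.2
  exact ⟨sub_nonneg.2 (pow_le_one₀ (by linarith) (by linarith)),
    sub_le_self _ (pow_nonneg (by linarith) _)⟩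

-- Sprinkling: `t` independent rounds with probability `c` form one exposure with probability
-- `1 - (1 - c) ^ t`.
lemma randProb_not_extendsSmoothly_le {c m δ : ℝ} (hc : c ∈ unitInterval) (t : ℕ)
    (state : ℕ → Finset (Finset (Fin n)) → Prop) (e : ℕ → ℝ) (he : ∀ i, 0 ≤ e i)
    (round : ∀ i < t, ∀ D, state i D →
      randProb U (fun _ => c) (fun H => ¬ state (i + 1) (reach j H D)) ≤ e i)
    (final : ∀ D, state t D → HasSmoothSubset j m δ D) {D : Finset (Finset (Fin n))}
    (hD : state 0 D) :
    randProb U (fun _ => 1 - (1 - c) ^ t) (fun H => ¬ ExtendsSmoothly j m δ D H) ≤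
      ∑ i ∈ range t, e i := by
  induction t generalizing state e D with
  | zero =>
    refine (randExp_congr fun H _ => if_neg (not_not.2 ?_)).trans_le (randExp_const U _ 0).le
    exact (final D hD).extendsSmoothly H
  | succ t ih =>
    have hct := one_sub_one_sub_pow_mem_unitInterval hc t
    have later_rounds : ∀ H, state 1 (reach j H D) →
        randProb U (fun _ => 1 - (1 - c) ^ t) (fun H' => ¬ ExtendsSmoothly j m δ D (H ∪ H')) ≤
          ∑ i ∈ range t, e (i + 1) := fun H hH =>
      (randProb_mono (fun _ _ => hct) fun _ _ => mt ExtendsSmoothly.of_reach).trans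
        (ih (fun i => state (i + 1)) (fun i => e (i + 1)) (fun i => he _)
          (fun i hi => round (i + 1) (by omega)) final hH)
    calc randProb U (fun _ => 1 - (1 - c) ^ (t + 1)) (fun H => ¬ ExtendsSmoothly j m δ D H)
        = randExp U (fun _ => c) fun H => randProb U (fun _ => 1 - (1 - c) ^ t)
            fun H' => ¬ ExtendsSmoothly j m δ D (H ∪ H') := by
          refine Eq.trans (randExp_congr_weights (fun _ _ => ?_) _)
            (randExp_sprinkle U _ _ _).symm
          ring
      _ ≤ randProb U (fun _ => c) (fun H => ¬ state 1 (reach j H D)) + ∑ i ∈ range t, e (i + 1) :=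
          randExp_le_randProb_not_add (fun _ _ => hc) (sum_nonneg fun i _ => he _)
            (fun H => randProb_le_one (fun _ _ => hct) _) fun H _ => later_rounds H
      _ ≤ e 0 + ∑ i ∈ range t, e (i + 1) :=
          add_le_add_left (round 0 (by omega) D hD) _
      _ = _ := by rw [sum_range_succ', add_comm]

/-- What is required of the family `D` after `i` rounds, starting from at least `x` `j`-sets:
degrees of `i`-sets through `R` for `i < j`, then degrees of all `(j - 1)`-sets into `R`, and
finally a smooth subset. -/
def StateAfter (j : ℕ) (R : Finset (Fin n)) (x b ρ m δ : ℝ) (i : ℕ)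
    (D : Finset (Finset (Fin n))) : Prop :=
  if i < j then HasDegreesThrough j R i (x * b ^ i) D
  else if i = j then HasExtensionsInto j R (x * b ^ j * ρ) D
  else HasSmoothSubset j m δ D

variable {m δ ρ X : ℝ}

lemma SprinklingRound.randProb_not_stateAfter_le (hs : SprinklingRound n k j p b) (hj : 2 ≤ j)
    (hx : 0 ≤ x) (hρ : ∀ L ∈ kSets n (j - 1), ρ ≤ #(R \ L))
    (hX : ∀ i, 1 ≤ i → i < j → X ≤ x * b ^ i) (hXρ : X ≤ x * b ^ j * ρ) {i : ℕ} (hi : i < j)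
    (hD : StateAfter j R x b ρ m δ i D) :
    randProb (edgesMeeting n k R) (fun _ => 1 - (1 - p) ^ k.choose j)
      (fun H => ¬ StateAfter j R x b ρ m δ (i + 1) (reach j H D)) ≤
      (n : ℝ) ^ j * Real.exp (-(X / 5)) := by
  have hb := hs.nonneg
  have succ_pow : x * b ^ i * b = x * b ^ (i + 1) := by rw [mul_assoc, pow_succ]
  rw [StateAfter, if_pos hi] at hD
  obtain hi | rfl := (Nat.succ_le_of_lt hi).lt_or_eq
  · simp only [StateAfter, if_pos hi]
    have h := hs.randProb_not_hasDegreesThrough_le hi.le hD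
    rw [succ_pow] at h
    refine h.trans ?_
    gcongr
    exact hX _ (by omega) hi
  · simp only [StateAfter, lt_irrefl, if_false, if_true]
    have h := hs.randProb_not_hasExtensionsInto_le hj (by positivity) hD hρ
    rw [succ_pow] at h
    exact h.trans (by gcongr)

lemma SprinklingRound.randProb_not_extendsSmoothly_le (hs : SprinklingRound n k j p b)
    (hj : 2 ≤ j) (hx : 0 ≤ x) (hρ₀ : 0 ≤ ρ) (hρ : ∀ L ∈ kSets n (j - 1), ρ ≤ #(R \ L))
    (hX : ∀ i, 1 ≤ i → i < j → X ≤ x * b ^ i) (hXρ : X ≤ x * b ^ j * ρ) {q : ℝ}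
    (hq : q = 2 * (x * b ^ j * ρ * b)) (hm : 0 < m) (hmq : m ≤ q * (n - (j - 1) : ℕ))
    (hδ : δ ∈ unitInterval) (hD : x ≤ #D) (hDj : D ⊆ kSets n j) :
    randProb (edgesMeeting n k R) (fun _ => 1 - ((1 - p) ^ k.choose j) ^ (j + 1))
      (fun H => ¬ ExtendsSmoothly j m (δ + j / m) D H) ≤
      j * ((n : ℝ) ^ j * Real.exp (-(X / 5))) +
        (n : ℝ) ^ j * (2 * Real.exp (-(δ ^ 2 * (q * (n - (j - 1) : ℕ)) / 4))) := by
  have hb := hs.nonneg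
  subst hq
  set e₁ := (n : ℝ) ^ j * Real.exp (-(X / 5))
  set e₂ := (n : ℝ) ^ j *
    (2 * Real.exp (-(δ ^ 2 * (2 * (x * b ^ j * ρ * b) * (n - (j - 1) : ℕ)) / 4)))
  have initial : StateAfter j R x b ρ m (δ + j / m) 0 D := by
    rw [StateAfter, if_pos (by omega), pow_zero, mul_one]
    intro I hI _
    rw [mem_kSets, card_eq_zero] at hI
    rwa [hI, jSetsAbove, filter_true_of_mem fun J _ => empty_subset J, inter_eq_left.2 hDj]
  have rounds := _root_.randProb_not_extendsSmoothly_le (U := edgesMeeting n k R)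
    (m := m) (δ := δ + j / m)
    (one_sub_one_sub_pow_mem_unitInterval hs.mem_unitInterval (k.choose j)) (j + 1)
    (StateAfter j R x b ρ m (δ + j / m)) (fun i => if i < j then e₁ else e₂)
    (fun i => by positivity) (fun i hi D hD => ?_) (fun D hD => by simpa [StateAfter] using hD)
    initial
  · simp only [sub_sub_cancel] at rounds
    refine rounds.trans_eq ?_
    rw [sum_range_succ, if_neg (lt_irrefl j), sum_congr rfl fun i hi => if_pos (mem_range.1 hi),
      sum_const, card_range, nsmul_eq_mul]
  · obtain hi | rfl := (Nat.lt_succ_iff.1 hi).lt_or_eq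
    · rw [if_pos hi]
      exact hs.randProb_not_stateAfter_le hj hx hρ hX hXρ hi hD
    · simp only [StateAfter, lt_irrefl, if_false, if_true, Nat.succ_ne_self,
        not_lt.2 (Nat.le_succ i)] at hD ⊢
      exact hs.randProb_not_hasSmoothSubset_reach_le (by positivity) hD hm hmq hδ

end SecondPhase

/-! ### Exploration of the components -/

section QueryRecord

open Finset

variable {n k j : ℕ} {D : Finset (Finset (Fin n))} {I J K X V : Finset (Fin n)}
  {b : Finset (Fin n) × Finset (Fin n)} {Q Z : Finset (Finset (Fin n) × Finset (Fin n))}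

/-- An upper bound for the number of `k`-sets that contain `X` and a member of the family `D` of
`j`-sets not containing `X`, sorted by the intersection `I` of that member with `X`. -/
def crossBound (k j : ℕ) (D : Finset (Finset (Fin n))) (X : Finset (Fin n)) : ℝ :=
  ∑ I ∈ X.ssubsets, (setDegree D I : ℝ) * ((n : ℝ) ^ k / (n : ℝ) ^ (j + #X - #I))

lemma sum_pow_div_pow_card_union_le_crossBound (hD : ∀ J ∈ D, #J = j) :
    ∑ J ∈ D with ¬ X ⊆ J, (n : ℝ) ^ k / (n : ℝ) ^ #(J ∪ X) ≤ crossBound k j D X := by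
  have maps_to : ∀ J ∈ ({J ∈ D | ¬ X ⊆ J} : Finset _), J ∩ X ∈ X.ssubsets := fun J hJ =>
    mem_ssubsets.2 <| inter_subset_right.ssubset_of_ne <|
      mt inter_eq_right.1 (mem_filter.1 hJ).2
  rw [← sum_fiberwise_of_maps_to maps_to]
  refine sum_le_sum fun I _ => ?_
  calc ∑ J ∈ {J ∈ D | ¬ X ⊆ J} with J ∩ X = I, (n : ℝ) ^ k / (n : ℝ) ^ #(J ∪ X)
    _ = ∑ J ∈ {J ∈ D | ¬ X ⊆ J} with J ∩ X = I, (n : ℝ) ^ k / (n : ℝ) ^ (j + #X - #I) := by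
        refine sum_congr rfl fun J hJ => ?_
        obtain ⟨hJX, rfl⟩ := mem_filter.1 hJ
        rw [card_union, hD J (mem_filter.1 hJX).1]
    _ ≤ ∑ J ∈ D with I ⊆ J, (n : ℝ) ^ k / (n : ℝ) ^ (j + #X - #I) := by
        refine sum_le_sum_of_subset_of_nonneg (fun J hJ => ?_) fun _ _ _ => by positivity
        obtain ⟨hJX, rfl⟩ := mem_filter.1 hJ
        exact mem_filter.2 ⟨(mem_filter.1 hJX).1, inter_subset_left⟩
    _ = _ := by rw [sum_const, nsmul_eq_mul, setDegree]

lemma card_le_crossBound (hn : 0 < n) (hD : ∀ J ∈ D, #J = j)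
    (hZ : ∀ b ∈ Z, b.1 ∈ D ∧ ¬ X ⊆ b.1 ∧ b.1 ∪ X ⊆ b.2 ∧ #b.2 = k) :
    (#Z : ℝ) ≤ crossBound k j D X := by
  refine le_trans ?_ (sum_pow_div_pow_card_union_le_crossBound hD)
  rw [card_eq_sum_card_fiberwise (f := Prod.fst) (t := {J ∈ D | ¬ X ⊆ J})
    fun b hb => mem_filter.2 ⟨(hZ b hb).1, (hZ b hb).2.1⟩]
  push_cast
  refine sum_le_sum fun J _ => ?_
  have snd_injOn : Set.InjOn Prod.snd ({b ∈ Z | b.1 = J} : Set (Finset (Fin n) × _)) :=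
    fun a ha b hb hab => Prod.ext (ha.2.trans hb.2.symm) hab
  rw [← card_image_of_injOn (by simpa only [coe_filter] using snd_injOn)]
  refine card_le_pow_div_pow hn fun K hK => ?_
  obtain ⟨b, hb, rfl⟩ := mem_image.1 hK
  obtain ⟨hbZ, rfl⟩ := mem_filter.1 hb
  exact ⟨(hZ b hbZ).2.2.2, (hZ b hbZ).2.2.1⟩

lemma crossBound_le (hn : 0 < n) (hX : #X ≤ j) {c Γ : ℝ} (hc : 0 ≤ c) (hΓ : 1 ≤ Γ)
    (hD : ∀ I ∈ X.ssubsets, (setDegree D I : ℝ) ≤ Γ ^ #I * (c / (n : ℝ) ^ #I)) :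
    crossBound k j D X ≤ 2 ^ j * Γ ^ (#X - 1) * (c * ((n : ℝ) ^ k / (n : ℝ) ^ (j + #X))) := by
  have : (0 : ℝ) < n := mod_cast hn
  have term_le : ∀ I ∈ X.ssubsets, (setDegree D I : ℝ) * ((n : ℝ) ^ k / (n : ℝ) ^ (j + #X - #I)) ≤
      Γ ^ (#X - 1) * (c * ((n : ℝ) ^ k / (n : ℝ) ^ (j + #X))) := by
    intro I hI
    have hIX : #I < #X := card_lt_card (mem_ssubsets.1 hI)
    have hIjX : #I ≤ j + #X := by omega
    calc _ ≤ Γ ^ #I * (c / (n : ℝ) ^ #I) * ((n : ℝ) ^ k / (n : ℝ) ^ (j + #X - #I)) :=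
          mul_le_mul_of_nonneg_right (hD I hI) (by positivity)
      _ = Γ ^ #I * (c * ((n : ℝ) ^ k / (n : ℝ) ^ (j + #X))) := by
          rw [← Nat.add_sub_cancel' hIjX, pow_add, Nat.add_sub_cancel_left]; field_simp
      _ ≤ _ := mul_le_mul_of_nonneg_right (pow_le_pow_right₀ hΓ (by omega)) (by positivity)
  have card_ssubsets : #X.ssubsets ≤ 2 ^ j :=
    calc #X.ssubsets ≤ #X.powerset := card_erase_le
      _ ≤ 2 ^ j := card_powerset X ▸ Nat.pow_le_pow_right two_pos hX
  calc crossBound k j D X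
    _ ≤ #X.ssubsets • (Γ ^ (#X - 1) * (c * ((n : ℝ) ^ k / (n : ℝ) ^ (j + #X)))) :=
        sum_le_card_nsmul _ _ _ term_le
    _ ≤ 2 ^ j * (Γ ^ (#X - 1) * (c * ((n : ℝ) ^ k / (n : ℝ) ^ (j + #X)))) := by
        rw [nsmul_eq_mul]
        exact mul_le_mul_of_nonneg_right (mod_cast card_ssubsets) (by positivity)
    _ = _ := (mul_assoc _ _ _).symm

/-- A bound for the growth of the degree of `I` when the `k`-set `b.2`, reached from the discovered
`j`-set `b.1`, turns out to be an edge and its `j`-subsets are discovered. -/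
def degreeIncrement (k j : ℕ) (I : Finset (Fin n)) (b : Finset (Fin n) × Finset (Fin n)) : ℝ :=
  if I ⊆ b.2 then ((k - #I).choose (j - #I) : ℝ) - (if I ⊆ b.1 then 1 else 0) else 0

lemma one_le_choose_sub_sub (hjk : j ≤ k) (i : ℕ) : (1 : ℝ) ≤ (k - i).choose (j - i) :=
  mod_cast Nat.choose_pos (Nat.sub_le_sub_right hjk i)

lemma degreeIncrement_nonneg (hjk : j ≤ k) : 0 ≤ degreeIncrement k j I b := by
  have := one_le_choose_sub_sub hjk #I
  unfold degreeIncrement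
  split_ifs <;> linarith

lemma choose_sub_sub_add_one_le {i : ℕ} (hi : 1 ≤ i) (hij : i ≤ j) (hjk : j < k) :
    (k - i).choose (j - i) + 1 ≤ k.choose j := by
  obtain ⟨k, rfl⟩ : ∃ k', k = k' + 1 := ⟨k - 1, by omega⟩
  obtain ⟨j, rfl⟩ : ∃ j', j = j' + 1 := ⟨j - 1, by omega⟩
  rw [Nat.choose_succ_succ]
  refine add_le_add ?_ (Nat.choose_pos (by omega))
  have := choose_le_choose_add (k + 1 - i) (j + 1 - i) (i - 1)
  rwa [show k + 1 - i + (i - 1) = k by omega, show j + 1 - i + (i - 1) = j by omega] at this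

lemma degreeIncrement_le (hI : I.Nonempty) (hIj : #I ≤ j) (hjk : j < k) :
    degreeIncrement k j I b ≤ k.choose j := by
  have increment_le : ((k - #I).choose (j - #I) : ℝ) + 1 ≤ k.choose j :=
    mod_cast choose_sub_sub_add_one_le hI.card_pos hIj hjk
  have := Nat.cast_nonneg (α := ℝ) ((k - #I).choose (j - #I))
  unfold degreeIncrement
  split_ifs <;> linarith

lemma setDegree_union_powersetCard_le (hJ : J ∈ D) (hJK : J ⊆ K) (hJj : #J = j) (hK : #K = k)
    (hI : #I ≤ j) :
    (setDegree (D ∪ powersetCard j K) I : ℝ) ≤ setDegree D I + degreeIncrement k j I (J, K) := by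
  set B : Finset (Finset (Fin n)) := {A ∈ powersetCard j K | I ⊆ A}
  have filter_union_eq : ({A ∈ D ∪ powersetCard j K | I ⊆ A} : Finset _) = {A ∈ D | I ⊆ A} ∪ B :=
    filter_union _ _ _
  unfold degreeIncrement setDegree
  by_cases hIK : I ⊆ K
  swap
  · have hB : B = ∅ := filter_eq_empty_iff.2 fun A hA hIA =>
      hIK (hIA.trans (mem_powersetCard.1 hA).1)
    rw [if_neg hIK, filter_union_eq, hB, union_empty, add_zero]
  have card_B : (k - #I).choose (j - #I) = #B := by
    rw [← hK, card_filter_powersetCard_subset I K j hIK hI]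
  have union_le := card_union_add_card_inter {A ∈ D | I ⊆ A} B
  rw [if_pos hIK, filter_union_eq, card_B]
  by_cases hIJ : I ⊆ J
  · have counted_twice : J ∈ {A ∈ D | I ⊆ A} ∩ B :=
      mem_inter.2 ⟨mem_filter.2 ⟨hJ, hIJ⟩, mem_filter.2 ⟨mem_powersetCard.2 ⟨hJK, hJj⟩, hIJ⟩⟩
    have := card_pos.2 ⟨J, counted_twice⟩
    rw [if_pos hIJ, ← add_sub_assoc, le_sub_iff_add_le]
    exact_mod_cast (by omega : #({A ∈ D | I ⊆ A} ∪ B) + 1 ≤ #{A ∈ D | I ⊆ A} + #B)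
  · rw [if_neg hIJ, sub_zero]
    exact_mod_cast (by omega : #({A ∈ D | I ⊆ A} ∪ B) ≤ #{A ∈ D | I ⊆ A} + #B)

/-- `Q` is a possible record of queries in an exploration of `V` that has discovered the `j`-sets
`D`: a pair `(J, K)` means that the `k`-set `K` has been queried from the discovered `j`-set `J`,
and no `k`-set is queried twice. -/
structure IsQueryRecord (k j : ℕ) (V : Finset (Fin n)) (D : Finset (Finset (Fin n)))
    (Q : Finset (Finset (Fin n) × Finset (Fin n))) : Prop where
  subset : D ⊆ powersetCard j V
  mem : ∀ b ∈ Q, b.1 ∈ D ∧ b.1 ⊆ b.2 ∧ b.2 ∈ powersetCard k V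
  snd_injOn : Set.InjOn Prod.snd (Q : Set (Finset (Fin n) × Finset (Fin n)))

lemma IsQueryRecord.card_eq (h : IsQueryRecord k j V D Q) : ∀ J ∈ D, #J = j :=
  fun _ hJ => (mem_powersetCard.1 (h.subset hJ)).2

lemma card_kSets_above (hjk : j ≤ k) (hJ : J ∈ powersetCard j V) :
    #{K ∈ powersetCard k V | J ⊆ K} = (#V - j).choose (k - j) := by
  obtain ⟨hJV, rfl⟩ := mem_powersetCard.1 hJ
  exact card_filter_powersetCard_subset J V k hJV hjk

lemma IsQueryRecord.card_filter_fst_le (h : IsQueryRecord k j V D Q) (hjk : j ≤ k)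
    (I : Finset (Fin n)) :
    #{b ∈ Q | I ⊆ b.1} ≤ (#V - j).choose (k - j) * setDegree D I := by
  refine card_le_mul_card_image_of_maps_to (f := Prod.fst) (fun b hb => ?_) _ fun J hJ => ?_
  · obtain ⟨hb, hIb⟩ := mem_filter.1 hb
    exact mem_filter.2 ⟨(h.mem b hb).1, hIb⟩
  · rw [← card_kSets_above hjk (h.subset (mem_filter.1 hJ).1)]
    refine card_le_card_of_injOn Prod.snd (fun b hb => ?_) (h.snd_injOn.mono fun b hb => ?_)
    · obtain ⟨hbQ, rfl⟩ := mem_filter.1 hb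
      obtain ⟨-, hsub, hmem⟩ := h.mem b (mem_filter.1 hbQ).1
      exact mem_filter.2 ⟨hmem, hsub⟩
    · exact (mem_filter.1 (mem_filter.1 hb).1).1

lemma IsQueryRecord.sum_degreeIncrement_le (h : IsQueryRecord k j V D Q) (hn : 0 < n) (hjk : j ≤ k)
    (I : Finset (Fin n)) :
    ∑ b ∈ Q, degreeIncrement k j I b ≤
      (((k - #I).choose (j - #I) : ℝ) - 1) * (#V - j).choose (k - j) * setDegree D I +
        (k - #I).choose (j - #I) * crossBound k j D I := by
  have one_le_c := one_le_choose_sub_sub hjk #I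
  set c : ℝ := ((k - #I).choose (j - #I) : ℝ)
  have increment_eq : ∀ b ∈ Q, degreeIncrement k j I b =
      (if I ⊆ b.1 then c - 1 else 0) + if ¬ I ⊆ b.1 ∧ I ⊆ b.2 then c else 0 := by
    intro b hb
    have := (h.mem b hb).2.1
    unfold degreeIncrement
    by_cases hI : I ⊆ b.1
    · simp [hI, hI.trans this, c]
    · by_cases hI' : I ⊆ b.2 <;> simp [hI, hI', c]
  have from_I : (#{b ∈ Q | I ⊆ b.1} : ℝ) ≤ (#V - j).choose (k - j) * setDegree D I :=
    mod_cast h.card_filter_fst_le hjk I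
  have across_I : (#{b ∈ Q | ¬ I ⊆ b.1 ∧ I ⊆ b.2} : ℝ) ≤ crossBound k j D I :=
    card_le_crossBound hn h.card_eq fun b hb => by
      obtain ⟨hb, hI, hI'⟩ := mem_filter.1 hb
      obtain ⟨hD, hsub, hmem⟩ := h.mem b hb
      exact ⟨hD, hI, union_subset hsub hI', (mem_powersetCard.1 hmem).2⟩
  rw [sum_congr rfl increment_eq, sum_add_distrib, ← sum_filter, ← sum_filter, sum_const,
    sum_const, nsmul_eq_mul, nsmul_eq_mul]
  linarith [mul_le_mul_of_nonneg_left from_I (sub_nonneg.2 one_le_c),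
    mul_le_mul_of_nonneg_left across_I (zero_le_one.trans one_le_c)]

end QueryRecord

section ExplorationState

open Finset

variable {n k j : ℕ} {V : Finset (Fin n)} {p ε cap y η Γ : ℝ}

/-- A stage of the exploration of `j`-components: the `j`-sets discovered so far, the record of
queries, the edges these queries have found, the discovered `j`-sets that belong to components
already explored completely, and the number of components started. -/
structure ExplorationState (n : ℕ) where
  discovered : Finset (Finset (Fin n))
  queries : Finset (Finset (Fin n) × Finset (Fin n))
  edges : Finset (Finset (Fin n))
  explored : Finset (Finset (Fin n))
  roots : ℕ

namespace ExplorationState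

variable (s : ExplorationState n)

/-- The `k`-sets that have been queried. -/
def queried : Finset (Finset (Fin n)) := s.queries.image Prod.snd

/-- Nothing is left to query from `J`: every `k`-set of `V` containing `J` has been queried or is
forbidden because it contains another discovered `j`-set. -/
def IsExhausted (k : ℕ) (V J : Finset (Fin n)) : Prop :=
  ∀ K ∈ powersetCard k V, J ⊆ K → K ∈ s.queried ∨ ∃ J' ∈ s.discovered, J' ≠ J ∧ J' ⊆ K

/-- The invariants of the exploration of `V` that is stopped once `cap` many `j`-sets are
discovered. -/
structure Valid (k j : ℕ) (V : Finset (Fin n)) (cap y : ℝ) : Prop where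
  isQueryRecord : IsQueryRecord k j V s.discovered s.queries
  edges_subset : s.edges ⊆ s.queried
  card_edges : s.roots + (k.choose j - 1 : ℝ) * #s.edges ≤ #s.discovered
  explored_subset : s.explored ⊆ s.discovered
  two_mul_card_explored : 2 * (#s.explored : ℝ) ≤ cap
  roots_le : s.roots ≤ (k.choose j - 1 : ℝ) * y + 1
  connected : ∀ J ∈ s.discovered \ s.explored, ∀ J' ∈ s.discovered \ s.explored,
    J = J' ∨ JConn j s.edges J J'
  exhausted : ∀ J ∈ s.explored, s.IsExhausted k V J

/-- The amount by which the degree of `I` exceeds the contribution of the roots, the allowance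
`cap / n ^ #I`, and slightly more than the expected contribution of the queries. -/
def degreeExcess (k j : ℕ) (p cap η : ℝ) (I : Finset (Fin n)) : ℝ :=
  setDegree s.discovered I - s.roots - cap / (n : ℝ) ^ #I -
    (1 + η) * p * ∑ b ∈ s.queries, degreeIncrement k j I b

end ExplorationState

/-- The numerical conditions under which the exploration of `V` is analysed. Here `y` is the
tolerated deficit of edges, `η` the tolerated relative excess in the degree increments, and `Γ` the
factor that smoothness loses per vertex. -/
structure ExplorationParams (n k j : ℕ) (V : Finset (Fin n)) (p ε cap y η Γ : ℝ) : Prop where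
  pos : 0 < n
  lt : j < k
  mem_unitInterval : p ∈ unitInterval
  pos_ε : 0 < ε
  ε_le_one : ε ≤ 1
  four_le_cap : 4 ≤ cap
  cap_le : cap ≤ #(powersetCard j V)
  pos_η : 0 < η
  η_le_one : η ≤ 1
  one_le_Γ : 1 ≤ Γ
  y_nonneg : 0 ≤ y
  roots_le : (k.choose j - 1 : ℝ) * y + 1 ≤ cap / (n : ℝ) ^ (j - 1)
  deficit_le : 16 * ((k.choose j - 1 : ℝ) * y) ≤ ε * cap
  subcritical_above : 2 + 2 * k.choose j * (p * ((n : ℝ) ^ k / (n : ℝ) ^ j)) * 2 ^ j ≤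
    (1 - (1 + η) * p * (#V - j).choose (k - j) * (k.choose j - 2)) * Γ
  forbidden_le : 2 ^ j * Γ ^ (j - 1) * (cap * ((n : ℝ) ^ k / (n : ℝ) ^ (j + j))) ≤
    ε / 8 * (#V - j).choose (k - j)
  supercritical : 1 + ε / 8 ≤
    (k.choose j - 1) * p * ((1 - ε / 8) * (#V - j).choose (k - j)) * (1 - ε / 8)

variable {s : ExplorationState n}

namespace ExplorationParams

variable {I : Finset (Fin n)}

lemma cap_pos (P : ExplorationParams n k j V p ε cap y η Γ) : 0 < cap := by
  linarith [P.four_le_cap]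

lemma cast_pos (P : ExplorationParams n k j V p ε cap y η Γ) : (0 : ℝ) < n :=
  mod_cast P.pos

lemma one_le_choose (P : ExplorationParams n k j V p ε cap y η Γ) : (1 : ℝ) ≤ k.choose j :=
  mod_cast Nat.choose_pos P.lt.le

lemma mul_sum_degreeIncrement_le (P : ExplorationParams n k j V p ε cap y η Γ)
    (hs : s.Valid k j V cap y) (hI : I.Nonempty) (hIj : #I < j) {g : ℝ} (hg : 0 ≤ g)
    (hcross : crossBound k j s.discovered I ≤ 2 ^ j * ((n : ℝ) ^ k / (n : ℝ) ^ j) * g) :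
    (1 + η) * p * ∑ b ∈ s.queries, degreeIncrement k j I b ≤
      (1 + η) * p * (#V - j).choose (k - j) * (k.choose j - 2) * setDegree s.discovered I +
        2 * k.choose j * (p * ((n : ℝ) ^ k / (n : ℝ) ^ j)) * 2 ^ j * g := by
  have := P.pos_η
  have hp := P.mem_unitInterval.1
  have c_add_one_le : ((k - #I).choose (j - #I) : ℝ) + 1 ≤ k.choose j :=
    mod_cast choose_sub_sub_add_one_le hI.card_pos hIj.le P.lt
  have one_le_c := one_le_choose_sub_sub P.lt.le #I
  set c := ((k - #I).choose (j - #I) : ℝ)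
  set C := (k.choose j : ℝ)
  set M := ((#V - j).choose (k - j) : ℝ)
  set d := (setDegree s.discovered I : ℝ)
  calc (1 + η) * p * ∑ b ∈ s.queries, degreeIncrement k j I b
    _ ≤ (1 + η) * p * ((c - 1) * M * d + c * crossBound k j s.discovered I) := by
        gcongr
        exact hs.isQueryRecord.sum_degreeIncrement_le P.pos P.lt.le I
    _ ≤ (1 + η) * p * ((C - 2) * M * d + C * (2 ^ j * (n ^ k / n ^ j) * g)) := by
        refine mul_le_mul_of_nonneg_left (add_le_add ?_ ?_) (by positivity)
        · gcongr ?_ * M * d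
          linarith
        · exact (mul_le_mul_of_nonneg_left hcross (by positivity)).trans (by gcongr; linarith)
    _ ≤ (1 + η) * p * ((C - 2) * M * d) + (1 + 1) * p * (C * (2 ^ j * (n ^ k / n ^ j) * g)) := by
        rw [mul_add]
        gcongr
        exact P.η_le_one
    _ = _ := by ring

lemma setDegree_le_of_crossBound_le (P : ExplorationParams n k j V p ε cap y η Γ)
    (hs : s.Valid k j V cap y) (hI : I.Nonempty) (hIj : #I < j)
    (hexcess : s.degreeExcess k j p cap η I ≤ 0)
    (hcross : crossBound k j s.discovered I ≤
      2 ^ j * Γ ^ (#I - 1) * (cap * ((n : ℝ) ^ k / (n : ℝ) ^ (j + #I)))) :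
    (setDegree s.discovered I : ℝ) ≤ Γ ^ #I * (cap / (n : ℝ) ^ #I) := by
  have := P.cast_pos
  have := P.cap_pos
  have one_le_pow : 1 ≤ Γ ^ (#I - 1) := one_le_pow₀ P.one_le_Γ
  set C := (k.choose j : ℝ)
  set M := ((#V - j).choose (k - j) : ℝ)
  set d := (setDegree s.discovered I : ℝ)
  set Z := cap / (n : ℝ) ^ #I
  set G := Γ ^ (#I - 1) * Z
  have roots_le : (s.roots : ℝ) ≤ Z :=
    hs.roots_le.trans <| P.roots_le.trans <| div_le_div_of_nonneg_left P.cap_pos.le (by positivity)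
      (pow_le_pow_right₀ (mod_cast P.pos) (by omega))
  have cross_le : crossBound k j s.discovered I ≤ 2 ^ j * (n ^ k / n ^ j) * G :=
    hcross.trans_eq <| by simp only [G, Z]; rw [pow_add]; field_simp
  have increments_le := P.mul_sum_degreeIncrement_le hs hI hIj (by positivity) cross_le
  have Z_le : Z ≤ G := le_mul_of_one_le_left (by positivity) one_le_pow
  have excess : d - s.roots - Z - (1 + η) * p * ∑ b ∈ s.queries, degreeIncrement k j I b ≤ 0 :=
    hexcess
  have subcritical := mul_le_mul_of_nonneg_right P.subcritical_above (show 0 ≤ G by positivity)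
  have deficit_pos : 0 < 1 - (1 + η) * p * M * (C - 2) := by
    refine pos_of_mul_pos_left (lt_of_lt_of_le ?_ P.subcritical_above) (by linarith [P.one_le_Γ])
    have := P.mem_unitInterval.1
    positivity
  refine le_of_mul_le_mul_left ?_ deficit_pos
  have pow_eq : Γ ^ #I * Z = Γ * G := by
    rw [← mul_assoc, ← pow_succ', Nat.sub_add_cancel hI.card_pos]
  rw [pow_eq]
  linarith

lemma setDegree_le (P : ExplorationParams n k j V p ε cap y η Γ) (hs : s.Valid k j V cap y)
    (hcap : #s.discovered ≤ cap)
    (hexcess : ∀ I : Finset (Fin n), I.Nonempty → #I < j → s.degreeExcess k j p cap η I ≤ 0)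
    (hI : #I < j) : (setDegree s.discovered I : ℝ) ≤ Γ ^ #I * (cap / (n : ℝ) ^ #I) := by
  induction I using Finset.strongInduction with
  | H I ih =>
    rcases I.eq_empty_or_nonempty with rfl | hne
    · simpa [setDegree] using hcap
    · refine P.setDegree_le_of_crossBound_le hs hne hI (hexcess I hne hI) ?_
      exact crossBound_le P.pos hI.le P.cap_pos.le P.one_le_Γ fun I' hI' =>
        ih I' (mem_ssubsets.1 hI') ((card_lt_card (mem_ssubsets.1 hI')).trans hI)

lemma card_forbidden_le (P : ExplorationParams n k j V p ε cap y η Γ) (hs : s.Valid k j V cap y)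
    (hdegree : ∀ I : Finset (Fin n), #I < j →
      (setDegree s.discovered I : ℝ) ≤ Γ ^ #I * (cap / (n : ℝ) ^ #I))
    {J : Finset (Fin n)} (hJ : J ∈ s.discovered) :
    (#{K ∈ powersetCard k V | J ⊆ K ∧ ∃ J' ∈ s.discovered, J' ≠ J ∧ J' ⊆ K} : ℝ) ≤
      ε / 8 * (#V - j).choose (k - j) := by
  have card_eq : ∀ J ∈ s.discovered, #J = j := hs.isQueryRecord.card_eq
  set pairs : Finset (Finset (Fin n) × Finset (Fin n)) :=
    {b ∈ s.discovered ×ˢ powersetCard k V | b.1 ≠ J ∧ b.1 ⊆ b.2 ∧ J ⊆ b.2}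
  have forbidden_subset : {K ∈ powersetCard k V | J ⊆ K ∧ ∃ J' ∈ s.discovered, J' ≠ J ∧ J' ⊆ K} ⊆
      pairs.image Prod.snd := fun K hK => by
    obtain ⟨hKV, hJK, J', hJ', hne, hJ'K⟩ := mem_filter.1 hK
    exact mem_image.2
      ⟨(J', K), mem_filter.2 ⟨mem_product.2 ⟨hJ', hKV⟩, hne, hJ'K, hJK⟩, rfl⟩
  have pairs_le : (#pairs : ℝ) ≤ crossBound k j s.discovered J := by
    refine card_le_crossBound P.pos card_eq fun b hb => ?_
    obtain ⟨hmem, hne, hb, hJb⟩ := mem_filter.1 hb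
    obtain ⟨hbD, hbV⟩ := mem_product.1 hmem
    refine ⟨hbD, fun hsub => hne ?_, union_subset hb hJb, (mem_powersetCard.1 hbV).2⟩
    exact (eq_of_subset_of_card_le hsub (by rw [card_eq _ hbD, card_eq _ hJ])).symm
  calc _ ≤ (#pairs : ℝ) := mod_cast (card_le_card forbidden_subset).trans card_image_le
    _ ≤ crossBound k j s.discovered J := pairs_le
    _ ≤ 2 ^ j * Γ ^ (#J - 1) * (cap * ((n : ℝ) ^ k / (n : ℝ) ^ (j + #J))) :=
        crossBound_le P.pos (card_eq J hJ).le P.cap_pos.le P.one_le_Γ fun I hI =>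
          hdegree I ((card_lt_card (mem_ssubsets.1 hI)).trans_eq (card_eq J hJ))
    _ ≤ _ := by
        rw [card_eq J hJ]
        exact P.forbidden_le

lemma mul_card_le_card_queries (P : ExplorationParams n k j V p ε cap y η Γ)
    (hs : s.Valid k j V cap y)
    (hdegree : ∀ I : Finset (Fin n), #I < j →
      (setDegree s.discovered I : ℝ) ≤ Γ ^ #I * (cap / (n : ℝ) ^ #I))
    (hexhausted : ∀ J ∈ s.discovered, s.IsExhausted k V J) :
    (#s.discovered : ℝ) * ((1 - ε / 8) * (#V - j).choose (k - j)) ≤ #s.queries := by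
  rw [card_eq_sum_card_fiberwise (f := Prod.fst) fun b hb => (hs.isQueryRecord.mem b hb).1]
  push_cast
  rw [← nsmul_eq_mul]
  refine card_nsmul_le_sum _ _ _ fun J hJ => ?_
  set forbidden : Finset (Finset (Fin n)) :=
    {K ∈ powersetCard k V | J ⊆ K ∧ ∃ J' ∈ s.discovered, J' ≠ J ∧ J' ⊆ K}
  have forbidden_le := P.card_forbidden_le hs hdegree hJ
  have above_subset : {K ∈ powersetCard k V | J ⊆ K} ⊆
      {b ∈ s.queries | b.1 = J}.image Prod.snd ∪ forbidden := fun K hK => by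
    obtain ⟨hKV, hJK⟩ := mem_filter.1 hK
    by_cases hK : ∃ J' ∈ s.discovered, J' ≠ J ∧ J' ⊆ K
    · exact mem_union_right _ (mem_filter.2 ⟨hKV, hJK, hK⟩)
    refine mem_union_left _ ?_
    obtain ⟨b, hb, rfl⟩ := mem_image.1 ((hexhausted J hJ K hKV hJK).resolve_right hK)
    obtain ⟨hbD, hb12, -⟩ := hs.isQueryRecord.mem b hb
    refine mem_image.2 ⟨b, mem_filter.2 ⟨hb, ?_⟩, rfl⟩
    by_contra hne
    exact hK ⟨b.1, hbD, hne, hb12⟩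
  have above_le : (#{K ∈ powersetCard k V | J ⊆ K} : ℝ) ≤
      #{b ∈ s.queries | b.1 = J} + #forbidden := mod_cast
    (card_le_card above_subset).trans <| (card_union_le _ _).trans <|
      Nat.add_le_add_right card_image_le _
  rw [card_kSets_above P.lt.le (hs.isQueryRecord.subset hJ)] at above_le
  linarith

lemma roots_add_le (P : ExplorationParams n k j V p ε cap y η Γ) (hs : s.Valid k j V cap y)
    (hqueries : (#s.discovered : ℝ) * ((1 - ε / 8) * (#V - j).choose (k - j)) ≤ #s.queries)
    (hedges : (1 - ε / 8) * (p * #s.queries) - y ≤ #s.edges) :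
    s.roots + ε / 8 * #s.discovered ≤ (k.choose j - 1 : ℝ) * y := by
  have hp := P.mem_unitInterval.1
  have choose_sub_one : 0 ≤ (k.choose j : ℝ) - 1 := sub_nonneg.2 P.one_le_choose
  have : 0 ≤ 1 - ε / 8 := by linarith [P.ε_le_one]
  have card_discovered_le : (1 + ε / 8) * #s.discovered ≤
      (k.choose j - 1) * ((1 - ε / 8) * (p * #s.queries)) := by
    calc (1 + ε / 8) * #s.discovered
      _ ≤ (k.choose j - 1) * p * ((1 - ε / 8) * (#V - j).choose (k - j)) * (1 - ε / 8) *
            #s.discovered := mul_le_mul_of_nonneg_right P.supercritical (Nat.cast_nonneg _)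
      _ = (k.choose j - 1) * p * (1 - ε / 8) *
            (#s.discovered * ((1 - ε / 8) * (#V - j).choose (k - j))) := by ring
      _ ≤ (k.choose j - 1) * p * (1 - ε / 8) * #s.queries :=
          mul_le_mul_of_nonneg_left hqueries (by positivity)
      _ = _ := by ring
  linarith [mul_le_mul_of_nonneg_left hedges choose_sub_one, hs.card_edges]

end ExplorationParams

end ExplorationState

section ExplorationSteps

open Finset

variable {n k j : ℕ} {V J K : Finset (Fin n)} {p ε cap y η Γ : ℝ} {s : ExplorationState n}

namespace ExplorationState

/-- The `k`-set `K` may be queried from the discovered `j`-set `J`. -/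
structure CanQuery (s : ExplorationState n) (k : ℕ) (V J K : Finset (Fin n)) : Prop where
  mem_discovered : J ∈ s.discovered
  subset : J ⊆ K
  mem_powersetCard : K ∈ powersetCard k V
  notMem_queried : K ∉ s.queried
  eq_of_subset : ∀ J' ∈ s.discovered, J' ⊆ K → J' = J

lemma exists_canQuery_of_not_isExhausted (hJ : J ∈ s.discovered) (h : ¬ s.IsExhausted k V J) :
    ∃ K, s.CanQuery k V J K := by
  unfold IsExhausted at h
  push Not at h
  obtain ⟨K, hK, hJK, hKQ, hno⟩ := h
  exact ⟨K, hJ, hJK, hK, hKQ, fun J' hJ' hsub => not_imp_not.1 (hno J' hJ') hsub⟩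

lemma CanQuery.not_isExhausted (h : s.CanQuery k V J K) : ¬ s.IsExhausted k V J := fun hJ => by
  obtain hK | ⟨J', hJ', hne, hsub⟩ := hJ K h.mem_powersetCard h.subset
  exacts [h.notMem_queried hK, hne (h.eq_of_subset J' hJ' hsub)]

/-- The state after `K` has been queried from `J` and is not an edge. -/
def miss (s : ExplorationState n) (J K : Finset (Fin n)) : ExplorationState n :=
  { s with queries := insert (J, K) s.queries }

/-- The state after `K` has been queried from `J` and is an edge. -/
def hit (s : ExplorationState n) (j : ℕ) (J K : Finset (Fin n)) : ExplorationState n where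
  discovered := s.discovered ∪ powersetCard j K
  queries := insert (J, K) s.queries
  edges := insert K s.edges
  explored := s.explored
  roots := s.roots

/-- The state after all components met so far have been explored and that of `J` is started. -/
def newRoot (s : ExplorationState n) (J : Finset (Fin n)) : ExplorationState n where
  discovered := insert J s.discovered
  queries := s.queries
  edges := s.edges
  explored := s.discovered
  roots := s.roots + 1

lemma queried_miss : (s.miss J K).queried = insert K s.queried := image_insert _ _ _

lemma queried_hit : (s.hit j J K).queried = insert K s.queried := image_insert _ _ _

lemma IsExhausted.mono {s' : ExplorationState n} (h : s.IsExhausted k V J)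
    (hq : s.queried ⊆ s'.queried) (hd : s.discovered ⊆ s'.discovered) : s'.IsExhausted k V J :=
  fun K hK hJK => (h K hK hJK).imp (fun h => hq h) fun ⟨J', hJ', h⟩ => ⟨J', hd hJ', h⟩

lemma CanQuery.isQueryRecord_insert (h : s.CanQuery k V J K)
    (hs : IsQueryRecord k j V s.discovered s.queries) :
    IsQueryRecord k j V s.discovered (insert (J, K) s.queries) where
  subset := hs.subset
  mem := forall_mem_insert _ _ _ |>.2
    ⟨⟨h.mem_discovered, h.subset, h.mem_powersetCard⟩, hs.mem⟩
  snd_injOn := by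
    rw [coe_insert, Set.injOn_insert]
    · refine ⟨hs.snd_injOn, ?_⟩
      simpa only [queried, ← mem_coe, coe_image] using h.notMem_queried
    · exact fun hmem => h.notMem_queried (mem_image_of_mem Prod.snd hmem)

lemma Valid.miss (hs : s.Valid k j V cap y) (h : s.CanQuery k V J K) :
    (s.miss J K).Valid k j V cap y where
  __ := hs
  isQueryRecord := h.isQueryRecord_insert hs.isQueryRecord
  edges_subset := queried_miss ▸ hs.edges_subset.trans (subset_insert _ _)
  exhausted J' hJ' := (hs.exhausted J' hJ').mono (queried_miss ▸ subset_insert _ _) Subset.rfl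

lemma Valid.card_edges_hit (hs : s.Valid k j V cap y) (h : s.CanQuery k V J K) :
    s.roots + (k.choose j - 1 : ℝ) * #(insert K s.edges) ≤ #(s.discovered ∪ powersetCard j K) := by
  have inter_subset : s.discovered ∩ powersetCard j K ⊆ {J} := fun A hA =>
    mem_singleton.2 (h.eq_of_subset A (mem_inter.1 hA).1 (mem_powersetCard.1 (mem_inter.1 hA).2).1)
  have card_powerset : #(powersetCard j K) = k.choose j := by
    rw [card_powersetCard, (mem_powersetCard.1 h.mem_powersetCard).2]
  have card_union : (#s.discovered + k.choose j : ℝ) ≤ #(s.discovered ∪ powersetCard j K) + 1 := by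
    rw [← card_powerset]
    exact_mod_cast (card_union_add_card_inter _ _).symm.trans_le
      (Nat.add_le_add_left (card_le_card inter_subset) _)
  rw [card_insert_of_notMem fun hK => h.notMem_queried (hs.edges_subset hK)]
  push_cast
  linarith [hs.card_edges]

lemma Valid.connected_hit (hs : s.Valid k j V cap y) (h : s.CanQuery k V J K)
    {A : Finset (Fin n)} (hA : A ∈ (s.discovered ∪ powersetCard j K) \ s.explored) :
    JConn j (insert K s.edges) A J := by
  have hJ : J ∈ s.discovered \ s.explored :=
    mem_sdiff.2 ⟨h.mem_discovered, fun hJ => h.not_isExhausted (hs.exhausted J hJ)⟩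
  obtain ⟨hA, hAex⟩ := mem_sdiff.1 hA
  obtain hA | hA := mem_union.1 hA
  · obtain rfl | hconn := hs.connected A (mem_sdiff.2 ⟨hA, hAex⟩) J hJ
    · exact .of_edge (mem_insert_self _ _) h.subset h.subset
    · exact hconn.mono (subset_insert _ _)
  · exact .of_edge (mem_insert_self _ _) (mem_powersetCard.1 hA).1 h.subset

lemma Valid.hit (hs : s.Valid k j V cap y) (h : s.CanQuery k V J K) :
    (s.hit j J K).Valid k j V cap y where
  isQueryRecord :=
    { h.isQueryRecord_insert hs.isQueryRecord with
      subset := union_subset hs.isQueryRecord.subset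
        (powersetCard_mono (mem_powersetCard.1 h.mem_powersetCard).1)
      mem := fun b hb => (((h.isQueryRecord_insert hs.isQueryRecord).mem b hb).imp_left
        fun hb => mem_union_left _ hb) }
  edges_subset := queried_hit ▸ insert_subset_insert _ hs.edges_subset
  card_edges := hs.card_edges_hit h
  explored_subset := hs.explored_subset.trans subset_union_left
  two_mul_card_explored := hs.two_mul_card_explored
  roots_le := hs.roots_le
  connected _ hA _ hA' := .inr <| (hs.connected_hit h hA).trans
    (hs.isQueryRecord.card_eq J h.mem_discovered) (hs.connected_hit h hA').symm
  exhausted J' hJ' := (hs.exhausted J' hJ').mono (queried_hit ▸ subset_insert _ _) subset_union_left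

lemma Valid.newRoot (hs : s.Valid k j V cap y) (hJ : J ∈ powersetCard j V \ s.discovered)
    (hexhausted : ∀ J ∈ s.discovered, s.IsExhausted k V J)
    (hroots : s.roots ≤ (k.choose j - 1 : ℝ) * y) (hcard : 2 * (#s.discovered : ℝ) ≤ cap) :
    (s.newRoot J).Valid k j V cap y where
  isQueryRecord :=
    { hs.isQueryRecord with
      subset := insert_subset (mem_sdiff.1 hJ).1 hs.isQueryRecord.subset
      mem := fun b hb => (hs.isQueryRecord.mem b hb).imp_left fun hb => mem_insert_of_mem hb }
  edges_subset := hs.edges_subset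
  card_edges := by
    simp only [ExplorationState.newRoot, card_insert_of_notMem (mem_sdiff.1 hJ).2]
    push_cast
    linarith [hs.card_edges]
  explored_subset := subset_insert _ _
  two_mul_card_explored := hcard
  roots_le := by
    simp only [ExplorationState.newRoot]
    push_cast
    linarith
  connected A hA A' hA' := by
    have eq_root : ∀ A ∈ insert J s.discovered \ s.discovered, A = J := fun A hA =>
      (mem_insert.1 (mem_sdiff.1 hA).1).resolve_right (mem_sdiff.1 hA).2
    exact .inl ((eq_root A hA).trans (eq_root A' hA').symm)
  exhausted A hA := (hexhausted A hA).mono Subset.rfl (subset_insert _ _)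

lemma Valid.initial (hcap : 0 ≤ cap) (hy : 0 ≤ y) (hjk : j ≤ k) :
    (⟨∅, ∅, ∅, ∅, 0⟩ : ExplorationState n).Valid k j V cap y where
  isQueryRecord := ⟨empty_subset _, by simp, by simp⟩
  edges_subset := empty_subset _
  card_edges := by simp
  explored_subset := empty_subset _
  two_mul_card_explored := by simpa using hcap
  roots_le := by
    have : (1 : ℝ) ≤ k.choose j := mod_cast Nat.choose_pos hjk
    have : 0 ≤ (k.choose j - 1) * y := mul_nonneg (by linarith) hy
    push_cast
    linarith
  connected := by simp
  exhausted := by simp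

end ExplorationState

end ExplorationSteps

section ExplorationPotential

open Finset Real

variable {n k j : ℕ} {V I J K : Finset (Fin n)} {p ε cap y η Γ : ℝ} {s : ExplorationState n}

/-- The potential that is large when `f` edges are far fewer than the expected number `p * q` of
edges among `q` queries. -/
def edgePotential (p ε y : ℝ) (f q : ℕ) : ℝ :=
  exp (-(ε / 8) * (y + f) + (1 - exp (-(ε / 8))) * (p * q))

namespace ExplorationState

/-- The potential that is large when the degree of `I` is unusually large. -/
def degreePotential (s : ExplorationState n) (k j : ℕ) (p cap η : ℝ) (I : Finset (Fin n)) : ℝ :=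
  exp (η / k.choose j * s.degreeExcess k j p cap η I)

/-- The potential of a state: it does not increase in expectation during the exploration, and it is
at least `1` when too few edges were found or some degree is too large. -/
def potential (s : ExplorationState n) (k j : ℕ) (p ε cap y η : ℝ) : ℝ :=
  edgePotential p ε y #s.edges #s.queries +
    ∑ I : Finset (Fin n) with I.Nonempty ∧ #I < j, s.degreePotential k j p cap η I

end ExplorationState

lemma edgePotential_step_le (f q : ℕ) :
    p * edgePotential p ε y (f + 1) (q + 1) + (1 - p) * edgePotential p ε y f (q + 1) ≤
      edgePotential p ε y f q := by
  unfold edgePotential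
  set a := 1 - exp (-(ε / 8)) with ha
  set E := exp (-(ε / 8) * (y + f) + a * (p * q))
  have hit_eq : exp (-(ε / 8) * (y + (f + 1 : ℕ)) + a * (p * (q + 1 : ℕ))) =
      E * (exp (a * p) * (1 - a)) := by
    rw [ha, sub_sub_cancel, ← ha, ← exp_add, ← exp_add]
    push_cast
    ring_nf
  have miss_eq : exp (-(ε / 8) * (y + f) + a * (p * (q + 1 : ℕ))) = E * exp (a * p) := by
    rw [← exp_add]
    push_cast
    ring_nf
  have one_sub_mul_exp_le : (1 - a * p) * exp (a * p) ≤ 1 := by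
    calc (1 - a * p) * exp (a * p) ≤ exp (-(a * p)) * exp (a * p) :=
          mul_le_mul_of_nonneg_right (one_sub_le_exp_neg _) (exp_pos _).le
      _ = 1 := by rw [← exp_add, neg_add_cancel, exp_zero]
  rw [hit_eq, miss_eq]
  calc _ = E * ((1 - a * p) * exp (a * p)) := by ring
    _ ≤ E := mul_le_of_le_one_right (exp_pos _).le one_sub_mul_exp_le

lemma mul_exp_add_one_sub_le {u : ℝ} (hp : 0 ≤ p) (hη : η ≤ 1) (hu : 0 ≤ u) (huη : u ≤ η) :
    p * exp u + (1 - p) ≤ exp ((1 + η) * p * u) := by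
  have exp_sub_one_le : exp u - 1 ≤ (1 + η) * u := by
    have := exp_sub_one_le_add_sq (t := u) (by rw [abs_of_nonneg hu]; linarith)
    nlinarith
  calc p * exp u + (1 - p) = p * (exp u - 1) + 1 := by ring
    _ ≤ p * ((1 + η) * u) + 1 := by gcongr
    _ = (1 + η) * p * u + 1 := by ring
    _ ≤ _ := add_one_le_exp _

lemma edges_ge_of_edgePotential_lt_one {f q : ℕ} (hp : 0 ≤ p) (hε : 0 < ε) (hε1 : ε ≤ 1)
    (h : edgePotential p ε y f q < 1) : (1 - ε / 8) * (p * q) - y ≤ f := by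
  have exp_neg_le : ε / 8 * (1 - ε / 8) ≤ 1 - exp (-(ε / 8)) := by
    have := exp_sub_one_le_add_sq (t := -(ε / 8)) (abs_le.2 ⟨by linarith, by linarith⟩)
    linarith
  have exponent_neg := exp_lt_one_iff.1 h
  have := mul_le_mul_of_nonneg_right exp_neg_le (show 0 ≤ p * q by positivity)
  refine le_of_mul_le_mul_left ?_ (show 0 < ε / 8 by positivity)
  linarith

namespace ExplorationState

lemma degreeExcess_hit_le (hI : #I ≤ j) (hcard : #J = j)
    (h : s.CanQuery k V J K) :
    (s.hit j J K).degreeExcess k j p cap η I ≤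
      (s.miss J K).degreeExcess k j p cap η I + degreeIncrement k j I (J, K) := by
  have := setDegree_union_powersetCard_le (k := k) h.mem_discovered h.subset hcard
    (mem_powersetCard.1 h.mem_powersetCard).2 hI
  simp only [degreeExcess, hit, miss]
  linarith

lemma degreeExcess_miss (h : s.CanQuery k V J K) :
    (s.miss J K).degreeExcess k j p cap η I =
      s.degreeExcess k j p cap η I - (1 + η) * p * degreeIncrement k j I (J, K) := by
  have notMem : (J, K) ∉ s.queries := fun hmem => h.notMem_queried (mem_image_of_mem Prod.snd hmem)
  simp only [degreeExcess, miss, sum_insert notMem]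
  ring

lemma degreeExcess_newRoot_le (J : Finset (Fin n)) :
    (s.newRoot J).degreeExcess k j p cap η I ≤ s.degreeExcess k j p cap η I := by
  have setDegree_insert :
      (setDegree (insert J s.discovered) I : ℝ) ≤ setDegree s.discovered I + 1 := by
    unfold setDegree
    rw [filter_insert]
    split_ifs
    · exact_mod_cast card_insert_le _ _
    · linarith
  simp only [degreeExcess, newRoot]
  push_cast
  linarith

lemma degreePotential_step_le (hjk : j < k) (hp : 0 ≤ p) (hη : 0 < η) (hη1 : η ≤ 1)
    (hI : I.Nonempty) (hIj : #I < j) (hcard : #J = j) (h : s.CanQuery k V J K) :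
    p * (s.hit j J K).degreePotential k j p cap η I +
      (1 - p) * (s.miss J K).degreePotential k j p cap η I ≤ s.degreePotential k j p cap η I := by
  have choose_pos : (0 : ℝ) < k.choose j := mod_cast Nat.choose_pos hjk.le
  have hit_le := degreeExcess_hit_le (p := p) (cap := cap) (η := η) hIj.le hcard h
  rw [degreeExcess_miss h] at hit_le
  unfold degreePotential
  rw [degreeExcess_miss h]
  set w := degreeIncrement k j I (J, K)
  set A := s.degreeExcess k j p cap η I
  have w_nonneg : 0 ≤ w := degreeIncrement_nonneg hjk.le
  set u := η / k.choose j * w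
  have u_le : u ≤ η := by
    calc u ≤ η / k.choose j * k.choose j :=
          mul_le_mul_of_nonneg_left (degreeIncrement_le hI hIj.le hjk) (by positivity)
      _ = η := div_mul_cancel₀ _ choose_pos.ne'
  set B := η / k.choose j * A - (1 + η) * p * u with hB
  calc p * exp (η / k.choose j * (s.hit j J K).degreeExcess k j p cap η I) +
        (1 - p) * exp (η / k.choose j * (A - (1 + η) * p * w))
    _ ≤ p * exp (η / k.choose j * (A - (1 + η) * p * w + w)) +
        (1 - p) * exp (η / k.choose j * (A - (1 + η) * p * w)) := by gcongr
    _ = p * exp (B + u) + (1 - p) * exp B := by simp only [B, u]; ring_nf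
    _ = exp B * (p * exp u + (1 - p)) := by rw [exp_add]; ring
    _ ≤ exp B * exp ((1 + η) * p * u) := by
        gcongr
        exact mul_exp_add_one_sub_le hp hη1 (by positivity) u_le
    _ = exp (η / k.choose j * A) := by rw [← exp_add, hB, sub_add_cancel]

lemma degreePotential_nonneg : 0 ≤ s.degreePotential k j p cap η I := (exp_pos _).le

lemma potential_nonneg : 0 ≤ s.potential k j p ε cap y η :=
  add_nonneg (exp_pos _).le (sum_nonneg fun _ _ => degreePotential_nonneg)

lemma edgePotential_lt_one (h : s.potential k j p ε cap y η < 1) :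
    edgePotential p ε y #s.edges #s.queries < 1 :=
  (le_add_of_nonneg_right (sum_nonneg fun _ _ => degreePotential_nonneg)).trans_lt h

lemma degreeExcess_nonpos (hjk : j ≤ k) (hη : 0 < η) (h : s.potential k j p ε cap y η < 1)
    (hI : I.Nonempty) (hIj : #I < j) : s.degreeExcess k j p cap η I ≤ 0 := by
  have : (0 : ℝ) < k.choose j := mod_cast Nat.choose_pos hjk
  have degreePotential_lt : s.degreePotential k j p cap η I < 1 :=
    calc s.degreePotential k j p cap η I
      _ ≤ ∑ I : Finset (Fin n) with I.Nonempty ∧ #I < j, s.degreePotential k j p cap η I :=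
          single_le_sum (f := s.degreePotential k j p cap η)
            (fun _ _ => degreePotential_nonneg) (mem_filter_univ I |>.2 ⟨hI, hIj⟩)
      _ ≤ s.potential k j p ε cap y η := le_add_of_nonneg_left (exp_pos _).le
      _ < 1 := h
  exact (neg_of_mul_neg_right (exp_lt_one_iff.1 degreePotential_lt) (by positivity)).le

lemma potential_newRoot_le (hη : 0 ≤ η) (J : Finset (Fin n)) :
    (s.newRoot J).potential k j p ε cap y η ≤ s.potential k j p ε cap y η :=
  add_le_add le_rfl <| sum_le_sum fun _ _ => exp_le_exp.2 <|
    mul_le_mul_of_nonneg_left (degreeExcess_newRoot_le J) (by positivity)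

lemma potential_step_le (P : ExplorationParams n k j V p ε cap y η Γ) (hs : s.Valid k j V cap y)
    (h : s.CanQuery k V J K) :
    p * (s.hit j J K).potential k j p ε cap y η + (1 - p) * (s.miss J K).potential k j p ε cap y η ≤
      s.potential k j p ε cap y η := by
  have new_query : (J, K) ∉ s.queries := fun hmem =>
    h.notMem_queried (mem_image_of_mem Prod.snd hmem)
  have new_edge : K ∉ s.edges := fun hK => h.notMem_queried (hs.edges_subset hK)
  have degree_steps := sum_le_sum fun (I : Finset (Fin n))
      (hI : I ∈ ({I | I.Nonempty ∧ #I < j} : Finset (Finset (Fin n)))) =>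
    degreePotential_step_le (cap := cap) P.lt P.mem_unitInterval.1 P.pos_η P.η_le_one
      (mem_filter.1 hI).2.1 (mem_filter.1 hI).2.2
      (hs.isQueryRecord.card_eq J h.mem_discovered) h
  rw [sum_add_distrib, ← mul_sum, ← mul_sum] at degree_steps
  have edge_step := edgePotential_step_le (p := p) (ε := ε) (y := y) #s.edges #s.queries
  have card_edges : #(s.hit j J K).edges = #s.edges + 1 := card_insert_of_notMem new_edge
  have card_queries : #(insert (J, K) s.queries) = #s.queries + 1 := card_insert_of_notMem new_query
  unfold potential
  rw [card_edges, show #(s.hit j J K).queries = _ from card_queries,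
    show #(s.miss J K).queries = _ from card_queries, show (s.miss J K).edges = s.edges from rfl]
  linarith

end ExplorationState

end ExplorationPotential

/-! ### The two phases -/

section FirstPhase

open Finset Real

variable {n k j : ℕ} {V J K : Finset (Fin n)} {p ε cap y η Γ : ℝ} {s : ExplorationState n}

/-- The outcome of a successful first phase: many `j`-sets lie in a common `j`-component. -/
def HasLargeConnectedFamily (j : ℕ) (cap : ℝ) (H : Finset (Finset (Fin n))) : Prop :=
  ∃ D, cap / 2 ≤ (#D : ℝ) ∧ PairwiseJConn j H D

namespace ExplorationState

lemma randProb_query (p : ℝ) (Q : Finset (Finset (Fin n)) → Prop) (h : s.CanQuery k V J K) :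
    randProb (powersetCard k V \ s.queried) (fun _ => p) (fun H => Q (s.edges ∪ H)) =
      p * randProb (powersetCard k V \ (s.hit j J K).queried) (fun _ => p)
          (fun H => Q ((s.hit j J K).edges ∪ H)) +
        (1 - p) * randProb (powersetCard k V \ (s.miss J K).queried) (fun _ => p)
          (fun H => Q ((s.miss J K).edges ∪ H)) := by
  have insert_sdiff : powersetCard k V \ s.queried =
      insert K (powersetCard k V \ insert K s.queried) := by
    rw [sdiff_insert, insert_erase (mem_sdiff.2 ⟨h.mem_powersetCard, h.notMem_queried⟩)]
  rw [queried_hit, queried_miss, insert_sdiff,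
    randProb_insert fun hK => (mem_sdiff.1 hK).2 (mem_insert_self _ _)]
  simp only [hit, miss, union_insert, insert_union]

/-- The number of `k`-sets not yet queried plus the number of `j`-sets not yet discovered: it
decreases in every step of the exploration. -/
def remaining (s : ExplorationState n) (k j : ℕ) (V : Finset (Fin n)) : ℕ :=
  #(powersetCard k V \ s.queried) + #(powersetCard j V \ s.discovered)

lemma remaining_newRoot_lt (hJ : J ∈ powersetCard j V \ s.discovered) :
    (s.newRoot J).remaining k j V < s.remaining k j V :=
  Nat.add_lt_add_left (card_lt_card <| sdiff_insert (powersetCard j V) s.discovered J ▸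
    erase_ssubset hJ) _

lemma sdiff_queried_ssubset (h : s.CanQuery k V J K) :
    powersetCard k V \ insert K s.queried ⊂ powersetCard k V \ s.queried := by
  rw [sdiff_insert]
  exact erase_ssubset (mem_sdiff.2 ⟨h.mem_powersetCard, h.notMem_queried⟩)

lemma remaining_miss_lt (h : s.CanQuery k V J K) :
    (s.miss J K).remaining k j V < s.remaining k j V := by
  unfold remaining
  rw [queried_miss]
  exact Nat.add_lt_add_right (card_lt_card (sdiff_queried_ssubset h)) _

lemma remaining_hit_lt (h : s.CanQuery k V J K) :
    (s.hit j J K).remaining k j V < s.remaining k j V := by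
  unfold remaining
  rw [queried_hit]
  exact Nat.add_lt_add_of_lt_of_le (card_lt_card (sdiff_queried_ssubset h))
    (card_le_card (sdiff_subset_sdiff Subset.rfl subset_union_left))

end ExplorationState

lemma card_filter_nonempty_card_lt_le (hn : 0 < n) (j : ℕ) :
    (#{I : Finset (Fin n) | I.Nonempty ∧ #I < j} : ℝ) ≤ j * (n : ℝ) ^ j := by
  have subset_biUnion : ({I | I.Nonempty ∧ #I < j} : Finset (Finset (Fin n))) ⊆
      (range j).biUnion (kSets n) := fun I hI =>
    mem_biUnion.2 ⟨#I, mem_range.2 (mem_filter.1 hI).2.2, mem_kSets.2 rfl⟩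
  calc (#{I : Finset (Fin n) | I.Nonempty ∧ #I < j} : ℝ)
    _ ≤ ∑ i ∈ range j, (#(kSets n i) : ℝ) :=
        mod_cast (card_le_card subset_biUnion).trans card_biUnion_le
    _ ≤ ∑ _i ∈ range j, (n : ℝ) ^ j :=
        sum_le_sum fun _ hi => card_kSets_le_pow hn (mem_range.1 hi).le
    _ = j * (n : ℝ) ^ j := by rw [sum_const, card_range, nsmul_eq_mul]

namespace ExplorationParams

lemma hasLargeConnectedFamily (P : ExplorationParams n k j V p ε cap y η Γ)
    (hs : s.Valid k j V cap y) (hcap : cap ≤ #s.discovered) :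
    HasLargeConnectedFamily j cap s.edges := by
  have card_active : (#(s.discovered \ s.explored) : ℝ) + #s.explored = #s.discovered :=
    mod_cast card_sdiff_add_card_eq_card hs.explored_subset
  have half_le : cap / 2 ≤ #(s.discovered \ s.explored) := by linarith [hs.two_mul_card_explored]
  have one_lt_card : 1 < #(s.discovered \ s.explored) := by
    have : (1 : ℝ) < #(s.discovered \ s.explored) := by linarith [P.four_le_cap]
    exact_mod_cast this
  have card_eq : ∀ J ∈ s.discovered \ s.explored, #J = j := fun J hJ =>
    hs.isQueryRecord.card_eq J (mem_sdiff.1 hJ).1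
  refine ⟨s.discovered \ s.explored, half_le, card_eq, fun J hJ J' hJ' => ?_⟩
  obtain rfl | hconn := hs.connected J hJ J' hJ'
  · obtain ⟨A, hA, hne⟩ := exists_mem_ne one_lt_card J
    have hconn := (hs.connected J hJ A hA).resolve_left hne.symm
    exact hconn.trans (card_eq A hA) hconn.symm
  · exact hconn

lemma exists_valid_newRoot (P : ExplorationParams n k j V p ε cap y η Γ)
    (hs : s.Valid k j V cap y) (hpotential : s.potential k j p ε cap y η < 1)
    (hcap : #s.discovered < cap) (hexhausted : ∀ J ∈ s.discovered, s.IsExhausted k V J) :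
    ∃ J ∈ powersetCard j V \ s.discovered, (s.newRoot J).Valid k j V cap y := by
  have hdegree : ∀ I : Finset (Fin n), #I < j →
      (setDegree s.discovered I : ℝ) ≤ Γ ^ #I * (cap / (n : ℝ) ^ #I) := fun _ =>
    P.setDegree_le hs hcap.le fun _ => s.degreeExcess_nonpos P.lt.le P.pos_η hpotential
  have roots_add_le := P.roots_add_le hs (P.mul_card_le_card_queries hs hdegree hexhausted)
    (edges_ge_of_edgePotential_lt_one P.mem_unitInterval.1 P.pos_ε P.ε_le_one
      (s.edgePotential_lt_one hpotential))
  have mul_card_nonneg : 0 ≤ ε / 8 * #s.discovered := by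
    have := P.pos_ε
    positivity
  have half_full : 2 * (#s.discovered : ℝ) ≤ cap := by
    have := P.deficit_le
    refine le_of_mul_le_mul_left (a := ε) ?_ P.pos_ε
    linarith [Nat.cast_nonneg (α := ℝ) s.roots]
  obtain ⟨J, hJV, hJ⟩ : ∃ J ∈ powersetCard j V, J ∉ s.discovered :=
    exists_mem_notMem_of_card_lt_card (by exact_mod_cast hcap.trans_le P.cap_le)
  have hJ := mem_sdiff.2 ⟨hJV, hJ⟩
  exact ⟨J, hJ, hs.newRoot hJ hexhausted (by linarith) half_full⟩

theorem randProb_not_hasLargeConnectedFamily_le_potential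
    (P : ExplorationParams n k j V p ε cap y η Γ) (hs : s.Valid k j V cap y) :
    randProb (powersetCard k V \ s.queried) (fun _ => p)
        (fun H => ¬ HasLargeConnectedFamily j cap (s.edges ∪ H)) ≤
      s.potential k j p ε cap y η := by
  have hπ : ∀ e ∈ powersetCard k V \ s.queried, p ∈ unitInterval := fun _ _ => P.mem_unitInterval
  induction hN : s.remaining k j V using Nat.strong_induction_on generalizing s with
  | h N ih =>
    subst hN
    obtain hpotential | hpotential := le_or_gt 1 (s.potential k j p ε cap y η)
    · exact (randProb_le_one hπ _).trans hpotential
    obtain hcap | hcap := le_or_gt cap #s.discovered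
    · obtain ⟨D, hD, hconn⟩ := P.hasLargeConnectedFamily hs hcap
      have succeeded : ∀ H, HasLargeConnectedFamily j cap (s.edges ∪ H) := fun H =>
        ⟨D, hD, hconn.mono subset_union_left⟩
      simpa [succeeded, randProb, randExp] using s.potential_nonneg
    by_cases hexhausted : ∀ J ∈ s.discovered, s.IsExhausted k V J
    · obtain ⟨J, hJ, hvalid⟩ := P.exists_valid_newRoot hs hpotential hcap hexhausted
      exact (ih _ (ExplorationState.remaining_newRoot_lt hJ) hvalid hπ rfl).trans
        (s.potential_newRoot_le P.pos_η.le J)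
    · push Not at hexhausted
      obtain ⟨J, hJ, hactive⟩ := hexhausted
      obtain ⟨K, h⟩ := ExplorationState.exists_canQuery_of_not_isExhausted hJ hactive
      rw [ExplorationState.randProb_query (j := j) p (fun H => ¬ HasLargeConnectedFamily j cap H) h]
      refine le_trans (add_le_add ?_ ?_) (s.potential_step_le P hs h)
      · exact mul_le_mul_of_nonneg_left (ih _ (ExplorationState.remaining_hit_lt h) (hs.hit h)
          (fun _ _ => P.mem_unitInterval) rfl) P.mem_unitInterval.1
      · exact mul_le_mul_of_nonneg_left (ih _ (ExplorationState.remaining_miss_lt h) (hs.miss h)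
          (fun _ _ => P.mem_unitInterval) rfl) (by linarith [P.mem_unitInterval.2])

theorem randProb_not_hasLargeConnectedFamily_le (P : ExplorationParams n k j V p ε cap y η Γ) :
    randProb (powersetCard k V) (fun _ => p) (fun H => ¬ HasLargeConnectedFamily j cap H) ≤
      exp (-(ε * y / 8)) +
        j * (n : ℝ) ^ j * exp (-(η / k.choose j * (cap / (n : ℝ) ^ (j - 1)))) := by
  set s₀ : ExplorationState n := ⟨∅, ∅, ∅, ∅, 0⟩
  have le_potential := P.randProb_not_hasLargeConnectedFamily_le_potential
    (s := s₀) (.initial P.cap_pos.le P.y_nonneg P.lt.le)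
  have queried_eq : s₀.queried = ∅ := image_empty _
  simp only [queried_eq, sdiff_empty, show s₀.edges = ∅ from rfl, empty_union] at le_potential
  have edgePotential_eq : edgePotential p ε y #s₀.edges #s₀.queries = exp (-(ε * y / 8)) := by
    simp only [edgePotential, s₀, card_empty, Nat.cast_zero]
    ring_nf
  have degreePotential_le : ∀ I ∈ ({I | I.Nonempty ∧ #I < j} : Finset (Finset (Fin n))),
      s₀.degreePotential k j p cap η I ≤ exp (-(η / k.choose j * (cap / (n : ℝ) ^ (j - 1)))) := by
    intro I hI
    have := P.cap_pos
    have := P.pos_η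
    have : cap / (n : ℝ) ^ (j - 1) ≤ cap / (n : ℝ) ^ #I := by
      have := P.cast_pos
      have := (mem_filter.1 hI).2.2
      gcongr
      exacts [mod_cast P.pos, by omega]
    have := mul_le_mul_of_nonneg_left this (show 0 ≤ η / k.choose j by positivity)
    refine exp_le_exp.2 ?_
    simp only [ExplorationState.degreeExcess, setDegree, filter_empty, card_empty, Nat.cast_zero,
      sub_self, zero_sub, sum_empty, mul_zero, sub_zero, mul_neg, neg_le_neg_iff, s₀]
    linarith
  refine le_potential.trans (add_le_add edgePotential_eq.le ?_)
  refine (sum_le_card_nsmul _ _ _ degreePotential_le).trans ?_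
  rw [nsmul_eq_mul]
  exact mul_le_mul_of_nonneg_right (card_filter_nonempty_card_lt_le P.pos j) (exp_pos _).le

end ExplorationParams

end FirstPhase

section TwoPhases

open Finset

variable {n k j : ℕ} {p cap m δ : ℝ}

/-- Some `j`-component contains a smooth subset: a family of `j`-sets in which every
`(j - 1)`-set has degree `(1 ± δ) * m`. -/
def HasSmoothComponent (j : ℕ) (m δ : ℝ) (H : Finset (Finset (Fin n))) : Prop :=
  ∃ Comp S : Finset (Finset (Fin n)), IsJComponent n j H Comp ∧ S ⊆ Comp ∧
    ∀ L : Finset (Fin n), L.card = j - 1 → |(setDegree S L : ℝ) - m| ≤ δ * m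

lemma ExtendsSmoothly.hasSmoothComponent {D H H' : Finset (Finset (Fin n))}
    (h : ExtendsSmoothly j m δ D H') (hconn : PairwiseJConn j H D) (hD : D.Nonempty) :
    HasSmoothComponent j m δ (H ∪ H') := by
  obtain ⟨N, ⟨S, hSN, hsmooth⟩, hDN, hN⟩ := h
  obtain ⟨Comp, hComp, hNComp⟩ := (hN H hconn).exists_component (hD.mono hDN)
  exact ⟨Comp, S, hComp, hSN.trans hNComp, hsmooth⟩

lemma kSets_eq_union_edgesMeeting (n k : ℕ) (R : Finset (Fin n)) :
    kSets n k = powersetCard k (univ \ R) ∪ edgesMeeting n k R := by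
  ext K
  rw [mem_union, mem_powersetCard, edgesMeeting, mem_filter, mem_kSets, subset_sdiff,
    and_iff_right (subset_univ K), ← not_disjoint_iff_nonempty_inter]
  tauto

lemma disjoint_powersetCard_edgesMeeting (n k : ℕ) (R : Finset (Fin n)) :
    Disjoint (powersetCard k (univ \ R)) (edgesMeeting n k R) :=
  disjoint_left.2 fun _ hK hmeets => not_disjoint_iff_nonempty_inter.2 (mem_filter.1 hmeets).2
    (subset_sdiff.1 (mem_powersetCard.1 hK).1).2

theorem one_sub_le_binomProb_hasSmoothComponent (hp : p ∈ unitInterval) (hcap : 0 < cap)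
    (R : Finset (Fin n)) {a b : ℝ} (hb : 0 ≤ b)
    (hfirst : randProb (powersetCard k (univ \ R)) (fun _ => p)
      (fun H => ¬ HasLargeConnectedFamily j cap H) ≤ a)
    (hsecond : ∀ D : Finset (Finset (Fin n)), D ⊆ kSets n j → cap / 2 ≤ (#D : ℝ) →
      randProb (edgesMeeting n k R) (fun _ => p) (fun H => ¬ ExtendsSmoothly j m δ D H) ≤ b) :
    1 - (a + b) ≤ binomProb n k p (HasSmoothComponent j m δ) := by
  have weights_mem : ∀ U : Finset (Finset (Fin n)), ∀ e ∈ U, (fun _ => p) e ∈ unitInterval :=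
    fun _ _ _ => hp
  have conditional_le : ∀ H, HasLargeConnectedFamily j cap H →
      randProb (edgesMeeting n k R) (fun _ => p) (fun H' => ¬ HasSmoothComponent j m δ (H ∪ H'))
        ≤ b := by
    rintro H ⟨D, hcard, hconn⟩
    have hD : D.Nonempty := card_pos.1 <| by
      have : (0 : ℝ) < #D := by linarith
      exact_mod_cast this
    refine (randProb_mono (weights_mem _) fun H' _ => mt fun h => ?_).trans
      (hsecond D (fun J hJ => mem_kSets.2 (hconn.1 J hJ)) hcard)
    exact h.hasSmoothComponent hconn hD
  have failure_le : randProb (kSets n k) (fun _ => p) (fun H => ¬ HasSmoothComponent j m δ H)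
      ≤ a + b := by
    rw [kSets_eq_union_edgesMeeting n k R,
      randProb_union (disjoint_powersetCard_edgesMeeting n k R)]
    exact (randExp_le_randProb_not_add (weights_mem _) hb
      (fun H => randProb_le_one (weights_mem _) _) fun H _ => conditional_le H).trans
      (add_le_add_left hfirst b)
  rw [randProb_not] at failure_le
  rw [binomProb_eq_randProb]
  linarith

end TwoPhases

/-! ### Constants and asymptotics -/

section BinomialEstimates

variable {n k r : ℕ}

lemma le_choose {j : ℕ} (hj : 1 ≤ j) (hjk : j < k) : k ≤ k.choose j := by
  induction k generalizing j with
  | zero => omega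
  | succ k ih =>
    obtain ⟨i, rfl⟩ := Nat.exists_eq_add_of_le' hj
    obtain rfl | hlt := eq_or_ne (i + 1) k
    · simp
    · have : 0 < k.choose i := Nat.choose_pos (by omega)
      have := ih hj (by omega)
      rw [Nat.choose_succ_succ']
      omega

lemma pow_le_pow_self_sq_mul_choose (hr : r ≤ n) : n ^ r ≤ (r ^ r) ^ 2 * n.choose r := by
  obtain rfl | hr0 := r.eq_zero_or_pos
  · simp
  have le_mul : n ≤ r * (n + 1 - r) := by
    obtain ⟨a, rfl⟩ := Nat.exists_eq_add_of_le hr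
    obtain ⟨b, rfl⟩ := Nat.exists_eq_add_of_le' hr0
    rw [show b + 1 + a + 1 - (b + 1) = a + 1 by omega]
    nlinarith [Nat.zero_le (a * b)]
  calc n ^ r ≤ (r * (n + 1 - r)) ^ r := Nat.pow_le_pow_left le_mul r
    _ = r ^ r * (n + 1 - r) ^ r := mul_pow _ _ _
    _ ≤ r ^ r * (r.factorial * n.choose r) := by
        rw [← Nat.descFactorial_eq_factorial_mul_choose]
        exact Nat.mul_le_mul_left _ (Nat.pow_sub_le_descFactorial n r)
    _ ≤ r ^ r * (r ^ r * n.choose r) :=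
        Nat.mul_le_mul_left _ (Nat.mul_le_mul_right _ (Nat.factorial_le_pow r))
    _ = (r ^ r) ^ 2 * n.choose r := by ring

lemma choose_succ_le_choose_sub_add (n d s : ℕ) :
    (n + 1).choose (d + 1) ≤ (n + 1 - s).choose (d + 1) + s * n.choose d := by
  induction s with
  | zero => simp
  | succ s ih =>
    have step : (n + 1 - s).choose (d + 1) ≤ (n + 1 - (s + 1)).choose (d + 1) + n.choose d := by
      rcases ha : n + 1 - s with _ | a
      · simp
      · have := Nat.choose_le_choose d (show a ≤ n by omega)
        rw [show n + 1 - (s + 1) = a by omega, Nat.choose_succ_succ']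
        omega
    rw [add_mul, one_mul]
    omega

lemma choose_mul_one_sub_le (n d s : ℕ) :
    (n.choose d : ℝ) * (1 - s * d / n) ≤ (n - s).choose d := by
  obtain _ | d := d
  · simp
  obtain _ | n := n
  · simp
  have absorb : ((n + 1 : ℕ) : ℝ) * n.choose d = (n + 1).choose (d + 1) * (d + 1 : ℕ) :=
    mod_cast Nat.add_one_mul_choose_eq n d
  have le_add : ((n + 1).choose (d + 1) : ℝ) ≤ (n + 1 - s).choose (d + 1) + s * n.choose d :=
    mod_cast choose_succ_le_choose_sub_add n d s
  calc ((n + 1).choose (d + 1) : ℝ) * (1 - s * (d + 1 : ℕ) / (n + 1 : ℕ))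
    _ = (n + 1).choose (d + 1) -
          s * ((n + 1).choose (d + 1) * (d + 1 : ℕ)) / (n + 1 : ℕ) := by ring
    _ = (n + 1).choose (d + 1) - s * n.choose d := by rw [← absorb]; field_simp
    _ ≤ (n + 1 - s).choose (d + 1) := by linarith

lemma exists_pow_one_sub_eq {p : ℝ} (hp : p ∈ unitInterval) {N : ℕ} (hN : N ≠ 0) :
    ∃ q ∈ unitInterval, q ≤ p ∧ p ≤ N * q ∧ (1 - q) ^ N = 1 - p := by
  obtain ⟨hp0, hp1⟩ := hp
  set a := (1 - p) ^ ((N : ℝ)⁻¹)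
  have pow_a : a ^ N = 1 - p := Real.rpow_inv_natCast_pow (by linarith) hN
  have a_nonneg : 0 ≤ a := Real.rpow_nonneg (by linarith) _
  have a_le_one : a ≤ 1 := Real.rpow_le_one (by linarith) (by linarith) (by positivity)
  have pow_le := pow_le_of_le_one a_nonneg a_le_one hN
  have bernoulli := one_add_mul_le_pow (a := a - 1) (by linarith) N
  rw [add_sub_cancel, pow_a] at bernoulli
  refine ⟨1 - a, ⟨by linarith, by linarith⟩, by linarith, by linarith, ?_⟩
  rw [sub_sub_cancel, pow_a]

end BinomialEstimates

section Constants

/-- A bound for the ratios `n ^ r / C(n, r)` with `r ≤ k ≤ n`. -/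
def chooseRatioBound (k : ℕ) : ℝ := ((k : ℝ) ^ k) ^ 2

/-- The factor, per vertex, by which the degrees in the family explored in the first phase may
exceed those in a perfectly smooth family of the same size. -/
def smoothnessLoss (k j : ℕ) : ℝ :=
  (2 + 2 * k.choose j * chooseRatioBound k * 2 ^ j) * (2 * (k.choose j - 1))

/-- The first phase stops after the discovery of `familyDensity k j * ε * n ^ j` many `j`-sets. -/
def familyDensity (k j : ℕ) : ℝ :=
  1 / (16 * chooseRatioBound k * (2 * smoothnessLoss k j) ^ j)

/-- Each sprinkling round passes a proportion `sprinklingRate k j / n` of the `j`-sets on to the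
sets one vertex further. -/
def sprinklingRate (k j : ℕ) : ℝ :=
  1 / (2 * chooseRatioBound k * (k.choose j - 1) * (k.choose j * (j + 1))) /
    (k.choose j * (1 + chooseRatioBound k)) / 2

/-- The last sprinkling round reaches a proportion `reachDensity k j * ε ^ 2` of all `j`-sets. -/
def reachDensity (k j : ℕ) : ℝ :=
  familyDensity k j * sprinklingRate k j ^ (j + 1) / (16 * k)

variable {n k j r : ℕ}

lemma one_le_chooseRatioBound (k : ℕ) : 1 ≤ chooseRatioBound k := by
  have : 1 ≤ (k ^ k) ^ 2 := Nat.one_le_pow _ _ k.pow_self_pos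
  rw [chooseRatioBound]
  exact_mod_cast this

lemma sq_le_chooseRatioBound (k : ℕ) : (k : ℝ) ^ 2 ≤ chooseRatioBound k := by
  obtain rfl | hk := eq_or_ne k 0
  · simp [chooseRatioBound]
  · exact pow_le_pow_left₀ k.cast_nonneg (mod_cast Nat.le_self_pow hk k) 2

lemma pow_le_chooseRatioBound_mul_choose (hr : r ≤ k) (hkn : k ≤ n) :
    (n : ℝ) ^ r ≤ chooseRatioBound k * n.choose r := by
  have pow_self_le : r ^ r ≤ k ^ k := by
    obtain rfl | hr0 := r.eq_zero_or_pos
    · exact k.pow_self_pos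
    · exact (Nat.pow_le_pow_left hr r).trans (Nat.pow_le_pow_right (hr0.trans_le hr) hr)
  calc (n : ℝ) ^ r ≤ ((r : ℝ) ^ r) ^ 2 * n.choose r :=
        mod_cast pow_le_pow_self_sq_mul_choose (hr.trans hkn)
    _ ≤ chooseRatioBound k * n.choose r := by
        gcongr
        exact pow_le_pow_left₀ (by positivity) (mod_cast pow_self_le) 2

variable (hC : 3 ≤ k.choose j)

include hC

lemma choose_sub_one_le_smoothnessLoss : (k.choose j - 1 : ℝ) ≤ smoothnessLoss k j := by
  have : (3 : ℝ) ≤ k.choose j := mod_cast hC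
  have := one_le_chooseRatioBound k
  have : 0 ≤ 2 * k.choose j * chooseRatioBound k * 2 ^ j := by positivity
  rw [smoothnessLoss]
  nlinarith

lemma one_le_smoothnessLoss : 1 ≤ smoothnessLoss k j := by
  have : (3 : ℝ) ≤ k.choose j := mod_cast hC
  linarith [choose_sub_one_le_smoothnessLoss hC]

lemma familyDensity_pos : 0 < familyDensity k j := by
  have := one_le_chooseRatioBound k
  have := one_le_smoothnessLoss hC
  rw [familyDensity]
  positivity

lemma familyDensity_mul :
    familyDensity k j * (16 * chooseRatioBound k * (2 * smoothnessLoss k j) ^ j) = 1 := by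
  have := one_le_chooseRatioBound k
  have := one_le_smoothnessLoss hC
  exact one_div_mul_cancel (by positivity)

lemma familyDensity_mul_chooseRatioBound_le : 16 * chooseRatioBound k * familyDensity k j ≤ 1 := by
  have := familyDensity_pos hC
  have := one_le_chooseRatioBound k
  have : 1 ≤ (2 * smoothnessLoss k j) ^ j := one_le_pow₀ (by linarith [one_le_smoothnessLoss hC])
  calc 16 * chooseRatioBound k * familyDensity k j
    _ ≤ 16 * chooseRatioBound k * familyDensity k j * (2 * smoothnessLoss k j) ^ j :=
        le_mul_of_one_le_right (by positivity) this
    _ = 1 := by rw [← familyDensity_mul hC]; ring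

lemma familyDensity_mul_choose_le (hj : 1 ≤ j) : 32 * (k.choose j - 1) * familyDensity k j ≤ 1 := by
  have := familyDensity_pos hC
  have := one_le_smoothnessLoss hC
  have one_le := one_le_chooseRatioBound k
  have le_pow : 2 * (k.choose j - 1 : ℝ) ≤ (2 * smoothnessLoss k j) ^ j :=
    (mul_le_mul_of_nonneg_left (choose_sub_one_le_smoothnessLoss hC) zero_le_two).trans
      (le_self_pow₀ (by linarith) (by omega))
  calc 32 * (k.choose j - 1) * familyDensity k j
    _ = familyDensity k j * 16 * (2 * (k.choose j - 1)) := by ring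
    _ ≤ familyDensity k j * 16 * (chooseRatioBound k * (2 * smoothnessLoss k j) ^ j) :=
        mul_le_mul_of_nonneg_left (le_pow.trans (le_mul_of_one_le_left (by positivity) one_le))
          (by positivity)
    _ = 1 := by rw [← familyDensity_mul hC]; ring

lemma sprinklingRate_pos : 0 < sprinklingRate k j := by
  have : (3 : ℝ) ≤ k.choose j := mod_cast hC
  have := one_le_chooseRatioBound k
  have : (0 : ℝ) < k.choose j - 1 := by linarith
  rw [sprinklingRate]
  positivity

lemma sprinklingRate_mul_le : sprinklingRate k j * ((k.choose j - 1) * k.choose j) ≤ 1 := by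
  have : (3 : ℝ) ≤ k.choose j := mod_cast hC
  have one_le := one_le_chooseRatioBound k
  have := j.cast_nonneg (α := ℝ)
  have : (0 : ℝ) < k.choose j - 1 := by linarith
  have one_le_rest : 1 ≤
      2 * chooseRatioBound k * (j + 1) * (k.choose j * (1 + chooseRatioBound k)) * 2 :=
    one_le_mul_of_one_le_of_one_le (one_le_mul_of_one_le_of_one_le
      (one_le_mul_of_one_le_of_one_le (by linarith) (by linarith))
      (one_le_mul_of_one_le_of_one_le (by linarith) (by linarith))) one_le_two
  calc sprinklingRate k j * ((k.choose j - 1) * k.choose j)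
    _ = 1 / (2 * chooseRatioBound k * (j + 1) *
          (k.choose j * (1 + chooseRatioBound k)) * 2) := by
        rw [sprinklingRate]
        field_simp
    _ ≤ 1 := div_le_one_of_le₀ one_le_rest (by positivity)

lemma sprinklingRate_le_one : sprinklingRate k j ≤ 1 := by
  have : (3 : ℝ) ≤ k.choose j := mod_cast hC
  have := sprinklingRate_pos hC
  exact (le_mul_of_one_le_right (by positivity) (one_le_mul_of_one_le_of_one_le
    (by linarith) (by linarith))).trans (sprinklingRate_mul_le hC)

lemma ne_zero_of_three_le_choose : k ≠ 0 := by
  rintro rfl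
  have := Nat.choose_le_two_pow 0 j
  omega

lemma reachDensity_pos : 0 < reachDensity k j := by
  have := familyDensity_pos hC
  have := sprinklingRate_pos hC
  have := ne_zero_of_three_le_choose hC
  rw [reachDensity]
  positivity

lemma reachDensity_mul_le :
    16 * k * ((k.choose j - 1) * k.choose j) * reachDensity k j ≤ familyDensity k j := by
  have : (3 : ℝ) ≤ k.choose j := mod_cast hC
  have : (0 : ℝ) ≤ k.choose j - 1 := by linarith
  have := familyDensity_pos hC
  have := ne_zero_of_three_le_choose hC
  have hβ := sprinklingRate_pos hC
  have pow_le : sprinklingRate k j ^ (j + 1) ≤ sprinklingRate k j :=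
    pow_le_of_le_one hβ.le (sprinklingRate_le_one hC) j.succ_ne_zero
  calc 16 * k * ((k.choose j - 1) * k.choose j) * reachDensity k j
    _ = familyDensity k j * (sprinklingRate k j ^ (j + 1) * ((k.choose j - 1) * k.choose j)) := by
        rw [reachDensity]
        field_simp
    _ ≤ familyDensity k j * (sprinklingRate k j * ((k.choose j - 1) * k.choose j)) := by gcongr
    _ ≤ familyDensity k j :=
        mul_le_of_le_one_right (by positivity) (sprinklingRate_mul_le hC)

end Constants

/-- Just above the threshold: `p` is `1 + ε` times the critical probability, where `ε` lies below a
constant and above a constant multiple of `1 / n`. -/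
structure SupercriticalWindow (n k j : ℕ) (p ε : ℝ) : Prop where
  three_le : 3 ≤ k
  one_le : 1 ≤ j
  lt : j < k
  pos : 0 < ε
  two_mul_le : 2 * ε ≤ reachDensity k j
  eight_le : 8 ≤ reachDensity k j * (ε * n)
  prob_eq : p = (1 + ε) / ((k.choose j - 1) * n.choose (k - j))

namespace SupercriticalWindow

open Finset

variable {n k j : ℕ} {p ε : ℝ}

section Estimates

variable (W : SupercriticalWindow n k j p ε)

include W

lemma three_le_choose : 3 ≤ k.choose j := W.three_le.trans (le_choose W.one_le W.lt)

lemma two_le_choose_sub_one : (2 : ℝ) ≤ k.choose j - 1 := by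
  have : (3 : ℝ) ≤ k.choose j := mod_cast W.three_le_choose
  linarith

lemma reachDensity_le_familyDensity : reachDensity k j ≤ familyDensity k j := by
  have : (3 : ℝ) ≤ k := mod_cast W.three_le
  have := W.two_le_choose_sub_one
  refine le_trans (le_mul_of_one_le_left (reachDensity_pos W.three_le_choose).le ?_)
    (reachDensity_mul_le W.three_le_choose)
  exact one_le_mul_of_one_le_of_one_le (by linarith)
    (one_le_mul_of_one_le_of_one_le (by linarith) (by linarith))

lemma le_one_div_thirty_two : ε ≤ 1 / 32 := by
  have := W.two_mul_le.trans W.reachDensity_le_familyDensity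
  have := one_le_chooseRatioBound k
  have := familyDensity_pos W.three_le_choose
  have := familyDensity_mul_chooseRatioBound_le W.three_le_choose
  nlinarith

lemma six_mul_le_one : 6 * (k.choose j - 1) * ε ≤ 1 := by
  have := W.pos
  have := W.two_le_choose_sub_one
  have two_mul_le := W.two_mul_le.trans W.reachDensity_le_familyDensity
  have family_le := familyDensity_mul_choose_le W.three_le_choose W.one_le
  calc 6 * (k.choose j - 1) * ε ≤ 32 * (k.choose j - 1) * familyDensity k j := by
        gcongr <;> linarith
    _ ≤ 1 := family_le

lemma eight_le_familyDensity_mul : 8 ≤ familyDensity k j * (ε * n) := by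
  have := W.pos
  exact W.eight_le.trans (by gcongr; exact W.reachDensity_le_familyDensity)

lemma sq_le_mul_card : 32 * (k : ℝ) ^ 2 ≤ ε * n := by
  have := W.pos
  have one_le : (1 : ℝ) ≤ k := by exact_mod_cast (by have := W.three_le; omega : 1 ≤ k)
  have := familyDensity_pos W.three_le_choose
  have reach_pos := reachDensity_pos W.three_le_choose
  have reach_le : 4 * (k : ℝ) ^ 2 * reachDensity k j ≤ 1 := calc
    4 * (k : ℝ) ^ 2 * reachDensity k j
      ≤ 16 * chooseRatioBound k * familyDensity k j := by
        have := one_le_chooseRatioBound k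
        gcongr
        · norm_num
        · exact sq_le_chooseRatioBound k
        · exact W.reachDensity_le_familyDensity
    _ ≤ 1 := familyDensity_mul_chooseRatioBound_le W.three_le_choose
  calc 32 * (k : ℝ) ^ 2 = 4 * (k : ℝ) ^ 2 * 8 := by ring
    _ ≤ 4 * (k : ℝ) ^ 2 * (reachDensity k j * (ε * n)) := by gcongr; exact W.eight_le
    _ = 4 * (k : ℝ) ^ 2 * reachDensity k j * (ε * n) := by ring
    _ ≤ ε * n := mul_le_of_le_one_left (by positivity) reach_le

lemma sq_le_card : 32 * (k : ℝ) ^ 2 ≤ n :=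
  W.sq_le_mul_card.trans
    (mul_le_of_le_one_left n.cast_nonneg (by linarith [W.le_one_div_thirty_two]))

lemma le_card : k ≤ n := by
  have : (3 : ℝ) ≤ k := mod_cast W.three_le
  have := W.sq_le_card
  exact_mod_cast (by nlinarith : (k : ℝ) ≤ n)

lemma card_pos : 0 < n := by
  have := W.three_le
  have := W.le_card
  omega

lemma one_le_choose_card : (1 : ℝ) ≤ n.choose (k - j) :=
  mod_cast Nat.choose_pos ((k.sub_le j).trans W.le_card)

lemma pow_le_mul_choose : (n : ℝ) ^ (k - j) ≤ chooseRatioBound k * n.choose (k - j) :=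
  pow_le_chooseRatioBound_mul_choose (k.sub_le j) W.le_card

lemma prob_mul_choose : p * n.choose (k - j) * (k.choose j - 1) = 1 + ε := by
  have := W.two_le_choose_sub_one
  have : (k.choose j - 1 : ℝ) ≠ 0 := by linarith
  have : (n.choose (k - j) : ℝ) ≠ 0 := by linarith [W.one_le_choose_card]
  rw [W.prob_eq]
  field_simp

lemma prob_nonneg : 0 ≤ p := by
  have := W.pos
  have := W.two_le_choose_sub_one
  rw [W.prob_eq]
  positivity

lemma prob_mul_choose_le_one : p * n.choose (k - j) ≤ 1 := by
  have := W.two_le_choose_sub_one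
  have := W.le_one_div_thirty_two
  have := W.prob_mul_choose
  have : 0 ≤ p * n.choose (k - j) := mul_nonneg W.prob_nonneg (by positivity)
  nlinarith

lemma prob_mem_unitInterval : p ∈ unitInterval :=
  ⟨W.prob_nonneg, (le_mul_of_one_le_right W.prob_nonneg W.one_le_choose_card).trans
    W.prob_mul_choose_le_one⟩

lemma prob_mul_pow_le : p * (n : ℝ) ^ (k - j) ≤ chooseRatioBound k := by
  have := one_le_chooseRatioBound k
  calc p * (n : ℝ) ^ (k - j)
    _ ≤ p * (chooseRatioBound k * n.choose (k - j)) :=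
        mul_le_mul_of_nonneg_left W.pow_le_mul_choose W.prob_nonneg
    _ = chooseRatioBound k * (p * n.choose (k - j)) := by ring
    _ ≤ chooseRatioBound k := mul_le_of_le_one_right (by linarith) W.prob_mul_choose_le_one

lemma one_div_le_prob : 1 / ((k.choose j - 1) * (n : ℝ) ^ (k - j)) ≤ p := by
  have := W.pos
  have := W.two_le_choose_sub_one
  have := W.one_le_choose_card
  have : (n.choose (k - j) : ℝ) ≤ (n : ℝ) ^ (k - j) := mod_cast Nat.choose_le_pow n (k - j)
  rw [W.prob_eq]
  gcongr
  linarith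

end Estimates

section Reserve

variable (W : SupercriticalWindow n k j p ε) {R : Finset (Fin n)} (hR : #R * (8 * k) ≤ ε * n)

include W hR

lemma choose_mul_le_choose_sdiff :
    (n.choose (k - j) : ℝ) * (1 - 3 * ε / 16) ≤ (#(univ \ R) - j).choose (k - j) := by
  have hn : (0 : ℝ) < n := mod_cast W.card_pos
  have hjk : (j : ℝ) ≤ k := mod_cast W.lt.le
  have hdk : ((k - j : ℕ) : ℝ) ≤ k := mod_cast k.sub_le j
  have := W.sq_le_mul_card
  have loss_le : ((#R + j : ℕ) : ℝ) * (k - j : ℕ) / n ≤ 3 * ε / 16 := by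
    rw [div_le_iff₀ hn]
    calc ((#R + j : ℕ) : ℝ) * (k - j : ℕ) ≤ (#R + k) * k := by push_cast; gcongr
      _ ≤ 3 * ε / 16 * n := by nlinarith
  rw [card_sdiff_of_subset R.subset_univ, card_univ, Fintype.card_fin, Nat.sub_sub]
  exact (mul_le_mul_of_nonneg_left (by linarith) (by positivity)).trans
    (choose_mul_one_sub_le n (k - j) (#R + j))

lemma choose_div_two_le_choose_sdiff :
    (n.choose (k - j) : ℝ) / 2 ≤ (#(univ \ R) - j).choose (k - j) := by
  have := W.le_one_div_thirty_two
  have := W.one_le_choose_card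
  have := W.choose_mul_le_choose_sdiff hR
  nlinarith

lemma familyDensity_mul_le_card_powersetCard :
    familyDensity k j * ε * (n : ℝ) ^ j ≤ #(powersetCard j (univ \ R)) := by
  have hn : (0 : ℝ) < n := mod_cast W.card_pos
  have hjk : (j : ℝ) ≤ k := mod_cast W.lt.le
  have hε := W.le_one_div_thirty_two
  have := familyDensity_pos W.three_le_choose
  have := one_le_chooseRatioBound k
  have loss_le : (#R : ℝ) * j / n ≤ 1 / 2 := by
    rw [div_le_iff₀ hn]
    calc (#R : ℝ) * j ≤ #R * k := by gcongr
      _ ≤ 1 / 2 * n := by nlinarith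
  rw [card_powersetCard, card_sdiff_of_subset R.subset_univ, card_univ, Fintype.card_fin]
  calc familyDensity k j * ε * (n : ℝ) ^ j
    _ ≤ familyDensity k j * 1 * (chooseRatioBound k * n.choose j) := by
        gcongr
        · linarith
        · exact pow_le_chooseRatioBound_mul_choose W.lt.le W.le_card
    _ = chooseRatioBound k * familyDensity k j * n.choose j := by ring
    _ ≤ 1 / 2 * n.choose j := by
        gcongr
        linarith [familyDensity_mul_chooseRatioBound_le W.three_le_choose]
    _ ≤ n.choose j * (1 - #R * j / n) := by
        rw [mul_comm]
        gcongr
        linarith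
    _ ≤ (n - #R).choose j := choose_mul_one_sub_le n j #R

lemma supercritical : 1 + ε / 8 ≤ (k.choose j - 1) * p *
    ((1 - ε / 8) * (#(univ \ R) - j).choose (k - j)) * (1 - ε / 8) := by
  have := W.pos
  have := W.le_one_div_thirty_two
  have := W.two_le_choose_sub_one
  have factors_nonneg : 0 ≤ (k.choose j - 1) * p * (1 - ε / 8) ^ 2 :=
    mul_nonneg (mul_nonneg (by linarith) W.prob_nonneg) (sq_nonneg _)
  calc 1 + ε / 8 ≤ (1 + 3 * ε / 4) * (1 - ε / 4) := by nlinarith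
    _ ≤ ((1 + ε) * (1 - 3 * ε / 16)) * (1 - ε / 8) ^ 2 :=
        mul_le_mul (by nlinarith) (by nlinarith) (by linarith) (by nlinarith)
    _ = (k.choose j - 1) * p * (1 - ε / 8) ^ 2 *
          (n.choose (k - j) * (1 - 3 * ε / 16)) := by rw [← W.prob_mul_choose]; ring
    _ ≤ (k.choose j - 1) * p * (1 - ε / 8) ^ 2 * (#(univ \ R) - j).choose (k - j) :=
        mul_le_mul_of_nonneg_left (W.choose_mul_le_choose_sdiff hR) factors_nonneg
    _ = _ := by ring

lemma forbidden_le : 2 ^ j * smoothnessLoss k j ^ (j - 1) *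
    (familyDensity k j * ε * (n : ℝ) ^ j * ((n : ℝ) ^ k / (n : ℝ) ^ (j + j))) ≤
      ε / 8 * (#(univ \ R) - j).choose (k - j) := by
  have hε := W.pos
  have hn : (0 : ℝ) < n := mod_cast W.card_pos
  have hΓ := one_le_smoothnessLoss W.three_le_choose
  have := familyDensity_pos W.three_le_choose
  have pow_split : (n : ℝ) ^ j * ((n : ℝ) ^ k / (n : ℝ) ^ (j + j)) = (n : ℝ) ^ (k - j) := by
    obtain ⟨d, rfl⟩ := Nat.exists_eq_add_of_le W.lt.le
    rw [Nat.add_sub_cancel_left, pow_add, pow_add]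
    field_simp
  calc 2 ^ j * smoothnessLoss k j ^ (j - 1) *
        (familyDensity k j * ε * (n : ℝ) ^ j * ((n : ℝ) ^ k / (n : ℝ) ^ (j + j)))
    _ = 2 ^ j * smoothnessLoss k j ^ (j - 1) * (familyDensity k j * ε * (n : ℝ) ^ (k - j)) := by
        rw [mul_assoc (familyDensity k j * ε), pow_split]
    _ ≤ 2 ^ j * smoothnessLoss k j ^ j *
          (familyDensity k j * ε * (chooseRatioBound k * n.choose (k - j))) := by
        gcongr
        · omega
        · exact W.pow_le_mul_choose
    _ = familyDensity k j * (16 * chooseRatioBound k * (2 * smoothnessLoss k j) ^ j) *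
          (ε / 8 * (n.choose (k - j) / 2)) := by ring
    _ ≤ ε / 8 * (#(univ \ R) - j).choose (k - j) := by
        rw [familyDensity_mul W.three_le_choose, one_mul]
        gcongr
        exact W.choose_div_two_le_choose_sdiff hR

end Reserve

section Parameters

variable (W : SupercriticalWindow n k j p ε)

include W

lemma prob_mul_choose_sdiff_le (R : Finset (Fin n)) :
    p * (#(univ \ R) - j).choose (k - j) * (k.choose j - 2) ≤
      (1 + ε) * (1 - 1 / (k.choose j - 1)) := by
  have := W.two_le_choose_sub_one
  have : (k.choose j - 1 : ℝ) ≠ 0 := by linarith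
  have card_le : #(univ \ R) ≤ n := by simpa using card_le_univ (univ \ R)
  have : (#(univ \ R) - j).choose (k - j) ≤ n.choose (k - j) :=
    Nat.choose_le_choose _ ((Nat.sub_le _ _).trans card_le)
  calc p * (#(univ \ R) - j).choose (k - j) * (k.choose j - 2)
    _ ≤ p * n.choose (k - j) * (k.choose j - 2) := by
        have := W.prob_nonneg
        gcongr
        linarith
    _ = p * n.choose (k - j) * (k.choose j - 1) * (1 - 1 / (k.choose j - 1)) := by field_simp; ring
    _ = (1 + ε) * (1 - 1 / (k.choose j - 1)) := by rw [W.prob_mul_choose]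

lemma one_div_le_one_sub (R : Finset (Fin n)) : 1 / (2 * (k.choose j - 1)) ≤
    1 - (1 + 1 / (6 * (k.choose j - 1))) * p * (#(univ \ R) - j).choose (k - j) *
      (k.choose j - 2) := by
  have hB := W.two_le_choose_sub_one
  have hε : ε ≤ 1 / (6 * (k.choose j - 1)) := by
    rw [le_div_iff₀ (by linarith)]
    linarith [W.six_mul_le_one]
  have mean_le := W.prob_mul_choose_sdiff_le R
  have u_le : 1 / (6 * (k.choose j - 1) : ℝ) ≤ 1 / 12 :=
    one_div_le_one_div_of_le (by norm_num) (by linarith)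
  have u_pos : (0 : ℝ) < 1 / (6 * (k.choose j - 1)) := by positivity
  have inv_eq : 1 / (k.choose j - 1 : ℝ) = 6 * (1 / (6 * (k.choose j - 1))) := by field_simp
  have half_inv_eq : 1 / (2 * (k.choose j - 1) : ℝ) = 3 * (1 / (6 * (k.choose j - 1))) := by
    field_simp
    norm_num
  rw [inv_eq] at mean_le
  rw [half_inv_eq, mul_assoc (1 + _), mul_assoc (1 + _)]
  set u : ℝ := 1 / (6 * (k.choose j - 1))
  have mean_le_of_u := mean_le.trans
    (mul_le_mul_of_nonneg_right (add_le_add_right hε 1) (by linarith : 0 ≤ 1 - 6 * u))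
  calc 3 * u ≤ 1 - (1 + u) * ((1 + u) * (1 - 6 * u)) := by
        nlinarith [mul_pos u_pos u_pos, pow_pos u_pos 3]
    _ ≤ _ := sub_le_sub_left (mul_le_mul_of_nonneg_left mean_le_of_u (by linarith)) 1

lemma subcritical_above (R : Finset (Fin n)) :
    2 + 2 * k.choose j * (p * ((n : ℝ) ^ k / (n : ℝ) ^ j)) * 2 ^ j ≤
      (1 - (1 + 1 / (6 * (k.choose j - 1))) * p * (#(univ \ R) - j).choose (k - j) *
        (k.choose j - 2)) * smoothnessLoss k j := by
  have hB := W.two_le_choose_sub_one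
  have hn : (0 : ℝ) < n := mod_cast W.card_pos
  have := one_le_smoothnessLoss W.three_le_choose
  have : (k.choose j - 1 : ℝ) ≠ 0 := by linarith
  calc 2 + 2 * k.choose j * (p * ((n : ℝ) ^ k / (n : ℝ) ^ j)) * 2 ^ j
    _ ≤ 2 + 2 * k.choose j * chooseRatioBound k * 2 ^ j := by
        rw [div_eq_mul_inv ((n : ℝ) ^ k), ← pow_sub₀ _ hn.ne' W.lt.le]
        gcongr
        exact W.prob_mul_pow_le
    _ = 1 / (2 * (k.choose j - 1)) * smoothnessLoss k j := by rw [smoothnessLoss]; field_simp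
    _ ≤ _ := mul_le_mul_of_nonneg_right (W.one_div_le_one_sub R) (by linarith)

lemma cap_div_pow : familyDensity k j * ε * (n : ℝ) ^ j / (n : ℝ) ^ (j - 1) =
    familyDensity k j * (ε * n) := by
  have hn : (n : ℝ) ≠ 0 := mod_cast W.card_pos.ne'
  rw [← mul_pow_sub_one (Nat.one_le_iff_ne_zero.1 W.one_le)]
  field_simp

theorem explorationParams {R : Finset (Fin n)} (hR : #R * (8 * k) ≤ ε * n) :
    ExplorationParams n k j (univ \ R) p ε (familyDensity k j * ε * (n : ℝ) ^ j)
      (familyDensity k j * ε ^ 2 * n / (16 * (k.choose j - 1))) (1 / (6 * (k.choose j - 1)))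
      (smoothnessLoss k j) := by
  have hε := W.pos
  have hε_le := W.le_one_div_thirty_two
  have hB := W.two_le_choose_sub_one
  have : (0 : ℝ) < k.choose j - 1 := by linarith
  have hc₀ := familyDensity_pos W.three_le_choose
  have eight_le := W.eight_le_familyDensity_mul
  have le_cap : familyDensity k j * (ε * n) ≤ familyDensity k j * ε * (n : ℝ) ^ j := by
    rw [← mul_assoc]
    gcongr
    exact le_self_pow₀ (mod_cast W.card_pos) (Nat.one_le_iff_ne_zero.1 W.one_le)
  have deficit_eq : (k.choose j - 1) *
      (familyDensity k j * ε ^ 2 * n / (16 * (k.choose j - 1))) =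
        ε * (familyDensity k j * (ε * n)) / 16 := by field_simp
  exact {
    pos := W.card_pos
    lt := W.lt
    mem_unitInterval := W.prob_mem_unitInterval
    pos_ε := hε
    ε_le_one := by linarith
    four_le_cap := by linarith
    cap_le := W.familyDensity_mul_le_card_powersetCard hR
    pos_η := by positivity
    η_le_one := by rw [div_le_one (by positivity)]; linarith
    one_le_Γ := one_le_smoothnessLoss W.three_le_choose
    y_nonneg := by positivity
    roots_le := by rw [W.cap_div_pow, deficit_eq]; nlinarith
    deficit_le := by
      rw [deficit_eq, mul_div_cancel₀ _ (by norm_num)]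
      exact mul_le_mul_of_nonneg_left le_cap hε.le
    subcritical_above := W.subcritical_above R
    forbidden_le := W.forbidden_le hR
    supercritical := W.supercritical hR }

end Parameters

open Real

section FirstPhase

variable (W : SupercriticalWindow n k j p ε)

include W

lemma div_ten_le_first_exponents :
    reachDensity k j / 10 ≤ familyDensity k j / (128 * (k.choose j - 1)) ∧
      reachDensity k j / 10 ≤ familyDensity k j / (6 * (k.choose j - 1) * k.choose j) := by
  have hk : (3 : ℝ) ≤ k := mod_cast W.three_le
  have hB := W.two_le_choose_sub_one
  have hc₁ := reachDensity_pos W.three_le_choose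
  have density_le := reachDensity_mul_le W.three_le_choose
  constructor
  · rw [le_div_iff₀ (by linarith)]
    have : 9 ≤ k * (k.choose j : ℝ) := by nlinarith
    calc reachDensity k j / 10 * (128 * (k.choose j - 1))
      _ = 12.8 * ((k.choose j - 1) * reachDensity k j) := by ring
      _ ≤ 16 * (k * k.choose j) * ((k.choose j - 1) * reachDensity k j) :=
          mul_le_mul_of_nonneg_right (by linarith) (mul_nonneg (by linarith) hc₁.le)
      _ = 16 * k * ((k.choose j - 1) * k.choose j) * reachDensity k j := by ring
      _ ≤ familyDensity k j := density_le
  · rw [le_div_iff₀ (mul_pos (by linarith) (by linarith))]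
    calc reachDensity k j / 10 * (6 * (k.choose j - 1) * k.choose j)
      _ = 0.6 * ((k.choose j - 1) * k.choose j * reachDensity k j) := by ring
      _ ≤ 16 * k * ((k.choose j - 1) * k.choose j * reachDensity k j) :=
          mul_le_mul_of_nonneg_right (by linarith)
            (mul_nonneg (mul_nonneg (by linarith) (by linarith)) hc₁.le)
      _ = 16 * k * ((k.choose j - 1) * k.choose j) * reachDensity k j := by ring
      _ ≤ familyDensity k j := density_le

lemma randProb_not_hasLargeConnectedFamily_le {R : Finset (Fin n)} (hR : #R * (8 * k) ≤ ε * n) :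
    randProb (powersetCard k (univ \ R)) (fun _ => p)
        (fun H => ¬ HasLargeConnectedFamily j (familyDensity k j * ε * (n : ℝ) ^ j) H) ≤
      exp (-(reachDensity k j / 10 * (ε ^ 3 * n))) +
        j * ((n : ℝ) ^ j * exp (-(reachDensity k j / 10 * (ε * n)))) := by
  have := W.pos
  have hB := W.two_le_choose_sub_one
  have : (k.choose j - 1 : ℝ) ≠ 0 := by linarith
  have : (k.choose j : ℝ) ≠ 0 := by linarith
  obtain ⟨le_deficit, le_tail⟩ := W.div_ten_le_first_exponents
  have deficit_exponent : ε * (familyDensity k j * ε ^ 2 * n / (16 * (k.choose j - 1))) / 8 =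
      familyDensity k j / (128 * (k.choose j - 1)) * (ε ^ 3 * n) := by
    field_simp
    ring
  have tail_exponent : 1 / (6 * (k.choose j - 1)) / k.choose j * (familyDensity k j * (ε * n)) =
      familyDensity k j / (6 * (k.choose j - 1) * k.choose j) * (ε * n) := by
    field_simp
  have := (W.explorationParams hR).randProb_not_hasLargeConnectedFamily_le
  rw [W.cap_div_pow, deficit_exponent, tail_exponent, mul_assoc (j : ℝ)] at this
  refine this.trans ?_
  gcongr

end FirstPhase

section SecondPhase

variable (W : SupercriticalWindow n k j p ε)

include W

lemma one_div_le_mul_choose {q : ℝ} (hpq : p ≤ (k.choose j * (j + 1) : ℕ) * q) :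
    1 / (2 * chooseRatioBound k * (k.choose j - 1) * (k.choose j * (j + 1))) / n ≤
      q * (n - j - 1).choose (k - j - 1) := by
  have hn : (0 : ℝ) < n := mod_cast W.card_pos
  have hA := one_le_chooseRatioBound k
  have hB := W.two_le_choose_sub_one
  have hN : (0 : ℝ) < k.choose j * (j + 1) := mul_pos (by linarith) (by positivity)
  have choose_ge : (n.choose (k - j - 1) : ℝ) / 2 ≤ (n - j - 1).choose (k - j - 1) := by
    have := W.sq_le_card
    have hjk : ((j + 1 : ℕ) : ℝ) ≤ k := mod_cast W.lt
    have hdk : ((k - j - 1 : ℕ) : ℝ) ≤ k := mod_cast (by omega)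
    have loss_le : ((j + 1 : ℕ) : ℝ) * (k - j - 1 : ℕ) / n ≤ 1 / 2 := by
      rw [div_le_iff₀ hn]
      nlinarith
    rw [Nat.sub_sub n]
    refine le_trans ?_ (choose_mul_one_sub_le n (k - j - 1) (j + 1))
    rw [div_eq_mul_one_div]
    gcongr
    linarith
  have pow_le : (n : ℝ) ^ (k - j - 1) / chooseRatioBound k ≤ n.choose (k - j - 1) := by
    rw [div_le_iff₀' (by linarith)]
    exact pow_le_chooseRatioBound_mul_choose (by omega) W.le_card
  have prob_div_le : p / (k.choose j * (j + 1)) ≤ q := by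
    rw [div_le_iff₀' hN]
    exact_mod_cast hpq
  have pow_split : (n : ℝ) ^ (k - j) = n ^ (k - j - 1) * n :=
    (pow_sub_one_mul (Nat.sub_pos_of_lt W.lt).ne' _).symm
  have := W.prob_nonneg
  have : 0 ≤ q := le_trans (by positivity) prob_div_le
  calc 1 / (2 * chooseRatioBound k * (k.choose j - 1) * (k.choose j * (j + 1))) / n
    _ = 1 / ((k.choose j - 1) * (n : ℝ) ^ (k - j)) / (k.choose j * (j + 1)) *
          ((n : ℝ) ^ (k - j - 1) / chooseRatioBound k / 2) := by
        rw [pow_split]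
        field_simp
    _ ≤ p / (k.choose j * (j + 1)) * (n.choose (k - j - 1) / 2) := by
        gcongr
        exact W.one_div_le_prob
    _ ≤ q * (n - j - 1).choose (k - j - 1) := by gcongr

lemma sprinklingRound {q : ℝ} (hq : q ∈ unitInterval) (hqp : q ≤ p)
    (hpq : p ≤ (k.choose j * (j + 1) : ℕ) * q) :
    SprinklingRound n k j q (sprinklingRate k j / n) := by
  have := one_le_chooseRatioBound k
  have hB := W.two_le_choose_sub_one
  have hq0 := hq.1
  have := sprinklingRate_pos W.three_le_choose
  have : (0 : ℝ) < k.choose j := by linarith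
  have mul_pow_le : q * (n : ℝ) ^ (k - j) ≤ chooseRatioBound k :=
    (mul_le_mul_of_nonneg_right hqp (by positivity)).trans W.prob_mul_pow_le
  refine ⟨W.one_le, W.lt, W.le_card, hq, by positivity, ?_⟩
  calc 2 * (sprinklingRate k j / n)
    _ = 1 / (2 * chooseRatioBound k * (k.choose j - 1) * (k.choose j * (j + 1))) / n /
          (k.choose j * (1 + chooseRatioBound k)) := by rw [sprinklingRate]; ring
    _ ≤ q * (n - j - 1).choose (k - j - 1) / (k.choose j * (1 + q * (n : ℝ) ^ (k - j))) := by
        gcongr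
        exact W.one_div_le_mul_choose hpq

lemma reachDensity_mul_sq : reachDensity k j * ε ^ 2 =
    2 * (familyDensity k j * ε * (n : ℝ) ^ j / 2 * (sprinklingRate k j / n) ^ j *
      (ε * n / (16 * k)) * (sprinklingRate k j / n)) := by
  have : (n : ℝ) ≠ 0 := mod_cast W.card_pos.ne'
  have := ne_zero_of_three_le_choose W.three_le_choose
  rw [reachDensity, div_pow]
  field_simp
  ring

lemma half_le_card_sub : (n : ℝ) / 2 ≤ (n - (j - 1) : ℕ) := by
  have := W.sq_le_card
  have : (3 : ℝ) ≤ k := mod_cast W.three_le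
  have : (n : ℝ) ≤ (n - (j - 1) : ℕ) + k := mod_cast (by have := W.lt; omega)
  nlinarith

lemma cube_mul_card_le :
    ε ^ 3 * n ≤ reachDensity k j * ε ^ 2 * (n - (j - 1) : ℕ) := by
  have := reachDensity_pos W.three_le_choose
  calc ε ^ 3 * n = 2 * ε * (ε ^ 2 * (n / 2)) := by ring
    _ ≤ reachDensity k j * (ε ^ 2 * (n - (j - 1) : ℕ)) := by
        gcongr
        · exact W.two_mul_le
        · exact W.half_le_card_sub
    _ = reachDensity k j * ε ^ 2 * (n - (j - 1) : ℕ) := by ring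

lemma rate_pow_mul_le {i : ℕ} (hij : i < j) :
    (sprinklingRate k j / n) ^ j * (ε * n / (16 * k)) ≤ (sprinklingRate k j / n) ^ i := by
  have hε := W.pos
  have hn : (1 : ℝ) ≤ n := mod_cast W.card_pos
  have hk : (3 : ℝ) ≤ k := mod_cast W.three_le
  have hβ := sprinklingRate_pos W.three_le_choose
  have hβ_le := sprinklingRate_le_one W.three_le_choose
  have rate_le_one : sprinklingRate k j / n ≤ 1 := div_le_one_of_le₀ (by linarith) (by linarith)
  have rate_mul_le_one : sprinklingRate k j / n * (ε * n / (16 * k)) ≤ 1 := by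
    have : ε / (16 * k) ≤ 1 :=
      div_le_one_of_le₀ (by linarith [W.le_one_div_thirty_two]) (by positivity)
    calc sprinklingRate k j / n * (ε * n / (16 * k))
      _ = sprinklingRate k j * (ε / (16 * k)) := by field_simp
      _ ≤ 1 := mul_le_one₀ hβ_le (by positivity) this
  calc (sprinklingRate k j / n) ^ j * (ε * n / (16 * k))
    _ ≤ (sprinklingRate k j / n) ^ (i + 1) * (ε * n / (16 * k)) :=
        mul_le_mul_of_nonneg_right (pow_le_pow_of_le_one (by positivity) rate_le_one hij)
          (by positivity)
    _ = (sprinklingRate k j / n) ^ i * (sprinklingRate k j / n * (ε * n / (16 * k))) := by ring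
    _ ≤ (sprinklingRate k j / n) ^ i := mul_le_of_le_one_right (by positivity) rate_mul_le_one

lemma randProb_not_extendsSmoothly_le_of_two_le (hj : 2 ≤ j) {R : Finset (Fin n)}
    (hR : ε * n / (16 * k) + k ≤ #R) {δ : ℝ} (hδ : δ ∈ unitInterval) {D : Finset (Finset (Fin n))}
    (hDj : D ⊆ kSets n j) (hD : familyDensity k j * ε * (n : ℝ) ^ j / 2 ≤ #D) :
    randProb (edgesMeeting n k R) (fun _ => p)
        (fun H => ¬ ExtendsSmoothly j (ε ^ 3 * n) (δ + j / (ε ^ 3 * n)) D H) ≤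
      j * ((n : ℝ) ^ j * exp (-(reachDensity k j * ε ^ 2 / 2 * n / 5))) +
      (n : ℝ) ^ j *
        (2 * exp (-(δ ^ 2 * (reachDensity k j * ε ^ 2 * (n - (j - 1) : ℕ)) / 4))) := by
  have hε := W.pos
  have hn : (1 : ℝ) ≤ n := mod_cast W.card_pos
  have hk : (3 : ℝ) ≤ k := mod_cast W.three_le
  have hc₀ := familyDensity_pos W.three_le_choose
  have hβ := sprinklingRate_pos W.three_le_choose
  have hβ_le := sprinklingRate_le_one W.three_le_choose
  have reached_eq := W.reachDensity_mul_sq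
  obtain ⟨q, hq, hqp, hpq, pow_eq⟩ := exists_pow_one_sub_eq W.prob_mem_unitInterval
    (N := k.choose j * (j + 1))
    (mul_ne_zero (by have := W.three_le_choose; omega) j.succ_ne_zero)
  have weights_eq : p = 1 - ((1 - q) ^ k.choose j) ^ (j + 1) := by rw [← pow_mul, pow_eq]; ring
  set x := familyDensity k j * ε * (n : ℝ) ^ j / 2
  set ρ := ε * n / (16 * k)
  set b := sprinklingRate k j / n with hb
  have reached_le : reachDensity k j * ε ^ 2 / 2 * n ≤ x * b ^ j * ρ := by
    calc reachDensity k j * ε ^ 2 / 2 * n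
      _ = x * b ^ j * ρ * sprinklingRate k j := by rw [reached_eq, hb]; field_simp
      _ ≤ x * b ^ j * ρ := mul_le_of_le_one_right (by positivity) hβ_le
  rw [weights_eq]
  refine (W.sprinklingRound hq hqp hpq).randProb_not_extendsSmoothly_le hj (x := x) (ρ := ρ)
    (by positivity) (by positivity) (fun L hL => ?_) (fun i _ hij => reached_le.trans ?_) reached_le
    reached_eq (by positivity) W.cube_mul_card_le hδ hD hDj
  · have : #R ≤ #(R \ L) + k := by
      have := le_card_sdiff L R
      have := W.lt
      rw [mem_kSets] at hL
      omega
    have : (#R : ℝ) ≤ #(R \ L) + k := mod_cast this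
    linarith
  · rw [mul_assoc]
    exact mul_le_mul_of_nonneg_left (W.rate_pow_mul_le hij) (by positivity)

lemma extendsSmoothly_of_eq_one (hj : j = 1) {δ : ℝ} (hδ : 0 ≤ δ) {D : Finset (Finset (Fin n))}
    (hD : familyDensity k j * ε * (n : ℝ) ^ j / 2 ≤ #D) (H : Finset (Finset (Fin n))) :
    ExtendsSmoothly j (ε ^ 3 * n) (δ + j / (ε ^ 3 * n)) D H := by
  have hε := W.pos
  have hn : (0 : ℝ) < n := mod_cast W.card_pos
  have le_family := W.two_mul_le.trans W.reachDensity_le_familyDensity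
  have : ε ^ 2 ≤ ε := by nlinarith [W.le_one_div_thirty_two]
  subst hj
  refine (hasSmoothSubset_one (by positivity) ?_ (le_trans ?_ hD)).extendsSmoothly H
  · rw [add_mul, Nat.cast_one, one_div_mul_cancel (by positivity)]
    have : 0 ≤ δ * (ε ^ 3 * n) := by positivity
    linarith
  · calc ε ^ 3 * n = ε ^ 2 * (ε * n) := by ring
      _ ≤ familyDensity k 1 / 2 * (ε * n) := by gcongr; linarith
      _ = familyDensity k 1 * ε * (n : ℝ) ^ 1 / 2 := by ring

lemma randProb_not_extendsSmoothly_le {R : Finset (Fin n)} (hR : ε * n / (16 * k) + k ≤ #R)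
    {δ : ℝ} (hδ : δ ∈ unitInterval) {D : Finset (Finset (Fin n))} (hDj : D ⊆ kSets n j)
    (hD : familyDensity k j * ε * (n : ℝ) ^ j / 2 ≤ #D) :
    randProb (edgesMeeting n k R) (fun _ => p)
        (fun H => ¬ ExtendsSmoothly j (ε ^ 3 * n) (δ + j / (ε ^ 3 * n)) D H) ≤
      (j + 2) * ((n : ℝ) ^ j * exp (-(reachDensity k j / 10 * (δ ^ 2 * (ε ^ 2 * n))))) := by
  obtain hj | hj := W.one_le.eq_or_lt'
  · have always := W.extendsSmoothly_of_eq_one hj hδ.1 hD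
    simp only [always, not_true_eq_false, randProb, if_false]
    exact (randExp_const _ _ _).trans_le (by positivity)
  have hε := W.pos
  have hc₁ := reachDensity_pos W.three_le_choose
  have degree_exponent : reachDensity k j / 10 * (δ ^ 2 * (ε ^ 2 * n)) ≤
      reachDensity k j * ε ^ 2 / 2 * n / 5 := by
    calc reachDensity k j / 10 * (δ ^ 2 * (ε ^ 2 * n))
      _ ≤ reachDensity k j / 10 * (1 * (ε ^ 2 * n)) := by
          gcongr
          exact pow_le_one₀ hδ.1 hδ.2
      _ = reachDensity k j * ε ^ 2 / 2 * n / 5 := by ring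
  have concentration_exponent : reachDensity k j / 10 * (δ ^ 2 * (ε ^ 2 * n)) ≤
      δ ^ 2 * (reachDensity k j * ε ^ 2 * (n - (j - 1) : ℕ)) / 4 := by
    calc reachDensity k j / 10 * (δ ^ 2 * (ε ^ 2 * n))
      _ ≤ reachDensity k j / 8 * (δ ^ 2 * (ε ^ 2 * n)) := by gcongr; norm_num
      _ = δ ^ 2 * (reachDensity k j * ε ^ 2 * (n / 2)) / 4 := by ring
      _ ≤ δ ^ 2 * (reachDensity k j * ε ^ 2 * (n - (j - 1) : ℕ)) / 4 := by
          gcongr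
          exact W.half_le_card_sub
  calc _ ≤ _ := W.randProb_not_extendsSmoothly_le_of_two_le hj hR hδ hDj hD
    _ ≤ j * ((n : ℝ) ^ j * exp (-(reachDensity k j / 10 * (δ ^ 2 * (ε ^ 2 * n))))) +
        (n : ℝ) ^ j * (2 * exp (-(reachDensity k j / 10 * (δ ^ 2 * (ε ^ 2 * n))))) := by
        gcongr
    _ = _ := by ring

end SecondPhase

section Conclusion

variable (W : SupercriticalWindow n k j p ε)

include W

lemma exists_reserve : ∃ R : Finset (Fin n), #R * (8 * k) ≤ ε * n ∧ ε * n / (16 * k) + k ≤ #R := by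
  have hε := W.pos
  have hk : (3 : ℝ) ≤ k := mod_cast W.three_le
  have large := W.sq_le_mul_card
  have floor_le := Nat.floor_le (a := ε * n / (8 * k)) (by positivity)
  have lt_floor := Nat.lt_floor_add_one (ε * n / (8 * k))
  have floor_le_card : ⌊ε * n / (8 * k)⌋₊ ≤ n := by
    refine Nat.floor_le_of_le (div_le_of_le_mul₀ (by positivity) (by positivity) ?_)
    rw [mul_comm]
    gcongr
    linarith [W.le_one_div_thirty_two]
  obtain ⟨R, -, card_eq⟩ := exists_subset_card_eq (s := (univ : Finset (Fin n)))
    (floor_le_card.trans_eq (card_fin n).symm)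
  have k_add_one_le : (k : ℝ) + 1 ≤ ε * n / (16 * k) := by
    rw [le_div_iff₀ (by positivity)]
    nlinarith
  have halves : ε * n / (8 * k) = 2 * (ε * n / (16 * k)) := by field_simp; ring
  refine ⟨R, ?_, ?_⟩ <;> rw [card_eq]
  · rwa [le_div_iff₀ (by positivity)] at floor_le
  · linarith

theorem one_sub_le_binomProb {δ : ℝ} (hδ : δ ∈ unitInterval) :
    1 - (exp (-(reachDensity k j / 10 * (ε ^ 3 * n))) +
      (2 * j + 2) * ((n : ℝ) ^ j * exp (-(reachDensity k j / 10 * (δ ^ 2 * (ε ^ 2 * n)))))) ≤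
        binomProb n k p (HasSmoothComponent j (ε ^ 3 * n) (δ + j / (ε ^ 3 * n))) := by
  have hε := W.pos
  have hn : (0 : ℝ) < n := mod_cast W.card_pos
  have hc₀ := familyDensity_pos W.three_le_choose
  have hc₁ := reachDensity_pos W.three_le_choose
  obtain ⟨R, hR, hR'⟩ := W.exists_reserve
  have two_phases := one_sub_le_binomProb_hasSmoothComponent W.prob_mem_unitInterval
    (show 0 < familyDensity k j * ε * (n : ℝ) ^ j by positivity) R (by positivity)
    (W.randProb_not_hasLargeConnectedFamily_le hR)
    (fun _ hDj hD => W.randProb_not_extendsSmoothly_le hR' hδ hDj hD)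
  have exponent_le : reachDensity k j / 10 * (δ ^ 2 * (ε ^ 2 * n)) ≤
      reachDensity k j / 10 * (ε * n) := by
    have : ε ^ 2 ≤ ε := by nlinarith [W.le_one_div_thirty_two]
    gcongr reachDensity k j / 10 * ?_
    calc δ ^ 2 * (ε ^ 2 * n) ≤ 1 * (ε * n) := by
          gcongr
          exact pow_le_one₀ hδ.1 hδ.2
      _ = ε * n := one_mul _
  have tail_le : j * ((n : ℝ) ^ j * exp (-(reachDensity k j / 10 * (ε * n)))) ≤
      j * ((n : ℝ) ^ j * exp (-(reachDensity k j / 10 * (δ ^ 2 * (ε ^ 2 * n))))) := by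
    gcongr
  linarith

end Conclusion

end SupercriticalWindow

section Asymptotics

open Real Topology

lemma tendsto_pow_mul_exp_neg_mul_rpow {b s : ℝ} (hb : 0 < b) (hs : 0 < s) (j : ℕ) :
    Tendsto (fun n : ℕ => (n : ℝ) ^ j * exp (-(b * (n : ℝ) ^ s))) atTop (𝓝 0) := by
  have rpow_atTop : Tendsto (fun n : ℕ => (n : ℝ) ^ s) atTop atTop :=
    (tendsto_rpow_atTop hs).comp tendsto_natCast_atTop_atTop
  refine ((tendsto_rpow_mul_exp_neg_mul_atTop_nhds_zero (j / s) b hb).comp rpow_atTop).congr ?_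
  intro n
  rw [Function.comp_apply, ← rpow_mul n.cast_nonneg, mul_div_cancel₀ _ hs.ne', rpow_natCast,
    neg_mul]

variable {x ε : ℝ} (hx : 0 < x) (hε : 1 ≤ ε * x ^ ((1 : ℝ) / 3))

include hx hε

lemma rpow_le_mul_self : x ^ ((2 : ℝ) / 3) ≤ ε * x := by
  calc x ^ ((2 : ℝ) / 3)
    _ ≤ ε * x ^ ((1 : ℝ) / 3) * x ^ ((2 : ℝ) / 3) := le_mul_of_one_le_left (by positivity) hε
    _ = ε * x := by
        rw [mul_assoc, ← rpow_add hx]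
        norm_num

lemma rpow_le_sq_mul_sq_mul_self :
    x ^ ((2 : ℝ) / 15) ≤ (x ^ (-((1 : ℝ) / 10))) ^ 2 * (ε ^ 2 * x) := by
  calc x ^ ((2 : ℝ) / 15)
    _ ≤ (ε * x ^ ((1 : ℝ) / 3)) ^ 2 * x ^ ((2 : ℝ) / 15) :=
        le_mul_of_one_le_left (by positivity) (one_le_pow₀ hε)
    _ = ε ^ 2 * x ^ ((1 : ℝ) / 3 * 2 + 2 / 15) := by
        rw [mul_pow, mul_assoc, ← rpow_mul_natCast hx.le, ← rpow_add hx]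
        norm_num
    _ = ε ^ 2 * x ^ (-((1 : ℝ) / 10) * 2 + 1) := by norm_num
    _ = (x ^ (-((1 : ℝ) / 10))) ^ 2 * (ε ^ 2 * x) := by
        rw [rpow_add_one hx.ne', ← rpow_mul_natCast hx.le]
        push_cast
        ring

end Asymptotics

section Limits

open Real Topology

variable {k j : ℕ} {ε pstar : ℕ → ℝ}
  (hε : Tendsto (fun n : ℕ => ε n * (n : ℝ) ^ ((1 : ℝ) / 3)) atTop atTop)

include hε

lemma tendsto_cube_mul_self : Tendsto (fun n : ℕ => ε n ^ 3 * n) atTop atTop := by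
  refine ((tendsto_pow_atTop (n := 3) (by norm_num)).comp hε).congr fun n => ?_
  rw [Function.comp_apply, mul_pow, ← rpow_mul_natCast n.cast_nonneg]
  norm_num

lemma eventually_supercriticalWindow (hk : 3 ≤ k) (hj : 1 ≤ j) (hjk : j < k)
    (hε₀ : Tendsto ε atTop (𝓝 0))
    (hp : ∀ n : ℕ, pstar n = (1 + ε n) / (((k.choose j : ℝ) - 1) * (n.choose (k - j) : ℝ))) :
    ∀ᶠ n : ℕ in atTop, SupercriticalWindow n k j (pstar n) (ε n) := by
  have hc₁ : 0 < reachDensity k j := reachDensity_pos (hk.trans (le_choose hj hjk))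
  have rpow_atTop : Tendsto (fun n : ℕ => reachDensity k j * (n : ℝ) ^ ((2 : ℝ) / 3)) atTop atTop :=
    ((tendsto_rpow_atTop (by norm_num)).comp tendsto_natCast_atTop_atTop).const_mul_atTop hc₁
  filter_upwards [eventually_gt_atTop 0, hε.eventually_ge_atTop 1,
    hε₀.eventually_lt_const (half_pos hc₁), rpow_atTop.eventually_ge_atTop 8]
    with n hn one_le lt_half eight_le
  exact {
    three_le := hk
    one_le := hj
    lt := hjk
    pos := pos_of_mul_pos_left (one_pos.trans_le one_le) (by positivity)
    two_mul_le := by linarith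
    eight_le := eight_le.trans (by gcongr; exact rpow_le_mul_self (mod_cast hn) one_le)
    prob_eq := hp n }

lemma tendsto_one_sub_error {c : ℝ} (hc : 0 < c) (j : ℕ) :
    Tendsto (fun n : ℕ => 1 - (exp (-(c * (ε n ^ 3 * n))) + (2 * j + 2) *
      ((n : ℝ) ^ j * exp (-(c * (((n : ℝ) ^ (-((1 : ℝ) / 10))) ^ 2 * (ε n ^ 2 * n))))))) atTop
        (𝓝 1) := by
  have first : Tendsto (fun n : ℕ => exp (-(c * (ε n ^ 3 * n)))) atTop (𝓝 0) :=
    tendsto_exp_neg_atTop_nhds_zero.comp ((tendsto_cube_mul_self hε).const_mul_atTop hc)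
  have second : Tendsto (fun n : ℕ =>
      (n : ℝ) ^ j * exp (-(c * (((n : ℝ) ^ (-((1 : ℝ) / 10))) ^ 2 * (ε n ^ 2 * n))))) atTop
        (𝓝 0) := by
    refine squeeze_zero' (Eventually.of_forall fun n => by positivity) ?_
      (tendsto_pow_mul_exp_neg_mul_rpow hc (by norm_num : (0 : ℝ) < 2 / 15) j)
    filter_upwards [eventually_gt_atTop 0, hε.eventually_ge_atTop 1] with n hn one_le
    gcongr
    exact rpow_le_sq_mul_sq_mul_self (mod_cast hn) one_le
  simpa using (first.add (second.const_mul (2 * (j : ℝ) + 2))).const_sub 1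

lemma tendsto_binomProb_hasSmoothComponent (hk : 3 ≤ k) (hj : 1 ≤ j) (hjk : j < k)
    (hε₀ : Tendsto ε atTop (𝓝 0))
    (hp : ∀ n : ℕ, pstar n = (1 + ε n) / (((k.choose j : ℝ) - 1) * (n.choose (k - j) : ℝ))) :
    Tendsto (fun n : ℕ => binomProb n k (pstar n)
      (HasSmoothComponent j (ε n ^ 3 * n) ((n : ℝ) ^ (-((1 : ℝ) / 10)) + j / (ε n ^ 3 * n))))
      atTop (𝓝 1) := by
  have window := eventually_supercriticalWindow hε hk hj hjk hε₀ hp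
  have hc₁ : 0 < reachDensity k j := reachDensity_pos (hk.trans (le_choose hj hjk))
  refine tendsto_of_tendsto_of_tendsto_of_le_of_le'
    (tendsto_one_sub_error hε (c := reachDensity k j / 10) (by positivity) j) tendsto_const_nhds
    ?_ (window.mono fun n W => binomProb_le_one W.prob_mem_unitInterval _)
  filter_upwards [window] with n W
  refine W.one_sub_le_binomProb ⟨by positivity, ?_⟩
  exact rpow_le_one_of_one_le_of_nonpos (mod_cast W.card_pos) (by norm_num)

end Limits

/-- **Lemma 5 (smooth subset).** For `k ≥ 3`, `1 ≤ j ≤ k-1`, `n^{-1/3} ≪ ε ≪ 1` and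
`p* = (1+ε)/((C(k,j)-1)·C(n,k-j))`, with high probability `H^k(n,p*)` has a `j`-component
containing a subset `S` of `j`-sets such that every `(j-1)`-set of vertices is contained in
`(1 ± o(1))·ε³·n` of the `j`-sets of `S`. -/
theorem smooth_subset_lemma (k j : ℕ) (hk : 3 ≤ k) (hj : 1 ≤ j) (hjk : j ≤ k - 1)
    (ε : ℕ → ℝ)
    (hε1 : Tendsto (fun n : ℕ => ε n * (n : ℝ) ^ ((1 : ℝ) / 3)) atTop atTop)
    (hε2 : Tendsto ε atTop (nhds 0))
    (pstar : ℕ → ℝ)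
    (hp : ∀ n : ℕ, pstar n = (1 + ε n) / (((k.choose j : ℝ) - 1) * (n.choose (k - j) : ℝ))) :
    ∃ δ : ℕ → ℝ, Tendsto δ atTop (nhds 0) ∧
      Tendsto (fun n : ℕ => binomProb n k (pstar n) (fun H =>
          ∃ Comp S : Finset (Finset (Fin n)), IsJComponent n j H Comp ∧ S ⊆ Comp ∧
            ∀ L : Finset (Fin n), L.card = j - 1 →
              |((S.filter (fun J => L ⊆ J)).card : ℝ) - ε n ^ 3 * n| ≤
                δ n * (ε n ^ 3 * n)))
        atTop (nhds 1) := by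
  have rpow_zero : Tendsto (fun n : ℕ => (n : ℝ) ^ (-((1 : ℝ) / 10))) atTop (nhds 0) :=
    (tendsto_rpow_neg_atTop (by norm_num)).comp tendsto_natCast_atTop_atTop
  have rounding_zero : Tendsto (fun n : ℕ => (j : ℝ) / (ε n ^ 3 * n)) atTop (nhds 0) :=
    (tendsto_cube_mul_self hε1).const_div_atTop _
  refine ⟨fun n => (n : ℝ) ^ (-((1 : ℝ) / 10)) + j / (ε n ^ 3 * n), ?_,
    tendsto_binomProb_hasSmoothComponent hε1 hk hj (by omega) hε2 hp⟩
  simpa using rpow_zero.add rounding_zero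

end
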